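/- Let F : E^n_(p) → Ω ⊆ ℂ^n be a proper holomorphic map of multiplicity m > 1 admitting a C¹ extension to the closure of E^n_(p), and let Γ ⊆ Aut(B^n) be the finite subgroup such that two points of B^n are F-related if and only if one is the image of the other under some element of Γ. Then the proper holomorphic correspondence Ψ = P_Γ ∘ φ^(p) ∘ F^{-1} : Ω ⊸ B^n_Γ splits, and each of its single-valued components Ψ_i : Ω → B^n_Γ is a proper holomorphic map satisfying Ψ_i ∘ F = P_Γ ∘ φ^(p). -/

import Mathlib

open Metric Set Filter Topology MeasureTheory

noncomputable section

/-- `ℂⁿ` as a complex Euclidean space. -/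
abbrev Cn (n : ℕ) := EuclideanSpace ℂ (Fin n)

/-- Points of the open unit ball `Bⁿ ⊆ ℂⁿ`. -/
abbrev BallPt (n : ℕ) := ↥(Metric.ball (0 : Cn n) 1)

/-- The pseudoellipsoid `E^n_(p)`. -/
def pseudoEllipsoid (n k : ℕ) (hk : k ≤ n) (p : Fin k → ℕ) : Set (Cn n) :=
  { z | (∑ j : Fin (n - k), ‖z (Fin.castLE (Nat.sub_le n k) j)‖ ^ 2)
      + ∑ i : Fin k, ‖z ⟨n - k + (i : ℕ), by have := i.isLt; omega⟩‖ ^ (2 * p i) < 1 }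

/-- The map `φ^(p)`. -/
def phiMap (n k : ℕ) (hk : k ≤ n) (p : Fin k → ℕ) (z : Cn n) : Cn n :=
  (EuclideanSpace.equiv (Fin n) ℂ).symm fun j =>
    if _h : (j : ℕ) < n - k then z j
    else z j ^ (p ⟨(j : ℕ) - (n - k), by have := j.isLt; omega⟩)

/-- `f : D → Ω` is proper: preimages of compact subsets of `Ω` are compact. -/
def ProperOn (n : ℕ) (f : Cn n → Cn n) (D Ω : Set (Cn n)) : Prop :=
  ∀ K ⊆ Ω, IsCompact K → IsCompact {z ∈ D | f z ∈ K}

/-- Determinant of the complex Jacobian of `f` at `z`. -/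
def cDet (n : ℕ) (f : Cn n → Cn n) (z : Cn n) : ℂ :=
  LinearMap.det ((fderiv ℂ f z : Cn n →L[ℂ] Cn n) : Cn n →ₗ[ℂ] Cn n)

/-- The singular locus `Z_F` of `f` in `D`. -/
def singularSet (n : ℕ) (f : Cn n → Cn n) (D : Set (Cn n)) : Set (Cn n) :=
  {z ∈ D | cDet n f z = 0}

/-- `f : D → Ω` has multiplicity `m`: each fiber over a point outside the
critical value set `f(Z_f)` has cardinality `m`. -/
def HasMultiplicity (n : ℕ) (f : Cn n → Cn n) (D Ω : Set (Cn n)) (m : ℕ) : Prop :=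
  ∀ w ∈ Ω \ (f '' singularSet n f D), (D ∩ f ⁻¹' {w}).ncard = m

/-- `f` extends to a `C¹` map on (a neighbourhood of) the closure of `D`. -/
def HasC1Extension (n : ℕ) (f : Cn n → Cn n) (D : Set (Cn n)) : Prop :=
  ∃ (U : Set (Cn n)) (g : Cn n → Cn n), IsOpen U ∧ closure D ⊆ U ∧
    ContDiffOn ℝ 1 g U ∧ EqOn g f D

/-- Determinant of the real Jacobian `𝕁_f(x)` (ℂⁿ viewed as ℝ²ⁿ). -/
def rDet (n : ℕ) (f : Cn n → Cn n) (x : Cn n) : ℝ :=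
  LinearMap.det ((fderiv ℝ f x : Cn n →L[ℝ] Cn n) : Cn n →ₗ[ℝ] Cn n)

/-- Rank of the real Jacobian `𝕁_f(x)`. -/
def rRank (n : ℕ) (f : Cn n → Cn n) (x : Cn n) : ℕ :=
  Module.finrank ℝ (LinearMap.range ((fderiv ℝ f x : Cn n →L[ℝ] Cn n) : Cn n →ₗ[ℝ] Cn n))

/-- Rank of the complex Jacobian of `f` at `x`. -/
def cRank (n : ℕ) (f : Cn n → Cn n) (x : Cn n) : ℕ :=
  Module.finrank ℂ (LinearMap.range ((fderiv ℂ f x : Cn n →L[ℂ] Cn n) : Cn n →ₗ[ℂ] Cn n))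

/-- A permutation of the unit ball which is holomorphic. -/
def IsHoloPerm (n : ℕ) (f : Equiv.Perm (BallPt n)) : Prop :=
  ∃ g : Cn n → Cn n, DifferentiableOn ℂ g (Metric.ball 0 1) ∧
    ∀ z : BallPt n, g (z : Cn n) = (f z : Cn n)

/-- A holomorphic automorphism of the unit ball. -/
def IsBallAut (n : ℕ) (f : Equiv.Perm (BallPt n)) : Prop :=
  IsHoloPerm n f ∧ IsHoloPerm n f.symm

/-- A finite subgroup of `Aut(Bⁿ)`. -/
def IsFiniteBallAutSubgroup (n : ℕ) (Γ : Subgroup (Equiv.Perm (BallPt n))) : Prop :=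
  (Γ : Set (Equiv.Perm (BallPt n))).Finite ∧ ∀ f ∈ Γ, IsHoloPerm n f

/-- A geodesic hyperplane of `Bⁿ`: the image of `{z_n = 0}` by an automorphism. -/
def IsGeodesicHyperplane (n : ℕ) (hn : 0 < n) (H : Set (BallPt n)) : Prop :=
  ∃ g : Equiv.Perm (BallPt n), IsBallAut n g ∧
    H = g '' {z : BallPt n | (z : Cn n) ⟨n - 1, by omega⟩ = 0}

/-- A reflection of `Bⁿ`: a finite-order automorphism whose fixed point set is a
geodesic hyperplane. -/
def IsReflection (n : ℕ) (hn : 0 < n) (f : Equiv.Perm (BallPt n)) : Prop :=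
  IsBallAut n f ∧ IsOfFinOrder f ∧ IsGeodesicHyperplane n hn {z : BallPt n | f z = z}

/-- `Γ_ref`: the subgroup generated by the reflections contained in `Γ`. -/
def reflSubgroup (n : ℕ) (hn : 0 < n) (Γ : Subgroup (Equiv.Perm (BallPt n))) :
    Subgroup (Equiv.Perm (BallPt n)) :=
  Subgroup.closure {f | f ∈ Γ ∧ IsReflection n hn f}

/-- A ball permutation is represented on the ball by the (unitary) linear isometry `U`. -/
def RepresentsOnBall (n : ℕ) (f : Equiv.Perm (BallPt n)) (U : Cn n ≃ₗᵢ[ℂ] Cn n) : Prop :=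
  ∀ z : BallPt n, (f z : Cn n) = U (z : Cn n)

/-- Evaluation of a polynomial in `n` variables at a point of `ℂⁿ`. -/
def evalAt (n : ℕ) (Q : MvPolynomial (Fin n) ℂ) (z : Cn n) : ℂ :=
  MvPolynomial.eval (fun i => z i) Q

/-- `Q` is invariant under the reflection subgroup `Γ_o,ref = h Γ_ref h⁻¹ ⊆ U(n)`. -/
def IsReflInvariant (n : ℕ) (hn : 0 < n) (Γ : Subgroup (Equiv.Perm (BallPt n)))
    (hmap : Equiv.Perm (BallPt n)) (Q : MvPolynomial (Fin n) ℂ) : Prop :=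
  ∀ f ∈ reflSubgroup n hn Γ, ∀ U : Cn n ≃ₗᵢ[ℂ] Cn n,
    RepresentsOnBall n (hmap * f * hmap⁻¹) U →
      ∀ z : Cn n, evalAt n Q (U z) = evalAt n Q z

/-- The data entering the construction of the Chevalley map `P_Γ` associated with a
finite subgroup `Γ ⊆ Aut(Bⁿ)`: an automorphism `h` carrying a common fixed point `x₀`
of `Γ` to `0` (so that `hΓh⁻¹ ⊆ U(n)`), and a basis `P₁,…,Pₙ` of homogeneous
polynomials for the algebra of `Γ_o,ref`-invariant polynomials. -/
structure ChevalleyData (n : ℕ) (hn : 0 < n) (Γ : Subgroup (Equiv.Perm (BallPt n))) where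
  hmap : Equiv.Perm (BallPt n)
  hmap_aut : IsBallAut n hmap
  x0 : BallPt n
  x0_fixed : ∀ f ∈ Γ, f x0 = x0
  hmap_x0 : (hmap x0 : Cn n) = 0
  conj_unitary : ∀ f ∈ Γ, ∃ U : Cn n ≃ₗᵢ[ℂ] Cn n, RepresentsOnBall n (hmap * f * hmap⁻¹) U
  P : Fin n → MvPolynomial (Fin n) ℂ
  deg : Fin n → ℕ
  homog : ∀ i, (P i).IsHomogeneous (deg i)
  invariant : ∀ i, IsReflInvariant n hn Γ hmap (P i)
  generates : ∀ Q : MvPolynomial (Fin n) ℂ, IsReflInvariant n hn Γ hmap Q →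
    ∃ R : MvPolynomial (Fin n) ℂ, Q = MvPolynomial.aeval P R

/-- The proper holomorphic map `P_Γ = (P₁,…,Pₙ) ∘ h : Bⁿ → ℂⁿ` (extended by `0`
outside the ball). -/
def ChevalleyData.map {n : ℕ} {hn : 0 < n} {Γ : Subgroup (Equiv.Perm (BallPt n))}
    (C : ChevalleyData n hn Γ) : Cn n → Cn n := fun z =>
  letI : Decidable (z ∈ Metric.ball (0 : Cn n) 1) := Classical.dec _
  if hz : z ∈ Metric.ball (0 : Cn n) 1 then
    (EuclideanSpace.equiv (Fin n) ℂ).symm fun i =>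
      evalAt n (C.P i) ((C.hmap ⟨z, hz⟩ : BallPt n) : Cn n)
  else 0

/-- The domain `B^n_Γ = P_Γ(Bⁿ)`. -/
def ChevalleyData.image {n : ℕ} {hn : 0 < n} {Γ : Subgroup (Equiv.Perm (BallPt n))}
    (C : ChevalleyData n hn Γ) : Set (Cn n) :=
  C.map '' Metric.ball 0 1

/-- A biholomorphism from `A` onto `B`. -/
def IsBiholoOn (n : ℕ) (f : Cn n → Cn n) (A B : Set (Cn n)) : Prop :=
  DifferentiableOn ℂ f A ∧ BijOn f A B ∧
    ∃ g : Cn n → Cn n, DifferentiableOn ℂ g B ∧ BijOn g B A ∧ InvOn g f A B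

/-- A complex-analytic subvariety `S` of (an open set) `D`: locally the common zero
set of finitely many holomorphic functions. -/
def IsAnalyticSubvariety {E : Type*} [NormedAddCommGroup E] [NormedSpace ℂ E]
    (D S : Set E) : Prop :=
  S ⊆ D ∧ ∀ x ∈ D, ∃ U : Set E, IsOpen U ∧ x ∈ U ∧ U ⊆ D ∧
    ∃ (N : ℕ) (f : Fin N → E → ℂ), (∀ i, DifferentiableOn ℂ (f i) U) ∧
      S ∩ U = {z ∈ U | ∀ i, f i z = 0}

/-- Two points `y, y'` of `Bⁿ` are `F`-related: they lie in a common set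
`φ^(p)(F⁻¹(w))`, `w ∈ Ω`. -/
def FRelated (n k : ℕ) (hk : k ≤ n) (p : Fin k → ℕ) (F : Cn n → Cn n)
    (E Ω : Set (Cn n)) (y y' : Cn n) : Prop :=
  ∃ w ∈ Ω, y ∈ phiMap n k hk p '' (E ∩ F ⁻¹' {w}) ∧
    y' ∈ phiMap n k hk p '' (E ∩ F ⁻¹' {w})

/-- The correspondence with graph `V ⊆ D × D'` splits at `z₀ ∈ D`. -/
def SplitsAt (n : ℕ) (D D' : Set (Cn n)) (V : Set (Cn n × Cn n)) (z0 : Cn n) : Prop :=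
  ∃ U : Set (Cn n), IsOpen U ∧ z0 ∈ U ∧ ∃ (q : ℕ) (g : Fin q → Cn n → Cn n),
    (∀ i, DifferentiableOn ℂ (g i) (U ∩ D) ∧ MapsTo (g i) (U ∩ D) D') ∧
    ∀ z ∈ U ∩ D, ∀ w ∈ D', ((z, w) ∈ V ↔ ∃ i, g i z = w)

/-- `D` is a bounded domain with smooth boundary: near each boundary point there is a
smooth local defining function with nonvanishing differential. -/
def HasSmoothBoundary (n : ℕ) (D : Set (Cn n)) : Prop :=
  ∀ x ∈ frontier D, ∃ (V : Set (Cn n)) (ρ : Cn n → ℝ), IsOpen V ∧ x ∈ V ∧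
    ContDiff ℝ (⊤ : ℕ∞) ρ ∧ (∀ y ∈ V, fderiv ℝ ρ y ≠ 0) ∧
    D ∩ V = {y ∈ V | ρ y < 0} ∧ frontier D ∩ V = {y ∈ V | ρ y = 0}

end

/-!
The correspondence has a single branch. Writing `φ = φ^(p)` and `E` for the pseudoellipsoid, this
amounts to showing that `P_Γ ∘ φ` is constant on the fibres of `F`; it then factors as `Ψ ∘ F`, the
function `Ψ` is holomorphic by descent through the finite proper map `F` (`FiniteHolo.descent`), and
`Ψ` is proper because `P_Γ ∘ φ` is (`ChevalleyData.isCompact_preimage`: the invariant polynomials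
separate the orbits of the finite unitary group `hΓ_ref h⁻¹`, hence determine the norm).

Two points `x, x'` of a fibre of `F` satisfy `γ φ(x) = φ(x')` for some `γ ∈ Γ`, by hypothesis. As
`P_Γ` is only `Γ_ref`-invariant, `γ` has to be found in the subgroup `Γ_ref` generated by the
reflections (`exists_refl_rel`). The class of `γ` in `Γ / Γ_ref` is well defined and locally
constant as long as the isotropy group of `φ(x)` in `Γ` lies in `Γ_ref`. An element of `Γ` outside
`Γ_ref` fixes a set of complex codimension at least two, so this defines a `Γ / Γ_ref`-valued cocycle
on the fibre product `E ×_Ω E` away from the preimage of a set `A ⊆ Ω` of real codimension four.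

*Purity.* The cocycle extends to a locally constant function `d` on the whole fibre product
(`FiniteHolo.exists_ext_cocycle`). Over a small ball in `Ω` it is trivialised along the rays issued
from a point off `A`; the shadow of `A` has codimension three, and neither it nor its preimage
separates small balls, so the trivialisation extends over the whole ball.

*Triviality.* Since `F` is open and proper and `E` is connected, each value of `d` is attained at a
pair `(a, 0)` with `F(a) = F(0)` (`FiniteHolo.exists_value_at`). Regard this pair as a solution of
`F(t z) = F(z)` for `t = 0`. For `t < 1` the solutions of this equation stay in a compact subset of
`E` independent of `t`: an element of `Γ` changes the defining function of the ball by the explicit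
factor of `one_sub_norm_aut`, which cannot compensate the shrinking `z ↦ t z` near the boundary
(`exists_compact_shrink`). By a Rouché-type argument (`exists_zero_of_norm_lt_frontier`) solutions
with a given value of `d` persist from `t = 0` up to `t = 1`, where they lie on the diagonal and
`d = 1` (`FiniteHolo.ext_cocycle_trivial`). Hence `d = 1` throughout, so that `γ` can be chosen in
`Γ_ref` off the preimage of `A` and then, the relation `γ φ(x) = φ(x')` being closed, everywhere.

Analytic sets only enter through `CodimGE`, a covering condition by Lipschitz images of
low-dimensional Euclidean sets.
-/

/-! ### Holomorphic maps of several variables -/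

lemma exists_ball_norm_le {E G : Type} [NormedAddCommGroup E] [NormedAddCommGroup G] {f : E → G} {U : Set E} (hU : IsOpen U)
    (hf : ContinuousOn f U) {c : E} (hc : c ∈ U) :
    ∃ R > 0, ∃ M > 0, ball c R ⊆ U ∧ ∀ y ∈ ball c R, ‖f y‖ ≤ M := by
  have h1 : ContinuousAt f c := hf.continuousAt (hU.mem_nhds hc)
  have h2 : ∀ᶠ y in 𝓝 c, ‖f y‖ < ‖f c‖ + 1 := h1.norm.eventually_lt_const (by linarith)
  obtain ⟨R, hR, h⟩ := Metric.mem_nhds_iff.1 (inter_mem h2 (hU.mem_nhds hc))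
  exact ⟨R, hR, ‖f c‖ + 1, by positivity, fun y hy => (h hy).2, fun y hy => (le_of_lt (h hy).1)⟩

section Holo
variable {E G : Type} [NormedAddCommGroup E] [NormedSpace ℂ E]
  [NormedAddCommGroup G] [NormedSpace ℂ G]

/-- Weierstrass: a uniform limit of holomorphic maps on a ball is holomorphic at the centre. -/
lemma differentiableAt_of_tendstoUniformlyOn_ball [CompleteSpace G] {g : ℕ → E → G} {f : E → G}
    {c : E} {R : ℝ} (hR : 0 < R) (hg : ∀ k, DifferentiableOn ℂ (g k) (ball c R))
    (hlim : TendstoUniformlyOn g f atTop (ball c R)) : DifferentiableAt ℂ f c := by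
  have hsub : ball c (R/2) ⊆ ball c R := ball_subset_ball (by linarith)
  have hC : UniformCauchySeqOn (fun k => fderiv ℂ (g k)) atTop (ball c (R/2)) := by
    rw [Metric.uniformCauchySeqOn_iff]
    intro ε hε
    obtain ⟨N, hN⟩ := (Metric.uniformCauchySeqOn_iff.1 hlim.uniformCauchySeqOn) (ε * R / 8)
      (by positivity)
    refine ⟨N, fun m hm k hk x hx => ?_⟩
    have hb : ball x (R/2) ⊆ ball c R := by
      intro y hy
      have := dist_triangle y x c
      simp only [mem_ball] at *
      linarith
    have hd : DifferentiableOn ℂ (fun y => g m y - g k y) (ball x (R/2)) :=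
      ((hg m).mono hb).sub ((hg k).mono hb)
    have hle := Complex.norm_fderiv_le_div_of_mapsTo_ball (R₂ := ε * R / 4) hd
      (fun y hy => by
        have h1 := hN m hm k hk y (hb hy)
        have h2 := hN m hm k hk x (hsub hx)
        rw [dist_eq_norm] at h1 h2
        rw [mem_closedBall, dist_eq_norm]
        exact (norm_sub_le _ _).trans (by linarith)) (by linarith)
    have hm' : DifferentiableAt ℂ (g m) x :=
      (hg m).differentiableAt (isOpen_ball.mem_nhds (hsub hx))
    have hk' : DifferentiableAt ℂ (g k) x :=
      (hg k).differentiableAt (isOpen_ball.mem_nhds (hsub hx))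
    rw [fderiv_fun_sub hm' hk'] at hle
    rw [dist_eq_norm]
    refine hle.trans_lt ?_
    rw [div_lt_iff₀ (by linarith)]
    nlinarith
  have hex : ∀ x : E, ∃ L : E →L[ℂ] G, x ∈ ball c (R/2) →
      Tendsto (fun k => fderiv ℂ (g k) x) atTop (𝓝 L) := by
    intro x
    by_cases hx : x ∈ ball c (R/2)
    · obtain ⟨L, hL⟩ := cauchySeq_tendsto_of_complete (hC.cauchySeq hx)
      exact ⟨L, fun _ => hL⟩
    · exact ⟨0, fun h => absurd h hx⟩
  choose g' hg' using hex
  have hu := hC.tendstoUniformlyOn_of_tendsto hg'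
  exact (hasFDerivAt_of_tendstoUniformlyOn isOpen_ball hu
    (fun k x hx => ((hg k).differentiableAt (isOpen_ball.mem_nhds (hsub hx))).hasFDerivAt)
    (fun x hx => hlim.tendsto_at (hsub hx)) (mem_ball_self (by linarith))).differentiableAt

/-- Second-order Cauchy estimate for the Taylor remainder. -/
lemma norm_taylor_remainder_le {f : E → G} {c z : E} {R M : ℝ} (hR : 0 < R)
    (hf : DifferentiableOn ℂ f (ball c R)) (hM : ∀ y ∈ ball c R, ‖f y‖ ≤ M) (hz : z ∈ ball c R) :
    ‖f z - f c - fderiv ℂ f c (z - c)‖ ≤ 4 * M * (dist z c / R) ^ 2 := by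
  have hc : c ∈ ball c R := mem_ball_self hR
  have hfc : DifferentiableAt ℂ f c := hf.differentiableAt (isOpen_ball.mem_nhds hc)
  have hD : ‖fderiv ℂ f c‖ ≤ 2 * M / R :=
    Complex.norm_fderiv_le_div_of_mapsTo_ball hf (fun y hy => by
      rw [mem_closedBall, dist_eq_norm]
      exact (norm_sub_le _ _).trans (by linarith [hM y hy, hM c hc])) hR
  set h : E → G := fun y => f y - fderiv ℂ f c (y - c) with hh
  have hd : DifferentiableOn ℂ h (ball c R) := by
    refine hf.sub ?_
    exact ((fderiv ℂ f c).differentiable.comp (differentiable_id.sub_const c)).differentiableOn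
  have key := Complex.dist_le_mul_div_pow_of_mapsTo_ball_of_isLittleO (n := 1) (R₂ := 4 * M)
    (f := h) hd ?_ ?_ hz
  · simpa [hh, dist_eq_norm, sub_right_comm] using key
  · intro y hy
    rw [mem_closedBall, dist_eq_norm]
    have h1 : ‖fderiv ℂ f c (y - c)‖ ≤ 2 * M := by
      refine (ContinuousLinearMap.le_opNorm _ _).trans ?_
      have : ‖y - c‖ ≤ R := by rw [← dist_eq_norm]; exact (mem_ball.1 hy).le
      calc ‖fderiv ℂ f c‖ * ‖y - c‖ ≤ (2 * M / R) * R := by gcongr; exact (norm_nonneg _).trans hD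
        _ = 2 * M := by field_simp
    have : h y - h c = f y - f c - fderiv ℂ f c (y - c) := by simp [hh, sub_right_comm]
    rw [this]
    calc _ ≤ ‖f y‖ + ‖f c‖ + ‖fderiv ℂ f c (y - c)‖ :=
          (norm_sub_le _ _).trans (by gcongr; exact norm_sub_le _ _)
      _ ≤ _ := by linarith [hM y hy, hM c hc]
  · have := hfc.hasFDerivAt.isLittleO
    simpa [hh, sub_right_comm] using this.norm_right

/-- Directional derivatives of a holomorphic map are holomorphic. -/
lemma differentiableOn_fderiv_apply [CompleteSpace G] {f : E → G} {U : Set E} (hU : IsOpen U)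
    (hf : DifferentiableOn ℂ f U) (v : E) : DifferentiableOn ℂ (fun z => fderiv ℂ f z v) U := by
  intro z0 hz0
  obtain ⟨R', hR', M, hM, hsub, hb⟩ := exists_ball_norm_le hU hf.continuousOn hz0
  obtain ⟨R, hR, rfl⟩ : ∃ R > 0, R' = 2 * R := ⟨R'/2, by linarith, by ring⟩
  set t : ℕ → ℝ := fun k => R / (‖v‖ + 1) / (k + 1) with ht
  have htpos : ∀ k, 0 < t k := fun k => by positivity
  have htv : ∀ k, ‖(t k : ℂ) • v‖ < R := by
    intro k
    rw [norm_smul, Complex.norm_real, Real.norm_of_nonneg (htpos k).le, ht]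
    have h1 : R / (‖v‖ + 1) / (k + 1) ≤ R / (‖v‖ + 1) :=
      div_le_self (by positivity) (by linarith [Nat.cast_nonneg (α := ℝ) k])
    calc R / (‖v‖ + 1) / (k + 1) * ‖v‖ ≤ R / (‖v‖ + 1) * ‖v‖ := by gcongr
      _ < R := by
        rw [div_mul_eq_mul_div, div_lt_iff₀ (by positivity)]
        nlinarith
  refine (differentiableAt_of_tendstoUniformlyOn_ball
    (g := fun k z => (t k : ℂ)⁻¹ • (f (z + (t k : ℂ) • v) - f z)) hR ?_ ?_).differentiableWithinAt
  · intro k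
    refine DifferentiableOn.const_smul (DifferentiableOn.sub ?_ ?_) _
    · refine hf.comp (differentiable_id.add_const _).differentiableOn ?_
      intro z hz
      apply hsub
      rw [mem_ball, dist_eq_norm] at hz ⊢
      have : z + (t k : ℂ) • v - z0 = (z - z0) + (t k : ℂ) • v := by abel
      beta_reduce
      rw [this]
      exact (norm_add_le _ _).trans_lt (by linarith [htv k])
    · exact hf.mono (fun z hz => hsub (ball_subset_ball (by linarith) hz))
  · rw [Metric.tendstoUniformlyOn_iff]
    intro ε hε
    have hest : ∀ k, ∀ z ∈ ball z0 R,
        dist (fderiv ℂ f z v) ((t k : ℂ)⁻¹ • (f (z + (t k : ℂ) • v) - f z))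
          ≤ 4 * M * (‖v‖ / R) ^ 2 * t k := by
      intro k z hz
      have hbz : ball z R ⊆ ball z0 (2 * R) := by
        intro y hy
        have := dist_triangle y z z0
        simp only [mem_ball] at *
        linarith
      have h1 := norm_taylor_remainder_le hR (hf.mono (hbz.trans hsub))
        (fun y hy => hb y (hbz hy)) (z := z + (t k : ℂ) • v)
        (by rw [mem_ball, dist_eq_norm, add_sub_cancel_left]; exact htv k)
      rw [dist_eq_norm, add_sub_cancel_left] at h1
      have hne : (t k : ℂ) ≠ 0 := by exact_mod_cast (htpos k).ne'
      have h2 : fderiv ℂ f z v - (t k : ℂ)⁻¹ • (f (z + (t k : ℂ) • v) - f z)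
          = -((t k : ℂ)⁻¹ • (f (z + (t k : ℂ) • v) - f z - fderiv ℂ f z ((t k : ℂ) • v))) := by
        rw [map_smul, smul_sub _ (f (z + (t k : ℂ) • v) - f z), smul_smul, inv_mul_cancel₀ hne,
          one_smul, neg_sub]
      rw [dist_eq_norm, h2, norm_neg, norm_smul, norm_inv, Complex.norm_real,
        Real.norm_of_nonneg (htpos k).le]
      rw [norm_smul, Complex.norm_real, Real.norm_of_nonneg (htpos k).le] at h1
      calc _ ≤ (t k)⁻¹ * (4 * M * (t k * ‖v‖ / R) ^ 2) := by
            gcongr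
        _ = _ := by have := (htpos k).ne'; field_simp
    have hlim : Tendsto (fun k : ℕ => 4 * M * (‖v‖ / R) ^ 2 * t k) atTop (𝓝 0) := by
      have : Tendsto t atTop (𝓝 0) := by
        simp only [ht]
        have := (tendsto_one_div_add_atTop_nhds_zero_nat (𝕜 := ℝ)).const_mul (R / (‖v‖ + 1))
        simpa [div_eq_mul_inv] using this
      simpa using this.const_mul (4 * M * (‖v‖ / R) ^ 2)
    filter_upwards [hlim.eventually_lt_const hε] with k hk z hz
    exact (hest k z hz).trans_lt hk

lemma contDiffOn_two_of_holo [FiniteDimensional ℂ E] [CompleteSpace G] {f : E → G} {U : Set E}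
    (hU : IsOpen U) (hf : DifferentiableOn ℂ f U) : ContDiffOn ℂ 2 f U := by
  have hc : ∀ (G : Type) [NormedAddCommGroup G] [NormedSpace ℂ G] [CompleteSpace G] (m : ℕ)
      (f : E → G), DifferentiableOn ℂ f U → ContDiffOn ℂ m f U := by
    intro G _ _ _ m
    induction m with
    | zero => intro f hf; simpa using hf.continuousOn
    | succ m ih =>
      intro f hf
      push_cast
      rw [contDiffOn_succ_iff_fderiv_apply hU.uniqueDiffOn]
      refine ⟨hf, by simp, fun y => ?_⟩
      refine (ih _ (differentiableOn_fderiv_apply hU hf y)).congr (fun x hx => ?_)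
      rw [fderivWithin_of_isOpen hU hx]
  exact hc G 2 f hf

lemma hasStrictFDerivAt_of_holo [FiniteDimensional ℂ E] [CompleteSpace G] {f : E → G} {U : Set E}
    (hU : IsOpen U) (hf : DifferentiableOn ℂ f U) {z : E} (hz : z ∈ U) :
    HasStrictFDerivAt f (fderiv ℂ f z) z :=
  ((contDiffOn_two_of_holo hU hf).contDiffAt (hU.mem_nhds hz)).hasStrictFDerivAt (by norm_num)

lemma differentiableOn_fderiv_of_holo [FiniteDimensional ℂ E] [CompleteSpace G]
    {f : E → G} {U : Set E} (hU : IsOpen U) (hf : DifferentiableOn ℂ f U) :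
    DifferentiableOn ℂ (fderiv ℂ f) U :=
  ((contDiffOn_two_of_holo hU hf).fderiv_of_isOpen (m := 1) hU (by norm_num)).differentiableOn
    (by norm_num)

/-- The Jacobian determinant of a holomorphic map is holomorphic. -/
lemma differentiableOn_cDet {n : ℕ} {f : Cn n → Cn n} {U : Set (Cn n)} (hU : IsOpen U)
    (hf : DifferentiableOn ℂ f U) : DifferentiableOn ℂ (cDet n f) U := by
  have h1 := differentiableOn_fderiv_of_holo hU hf
  let b := (EuclideanSpace.basisFun (Fin n) ℂ).toBasis
  have h2 : cDet n f = fun z => ∑ σ : Equiv.Perm (Fin n), ((Equiv.Perm.sign σ : ℤ) : ℂ) *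
      ∏ i, (LinearMap.toMatrix b b ((fderiv ℂ f z : Cn n →L[ℂ] Cn n) : Cn n →ₗ[ℂ] Cn n)) (σ i) i := by
    funext z
    rw [cDet, ← LinearMap.det_toMatrix b, Matrix.det_apply']
  rw [h2]
  refine DifferentiableOn.fun_sum fun σ _ => DifferentiableOn.const_mul ?_ _
  suffices h : ∀ i, DifferentiableOn ℂ (fun z => LinearMap.toMatrix b b
      ((fderiv ℂ f z : Cn n →L[ℂ] Cn n) : Cn n →ₗ[ℂ] Cn n) (σ i) i) U by
    induction (Finset.univ : Finset (Fin n)) using Finset.induction_on with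
    | empty => simp
    | insert a s ha ih =>
      simp only [Finset.prod_insert ha]
      exact (h a).mul ih
  intro i
  have h3 : ∀ z, LinearMap.toMatrix b b ((fderiv ℂ f z : Cn n →L[ℂ] Cn n) : Cn n →ₗ[ℂ] Cn n)
      (σ i) i = (fderiv ℂ f z (b i)) (σ i) := by
    intro z
    simp [LinearMap.toMatrix_apply, b]
  simp only [h3]
  have h4 : DifferentiableOn ℂ (fun z => fderiv ℂ f z (b i)) U := h1.clm_apply
    (differentiableOn_const _)
  exact (EuclideanSpace.proj (𝕜 := ℂ) (σ i)).differentiable.comp_differentiableOn h4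

end Holo

/-! ### Thin sets -/

/-- A Lipschitz image of a subset of `ℝʲ` with `j + d ≤ 2n`: a set of real codimension at least `d`
in `ℂⁿ`. -/
def IsPiece (n d : ℕ) (K : Set (Cn n)) : Prop :=
  ∃ (j : ℕ) (f : (Fin j → ℝ) → Cn n) (c : NNReal) (S : Set (Fin j → ℝ)),
    j + d ≤ 2 * n ∧ LipschitzOnWith c f S ∧ K = f '' S

/-- `A` has real codimension at least `d`: it is covered by countably many Lipschitz images of
subsets of Euclidean spaces of dimension at most `2n - d`. -/
def CodimGE (n d : ℕ) (A : Set (Cn n)) : Prop :=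
  ∃ 𝒞 : Set (Set (Cn n)), 𝒞.Countable ∧ (∀ K ∈ 𝒞, IsPiece n d K) ∧ A ⊆ ⋃₀ 𝒞

section Thin
variable {n d : ℕ} {A B : Set (Cn n)}

lemma CodimGE.mono (hA : CodimGE n d A) (h : B ⊆ A) : CodimGE n d B := by
  obtain ⟨𝒞, h1, h2, h3⟩ := hA
  exact ⟨𝒞, h1, h2, h.trans h3⟩

lemma IsPiece.codimGE (hA : IsPiece n d A) : CodimGE n d A :=
  ⟨{A}, countable_singleton A, by simpa using hA, by simp⟩

lemma CodimGE.mono_codim {e : ℕ} (hA : CodimGE n d A) (h : e ≤ d) : CodimGE n e A := by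
  obtain ⟨𝒞, h1, h2, h3⟩ := hA
  refine ⟨𝒞, h1, fun K hK => ?_, h3⟩
  obtain ⟨j, f, c, S, h4, h5⟩ := h2 K hK
  exact ⟨j, f, c, S, by omega, h5⟩

lemma codimGE_empty : CodimGE n d (∅ : Set (Cn n)) := ⟨∅, by simp, by simp, by simp⟩

lemma codimGE_biUnion {ι : Type*} {s : Set ι} (hs : s.Countable) {A : ι → Set (Cn n)}
    (hA : ∀ i ∈ s, CodimGE n d (A i)) : CodimGE n d (⋃ i ∈ s, A i) := by
  choose! 𝒞 h1 h2 h3 using hA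
  refine ⟨⋃ i ∈ s, 𝒞 i, hs.biUnion h1, ?_, ?_⟩
  · intro K hK
    simp only [mem_iUnion] at hK
    obtain ⟨i, hi, hK⟩ := hK
    exact h2 i hi K hK
  · intro x hx
    simp only [mem_iUnion] at hx
    obtain ⟨i, hi, hx⟩ := hx
    obtain ⟨K, hK, hxK⟩ := h3 i hi hx
    exact ⟨K, by simp only [mem_iUnion]; exact ⟨i, hi, hK⟩, hxK⟩

lemma codimGE_iUnion {ι : Type*} [Countable ι] {A : ι → Set (Cn n)}
    (hA : ∀ i, CodimGE n d (A i)) : CodimGE n d (⋃ i, A i) := by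
  have := codimGE_biUnion (n := n) (d := d) (s := (univ : Set ι)) countable_univ (A := A)
    (fun i _ => hA i)
  simpa using this

lemma CodimGE.union (hA : CodimGE n d A) (hB : CodimGE n d B) : CodimGE n d (A ∪ B) := by
  rw [union_eq_iUnion]
  exact codimGE_iUnion (fun b => by cases b <;> assumption)

lemma codimGE_of_local (h : ∀ x ∈ A, ∃ u ∈ 𝓝[A] x, CodimGE n d (u ∩ A)) : CodimGE n d A := by
  choose! u hu hc using h
  obtain ⟨t, htA, htc, hsub⟩ := TopologicalSpace.countable_cover_nhdsWithin hu
  refine (codimGE_biUnion htc (A := fun x => u x ∩ A) (fun x hx => hc x (htA hx))).mono ?_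
  intro x hx
  obtain ⟨y, hy, hxy⟩ := mem_iUnion₂.1 (hsub hx)
  exact mem_iUnion₂.2 ⟨y, hy, hxy, hx⟩

lemma CodimGE.image_lipschitz (hA : CodimGE n d A) {g : Cn n → Cn n} {c : NNReal}
    (hg : LipschitzOnWith c g A) : CodimGE n d (g '' A) := by
  obtain ⟨𝒞, h1, h2, h3⟩ := hA
  choose! j f C S h4 h5 h6 using h2
  refine (codimGE_biUnion (n := n) (d := d) h1
    (A := fun K => g ∘ f K '' (S K ∩ f K ⁻¹' A)) (fun K hK => ?_)).mono ?_
  · refine IsPiece.codimGE ⟨j K, g ∘ f K, c * C K, _, h4 K hK, ?_, rfl⟩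
    exact hg.comp ((h5 K hK).mono inter_subset_left) (fun x hx => hx.2)
  · rintro _ ⟨x, hx, rfl⟩
    obtain ⟨K, hK, hxK⟩ := h3 hx
    have hxK' := hxK
    rw [h6 K hK] at hxK'
    obtain ⟨s, hs, hsx⟩ := hxK'
    exact mem_iUnion₂.2 ⟨K, hK, s, ⟨hs, by simpa [hsx] using hx⟩, by simp [hsx]⟩

lemma CodimGE.image (hA : CodimGE n d A) {g : Cn n → Cn n}
    (hg : ∀ x ∈ A, ∃ c, ∃ u ∈ 𝓝[A] x, LipschitzOnWith c g u) : CodimGE n d (g '' A) := by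
  choose! c u hu hc using hg
  obtain ⟨t, htA, htc, hsub⟩ := TopologicalSpace.countable_cover_nhdsWithin hu
  refine (codimGE_biUnion htc (A := fun x => g '' (u x ∩ A)) (fun x hx =>
    (hA.mono inter_subset_right).image_lipschitz ((hc x (htA hx)).mono inter_subset_left))).mono ?_
  rintro _ ⟨x, hx, rfl⟩
  obtain ⟨y, hy, hxy⟩ := mem_iUnion₂.1 (hsub hx)
  exact mem_iUnion₂.2 ⟨y, hy, x, ⟨hxy, hx⟩, rfl⟩

lemma CodimGE.image_holo (hA : CodimGE n d A) {g : Cn n → Cn n} {U : Set (Cn n)} (hU : IsOpen U)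
    (hg : DifferentiableOn ℂ g U) (hAU : A ⊆ U) : CodimGE n d (g '' A) := by
  refine hA.image fun x hx => ?_
  obtain ⟨c, u, hu, hL⟩ := (hasStrictFDerivAt_of_holo hU hg (hAU hx)).exists_lipschitzOnWith
  exact ⟨c, u, mem_nhdsWithin_of_mem_nhds hu, hL⟩

lemma finrank_real_Cn (n : ℕ) : Module.finrank ℝ (Cn n) = 2 * n := by
  rw [finrank_real_of_complex]; simp

lemma CodimGE.dense_compl (hA : CodimGE n d A) (hd : 1 ≤ d) : Dense Aᶜ := by
  obtain ⟨𝒞, h1, h2, h3⟩ := hA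
  rcases Nat.eq_zero_or_pos n with rfl | hn
  · have : A = ∅ := by
      rw [eq_empty_iff_forall_notMem]
      intro x hx
      obtain ⟨K, hK, -⟩ := h3 hx
      obtain ⟨j, f, c, S, h4, -⟩ := h2 K hK
      omega
    rw [this]; simp
  · apply dense_compl_of_dimH_lt_finrank
    rw [finrank_real_Cn]
    have : dimH A ≤ ((2 * n - 1 : ℕ) : ENNReal) := by
      refine (dimH_mono h3).trans ?_
      rw [dimH_sUnion h1]
      refine iSup₂_le fun K hK => ?_
      obtain ⟨j, f, c, S, h4, h5, rfl⟩ := h2 K hK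
      refine h5.dimH_image_le.trans ((dimH_mono (subset_univ S)).trans ?_)
      rw [Real.dimH_univ_pi_fin]
      exact_mod_cast (by omega : j ≤ 2 * n - 1)
    refine this.trans_lt ?_
    exact_mod_cast (by omega : 2 * n - 1 < 2 * n)

/-- The real cone (a union of lines through `b`) over a set loses one codimension. -/
lemma CodimGE.cone (hA : CodimGE n (d + 1) A) (b : Cn n) :
    CodimGE n d {w | ∃ s : ℝ, ∃ a ∈ A, w = b + s • (a - b)} := by
  obtain ⟨𝒞, h1, h2, h3⟩ := hA
  choose! j f C S h4 h5 h6 using h2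
  let T : Set (Cn n) → ℕ → Set (Cn n) := fun K N =>
    (fun x : Fin (j K + 1) → ℝ => b + x 0 • (f K (Fin.tail x) - b)) ''
      {x | |x 0| ≤ N ∧ Fin.tail x ∈ S K ∧ ‖f K (Fin.tail x) - b‖ ≤ N}
  have hT : ∀ K ∈ 𝒞, ∀ N, CodimGE n d (T K N) := by
    intro K hK N
    refine IsPiece.codimGE ⟨j K + 1, _, N * C K + N, _, by have := h4 K hK; omega, ?_, rfl⟩
    rw [lipschitzOnWith_iff_dist_le_mul]
    rintro x ⟨hx0, hxS, hxN⟩ y ⟨hy0, hyS, hyN⟩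
    have e1 := (h5 K hK).dist_le_mul _ hxS _ hyS
    have e2 : dist (Fin.tail x) (Fin.tail y) ≤ dist x y := by
      rw [dist_pi_le_iff dist_nonneg]
      intro i
      exact dist_le_pi_dist x y i.succ
    have e3 : |x 0 - y 0| ≤ dist x y := dist_le_pi_dist x y 0
    rw [dist_eq_norm] at e1
    rw [dist_eq_norm]
    have e4 : b + x 0 • (f K (Fin.tail x) - b) - (b + y 0 • (f K (Fin.tail y) - b))
      = x 0 • (f K (Fin.tail x) - f K (Fin.tail y))
        + (x 0 - y 0) • (f K (Fin.tail y) - b) := by module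
    rw [e4]
    push_cast
    calc _ ≤ |x 0| * ‖f K (Fin.tail x) - f K (Fin.tail y)‖ +
          |x 0 - y 0| * ‖f K (Fin.tail y) - b‖ := by
            refine (norm_add_le _ _).trans ?_
            rw [norm_smul, norm_smul, Real.norm_eq_abs, Real.norm_eq_abs]
      _ ≤ N * (C K * dist x y) + dist x y * N := by
            gcongr
            exact e1.trans (by gcongr)
      _ = _ := by ring
  refine (codimGE_biUnion h1 (A := fun K => ⋃ N, T K N)
    (fun K hK => codimGE_iUnion (hT K hK))).mono ?_
  rintro _ ⟨s, a, ha, rfl⟩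
  obtain ⟨K, hK, haK⟩ := h3 ha
  have haK' := haK
  rw [h6 K hK] at haK'
  obtain ⟨u, hu, hua⟩ := haK'
  obtain ⟨N, hN⟩ := exists_nat_ge (max |s| ‖a - b‖)
  refine mem_iUnion₂.2 ⟨K, hK, mem_iUnion.2 ⟨N, Fin.cons s u, ⟨?_, ?_, ?_⟩, ?_⟩⟩
  · simpa using (le_max_left _ _).trans hN
  · simpa using hu
  · simpa [hua] using (le_max_right _ _).trans hN
  · simp [hua]

lemma codimGE_submodule (L : Submodule ℝ (Cn n)) (h : Module.finrank ℝ L + d ≤ 2 * n) :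
    CodimGE n d (L : Set (Cn n)) := by
  let e : (Fin (Module.finrank ℝ L) → ℝ) ≃L[ℝ] L := ContinuousLinearEquiv.ofFinrankEq (by simp)
  let g : (Fin (Module.finrank ℝ L) → ℝ) →L[ℝ] Cn n := L.subtypeL.comp e.toContinuousLinearMap
  refine IsPiece.codimGE ⟨_, g, _, univ, h, g.lipschitz.lipschitzOnWith, ?_⟩
  ext x
  simp only [image_univ, mem_range, SetLike.mem_coe]
  constructor
  · intro hx
    exact ⟨e.symm ⟨x, hx⟩, by simp [g]⟩
  · rintro ⟨y, rfl⟩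
    simp [g]

lemma codimGE_complex_submodule (L : Submodule ℂ (Cn n)) {e : ℕ}
    (h : Module.finrank ℂ L + e ≤ n) : CodimGE n (2 * e) (L : Set (Cn n)) := by
  refine codimGE_submodule (L.restrictScalars ℝ) ?_
  have : Module.finrank ℝ (L.restrictScalars ℝ) = 2 * Module.finrank ℂ L :=
    finrank_real_of_complex (E := L)
  omega

/-- Two points of a convex open set off a set of codimension two can be joined by two segments
missing the set; in particular the complement is connected. -/
lemma CodimGE.isPreconnected_diff {D : Set (Cn n)} (hD : IsOpen D) (hDc : Convex ℝ D)
    (hA : CodimGE n 2 A) : IsPreconnected (D \ A) := by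
  apply isPreconnected_of_forall_pair
  rintro x ⟨hx, hxA⟩ y ⟨hy, hyA⟩
  have hbad := ((hA.cone (d := 1) x).union (hA.cone (d := 1) y)).dense_compl le_rfl
  obtain ⟨b, hb, hbD⟩ := hbad.exists_mem_open hD ⟨x, hx⟩
  have key : ∀ u ∈ D, u ∉ A → b ∉ {w | ∃ s : ℝ, ∃ a ∈ A, w = u + s • (a - u)} →
      segment ℝ u b ⊆ D \ A := by
    intro u hu huA hub a ha
    refine ⟨hDc.segment_subset hu hbD ha, fun haA => hub ?_⟩
    rw [segment_eq_image'] at ha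
    obtain ⟨t, -, rfl⟩ := ha
    have ht : t ≠ 0 := by
      rintro rfl
      simp at haA
      exact huA haA
    exact ⟨t⁻¹, _, haA, by simp [smul_smul, inv_mul_cancel₀ ht]⟩
  simp only [mem_compl_iff, mem_union, not_or] at hb
  refine ⟨segment ℝ x b ∪ segment ℝ y b, union_subset (key x hx hxA hb.1) (key y hy hyA hb.2),
    Or.inl (left_mem_segment ℝ x b), Or.inr (left_mem_segment ℝ y b), ?_⟩
  exact IsPreconnected.union b (right_mem_segment ℝ x b) (right_mem_segment ℝ y b)
    (convex_segment x b).isPreconnected (convex_segment y b).isPreconnected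

end Thin

/-! ### Zero sets of holomorphic functions -/

section Zero
variable {n : ℕ}

lemma hasFDerivAt_line (z v : Cn n) (ζ : ℂ) : HasDerivAt (fun ζ : ℂ => z + ζ • v) v ζ := by
  simpa using ((hasDerivAt_id ζ).smul_const v).const_add z

/-- Identity theorem on a ball. -/
lemma eq_zero_on_ball_of_eventually {J : Cn n → ℂ} {z0 q : Cn n} {R : ℝ}
    (hJ : DifferentiableOn ℂ J (ball z0 R)) (hq : q ∈ ball z0 R) (h : ∀ᶠ z in 𝓝 q, J z = 0) :
    ∀ u ∈ ball z0 R, J u = 0 := by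
  intro u hu
  let L : ℂ → Cn n := fun ζ => q + ζ • (u - q)
  have hL : Differentiable ℂ L := fun ζ => (hasFDerivAt_line q (u - q) ζ).differentiableAt
  have hopen : IsOpen (L ⁻¹' ball z0 R) := isOpen_ball.preimage hL.continuous
  have hconv : Convex ℝ (L ⁻¹' ball z0 R) := by
    intro a ha b hb s t hs ht hst
    have : L (s • a + t • b) = s • L a + t • L b := by
      simp only [L, smul_add, add_smul, smul_assoc]
      have : q = s • q + t • q := by rw [← add_smul, hst, one_smul]
      nth_rewrite 1 [this]
      abel
    rw [mem_preimage, this]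
    exact convex_ball z0 R ha hb hs ht hst
  have hd : DifferentiableOn ℂ (J ∘ L) (L ⁻¹' ball z0 R) :=
    hJ.comp hL.differentiableOn (fun _ h => h)
  have han := hd.analyticOnNhd hopen
  have h0 : (0 : ℂ) ∈ L ⁻¹' ball z0 R := by simpa [L] using hq
  have h1 : (1 : ℂ) ∈ L ⁻¹' ball z0 R := by simpa [L] using hu
  have hev : J ∘ L =ᶠ[𝓝 0] 0 := by
    have : Tendsto L (𝓝 0) (𝓝 q) := by
      simpa [L] using hL.continuous.tendsto 0
    exact this.eventually h
  have := han.eqOn_zero_of_preconnected_of_eventuallyEq_zero hconv.isPreconnected h0 hev h1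
  simpa [L] using this

/-- Identity theorem: a holomorphic function on a connected open set which does not vanish
identically does not vanish identically near any point. -/
lemma not_eventually_zero {J : Cn n → ℂ} {W : Set (Cn n)} (hW : IsOpen W) (hWc : IsPreconnected W)
    (hJ : DifferentiableOn ℂ J W) {z1 : Cn n} (hz1 : z1 ∈ W) (h1 : J z1 ≠ 0) {z : Cn n}
    (hz : z ∈ W) : ¬ ∀ᶠ y in 𝓝 z, J y = 0 := by
  intro hev
  let S : Set (Cn n) := {y | ∀ᶠ x in 𝓝 y, J x = 0}
  have hS : IsOpen S := isOpen_setOfPred_eventually_nhds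
  have hsub : W ⊆ S := by
    refine hWc.subset_of_closure_inter_subset hS ⟨z, hz, hev⟩ ?_
    rintro y ⟨hy, hyW⟩
    obtain ⟨R, hR, hball⟩ := Metric.isOpen_iff.1 hW y hyW
    obtain ⟨q, hqS, hq⟩ := Metric.mem_closure_iff.1 hy R hR
    have := eq_zero_on_ball_of_eventually (hJ.mono hball) (by rwa [mem_ball, dist_comm]) hqS
    exact Filter.eventually_of_mem (ball_mem_nhds y hR) this
  exact h1 (hsub hz1).self_of_nhds

/-- The zero set of a submersive holomorphic function is locally of real codimension two. -/
lemma codimGE_zero_of_submersion {f : Cn n → ℂ} {W : Set (Cn n)} (hW : IsOpen W)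
    (hf : DifferentiableOn ℂ f W) {z0 : Cn n} (hz0 : z0 ∈ W) (hD : fderiv ℂ f z0 ≠ 0) :
    ∃ u ∈ 𝓝 z0, CodimGE n 2 (u ∩ {z | f z = 0}) := by
  obtain ⟨v, hv⟩ : ∃ v, fderiv ℂ f z0 v = 1 := by
    obtain ⟨v, hv⟩ : ∃ v, fderiv ℂ f z0 v ≠ 0 := by
      by_contra! h
      exact hD (by ext v; simpa using h v)
    exact ⟨(fderiv ℂ f z0 v)⁻¹ • v, by simp [hv]⟩
  set ℓ := fderiv ℂ f z0
  let Θ : Cn n → Cn n := fun z => z + (f z - ℓ z) • v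
  have hstr : HasStrictFDerivAt f ℓ z0 := hasStrictFDerivAt_of_holo hW hf hz0
  have hΘ : HasStrictFDerivAt Θ ((ContinuousLinearEquiv.refl ℂ (Cn n) : Cn n ≃L[ℂ] Cn n) :
      Cn n →L[ℂ] Cn n) z0 := by
    have h1 := (hasStrictFDerivAt_id z0).add ((hstr.sub ℓ.hasStrictFDerivAt).smul_const v)
    refine h1.congr_fderiv ?_
    ext w
    simp
  have hleft := hΘ.eventually_left_inverse
  have hinv := hΘ.to_localInverse
  obtain ⟨c, u, hu, hL⟩ := hinv.exists_lipschitzOnWith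
  have hker : CodimGE n 2 ((LinearMap.ker (ℓ : Cn n →ₗ[ℂ] ℂ) : Submodule ℂ (Cn n)) : Set (Cn n)) := by
    refine codimGE_complex_submodule (e := 1) _ ?_
    have h2 := LinearMap.finrank_range_add_finrank_ker (ℓ : Cn n →ₗ[ℂ] ℂ)
    have h3 : LinearMap.range (ℓ : Cn n →ₗ[ℂ] ℂ) = ⊤ := by
      rw [LinearMap.range_eq_top]
      intro c
      exact ⟨c • v, by simp [hv]⟩
    rw [h3] at h2
    simp at h2
    omega
  have hu' : Θ ⁻¹' u ∈ 𝓝 z0 := hΘ.continuousAt.preimage_mem_nhds hu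
  refine ⟨_, inter_mem hu' hleft, ?_⟩
  refine ((hker.mono (inter_subset_left (t := u))).image_lipschitz
    (hL.mono inter_subset_right)).mono ?_
  rintro z ⟨⟨hzu, hz⟩, hfz⟩
  refine ⟨Θ z, ⟨?_, hzu⟩, hz⟩
  simp only [mem_ofPred_eq] at hfz
  simp [Θ, hfz, hv]

/-- Iterated directional derivative. -/
noncomputable def dirDeriv {n : ℕ} (v : Cn n) (f : Cn n → ℂ) : ℕ → Cn n → ℂ
  | 0 => f
  | m + 1 => fun z => fderiv ℂ (dirDeriv v f m) z v

lemma dirDeriv_differentiableOn {f : Cn n → ℂ} {W : Set (Cn n)} (hW : IsOpen W)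
    (hf : DifferentiableOn ℂ f W) (v : Cn n) (m : ℕ) : DifferentiableOn ℂ (dirDeriv v f m) W := by
  induction m with
  | zero => exact hf
  | succ m ih => exact differentiableOn_fderiv_apply hW ih v

lemma iteratedDeriv_line {f : Cn n → ℂ} {W : Set (Cn n)} (hW : IsOpen W)
    (hf : DifferentiableOn ℂ f W) (z v : Cn n) (m : ℕ) : ∀ ζ : ℂ, z + ζ • v ∈ W →
    iteratedDeriv m (fun ζ : ℂ => f (z + ζ • v)) ζ = dirDeriv v f m (z + ζ • v) := by
  induction m with
  | zero => intro ζ _; simp [dirDeriv]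
  | succ m ih =>
    intro ζ hζ
    rw [iteratedDeriv_succ]
    have hcont : Continuous (fun ζ : ℂ => z + ζ • v) := by fun_prop
    have hev : iteratedDeriv m (fun ζ : ℂ => f (z + ζ • v)) =ᶠ[𝓝 ζ]
        fun ζ => dirDeriv v f m (z + ζ • v) :=
      Filter.eventually_of_mem ((hW.preimage hcont).mem_nhds hζ) ih
    rw [hev.deriv_eq]
    have hd := ((dirDeriv_differentiableOn hW hf v m).differentiableAt (hW.mem_nhds hζ)).hasFDerivAt
    exact (hd.comp_hasDerivAt ζ (hasFDerivAt_line z v ζ)).deriv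

/-- The zero set of a nonzero holomorphic function on a connected open set has real codimension
two: each zero is a zero of some iterated directional derivative with nonzero differential, and
countably many directions suffice. -/
lemma codimGE_zeroSet {J : Cn n → ℂ} {W : Set (Cn n)} (hW : IsOpen W) (hWc : IsPreconnected W)
    (hJ : DifferentiableOn ℂ J W) {z1 : Cn n} (hz1 : z1 ∈ W) (h1 : J z1 ≠ 0) :
    CodimGE n 2 {z ∈ W | J z = 0} := by
  obtain ⟨Q, hQc, hQd⟩ := TopologicalSpace.exists_countable_dense (Cn n)
  have hmain : ∀ v ∈ Q, CodimGE n 2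
      (⋃ m, {z ∈ W | dirDeriv v J m z = 0 ∧ fderiv ℂ (dirDeriv v J m) z ≠ 0}) := by
    intro v _
    refine codimGE_iUnion fun m => codimGE_of_local ?_
    rintro z ⟨hz, hz0, hzd⟩
    obtain ⟨u, hu, hc⟩ := codimGE_zero_of_submersion hW (dirDeriv_differentiableOn hW hJ v m) hz hzd
    exact ⟨u, mem_nhdsWithin_of_mem_nhds hu, hc.mono fun x hx => ⟨hx.1, hx.2.2.1⟩⟩
  refine (codimGE_biUnion hQc hmain).mono ?_
  rintro z ⟨hz, hJz⟩
  obtain ⟨R, hR, hball⟩ := Metric.isOpen_iff.1 hW z hz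
  have hne := not_eventually_zero hW hWc hJ hz1 h1 hz
  have hfreq : ∃ᶠ y in 𝓝 z, J y ≠ 0 := not_eventually.1 hne
  obtain ⟨y, hy, hyb⟩ := (hfreq.and_eventually (ball_mem_nhds z (half_pos hR))).exists
  have hO : IsOpen {v : Cn n | z + v ∈ ball z (R/2) ∩ {y | J y ≠ 0}} := by
    have hO1 : IsOpen (ball z (R/2) ∩ {y | J y ≠ 0}) := by
      have : ContinuousOn J (ball z (R/2)) :=
        hJ.continuousOn.mono ((ball_subset_ball (by linarith)).trans hball)
      exact this.isOpen_inter_preimage isOpen_ball isOpen_ne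
    exact hO1.preimage (by fun_prop)
  obtain ⟨v, ⟨hvb, hv⟩, hvQ⟩ := hQd.inter_open_nonempty _ hO ⟨y - z, by
    change z + (y - z) ∈ ball z (R/2) ∩ {y | J y ≠ 0}
    rw [add_sub_cancel]; exact ⟨hyb, hy⟩⟩
  refine mem_iUnion₂.2 ⟨v, hvQ, ?_⟩
  by_contra hcon
  simp only [mem_iUnion, mem_ofPred_eq, not_exists, not_and, not_not] at hcon
  have hall : ∀ m, dirDeriv v J m z = 0 := by
    intro m
    induction m with
    | zero => exact hJz
    | succ m ih => simp [dirDeriv, hcon m hz ih]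
  apply hv
  have hvn : ‖v‖ < R / 2 := by simpa using hvb
  have hmaps : ∀ ζ ∈ ball (0 : ℂ) 2, z + ζ • v ∈ W := by
    intro ζ hζ
    apply hball
    rw [mem_ball_zero_iff] at hζ
    rw [mem_ball, dist_eq_norm, add_sub_cancel_left, norm_smul]
    nlinarith [norm_nonneg v, norm_nonneg ζ]
  have ht := Complex.taylorSeries_eq_on_ball' (c := 0) (r := 2) (z := 1) (by simp)
    (f := fun ζ : ℂ => J (z + ζ • v)) (hJ.comp
      (fun ζ _ => (hasFDerivAt_line z v ζ).differentiableAt.differentiableWithinAt) hmaps)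
  have h0 : ∀ m, iteratedDeriv m (fun ζ : ℂ => J (z + ζ • v)) 0 = 0 := by
    intro m
    rw [iteratedDeriv_line hW hJ z v m 0 (by simpa using hz)]
    simpa using hall m
  simp only [h0] at ht
  simpa using ht.symm

end Zero

/-! ### Existence of zeros -/

section Hurwitz
variable {n : ℕ}

/-- At a point where its Jacobian is nonzero, a holomorphic map has an invertible strict derivative. -/
lemma exists_equiv_of_cDet_ne_zero {h : Cn n → Cn n} {W : Set (Cn n)} (hW : IsOpen W)
    (hd : DifferentiableOn ℂ h W) {z : Cn n} (hz : z ∈ W) (hJ : cDet n h z ≠ 0) :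
    ∃ L : Cn n ≃L[ℂ] Cn n, HasStrictFDerivAt h (L : Cn n →L[ℂ] Cn n) z := by
  have hu : IsUnit (LinearMap.det ((fderiv ℂ h z : Cn n →L[ℂ] Cn n) : Cn n →ₗ[ℂ] Cn n)) :=
    isUnit_iff_ne_zero.2 hJ
  let e := (LinearMap.equivOfDetNeZero _ hJ).toContinuousLinearEquiv
  refine ⟨e, ?_⟩
  have : (e : Cn n →L[ℂ] Cn n) = fderiv ℂ h z := by ext v; simp [e, LinearMap.equivOfDetNeZero]
  rw [this]
  exact hasStrictFDerivAt_of_holo hW hd hz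

/-- Local surjectivity at points with nonzero Jacobian. -/
lemma image_mem_nhds_of_cDet_ne_zero {h : Cn n → Cn n} {W : Set (Cn n)} (hW : IsOpen W)
    (hd : DifferentiableOn ℂ h W) {z : Cn n} (hz : z ∈ W) (hJ : cDet n h z ≠ 0) {u : Set (Cn n)}
    (hu : u ∈ 𝓝 z) : h '' u ∈ 𝓝 (h z) := by
  obtain ⟨L, hL⟩ := exists_equiv_of_cDet_ne_zero hW hd hz hJ
  rw [← hL.map_nhds_eq_of_equiv]
  exact image_mem_map hu

lemma exists_zero_of_cDet_ne_zero {h : Cn n → Cn n} {W : Set (Cn n)} (hW : IsOpen W)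
    (hb : Bornology.IsBounded W) (hc : ContinuousOn h (closure W)) (hd : DifferentiableOn ℂ h W)
    {r : ℝ} (hr : ∀ z ∈ frontier W, r ≤ ‖h z‖) {z0 : Cn n} (hz0 : z0 ∈ W) (h0 : ‖h z0‖ < r)
    (hJ : cDet n h z0 ≠ 0) : ∃ z ∈ W, h z = 0 := by
  set W0 := connectedComponentIn W z0
  have hW0 : IsOpen W0 := hW.connectedComponentIn
  have hW0W : W0 ⊆ W := connectedComponentIn_subset W z0
  have hz00 : z0 ∈ W0 := mem_connectedComponentIn hz0
  have hW0c : IsPreconnected W0 := isPreconnected_connectedComponentIn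
  -- points of the closure of the component lie in the component or on the frontier of `W`
  have hcl : ∀ z ∈ closure W0, z ∈ W0 ∨ r ≤ ‖h z‖ := by
    intro z hz
    by_cases hzW : z ∈ W
    · left
      have : IsPreconnected (insert z W0) := hW0c.subset_closure (subset_insert _ _)
        (insert_subset hz subset_closure)
      exact this.subset_connectedComponentIn (mem_insert_of_mem _ hz00)
        (insert_subset hzW hW0W) (mem_insert _ _)
    · right
      refine hr z ?_
      rw [frontier, Set.mem_sdiff, hW.interior_eq]
      exact ⟨closure_mono hW0W hz, hzW⟩
  have hZ : CodimGE n 2 {z ∈ W0 | cDet n h z = 0} :=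
    codimGE_zeroSet hW0 hW0c (differentiableOn_cDet hW0 (hd.mono hW0W)) hz00 hJ
  set K := h '' {z ∈ W0 | cDet n h z = 0}
  have hK : CodimGE n 2 K := hZ.image_holo hW0 (hd.mono hW0W) (fun z hz => hz.1)
  have hcomp : IsCompact (h '' closure W0) :=
    ((hb.subset hW0W).isCompact_closure).image_of_continuousOn (hc.mono (closure_mono hW0W))
  have hconn : IsPreconnected (ball (0 : Cn n) r \ K) :=
    hK.isPreconnected_diff isOpen_ball (convex_ball _ _)
  have hdense := hK.dense_compl (by norm_num)
  have hnb : h '' W0 ∈ 𝓝 (h z0) :=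
    image_mem_nhds_of_cDet_ne_zero hW0 (hd.mono hW0W) hz00 hJ (hW0.mem_nhds hz00)
  obtain ⟨w1, hw1K, hw1⟩ := hdense.exists_mem_open
    (isOpen_interior.inter (isOpen_ball (x := (0 : Cn n)) (ε := r)))
    ⟨h z0, mem_interior_iff_mem_nhds.2 hnb, by simpa using h0⟩
  have hdisj : ∀ w ∈ ball (0 : Cn n) r, w ∈ h '' closure W0 → w ∈ h '' W0 := by
    rintro _ hw ⟨z, hz, rfl⟩
    rcases hcl z hz with h' | h'
    · exact ⟨z, h', rfl⟩
    · rw [mem_ball_zero_iff] at hw; linarith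
  have hsub : ball (0 : Cn n) r \ K ⊆ interior (h '' W0) := by
    refine hconn.subset_left_of_subset_union isOpen_interior hcomp.isClosed.isOpen_compl ?_ ?_
      ⟨w1, ⟨hw1.2, hw1K⟩, hw1.1⟩
    · rw [Set.disjoint_left]
      intro w hw hw'
      exact hw' (image_mono subset_closure (interior_subset hw))
    · rintro w ⟨hw, hwK⟩
      by_cases hwc : w ∈ h '' closure W0
      · left
        obtain ⟨z, hz, rfl⟩ := hdisj w hw hwc
        refine mem_interior_iff_mem_nhds.2
          (image_mem_nhds_of_cDet_ne_zero hW0 (hd.mono hW0W) hz ?_ (hW0.mem_nhds hz))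
        intro hJz
        exact hwK ⟨z, ⟨hz, hJz⟩, rfl⟩
      · right; exact hwc
  have hr0 : 0 < r := (norm_nonneg _).trans_lt h0
  have h0mem : (0 : Cn n) ∈ closure (h '' closure W0) := by
    have h1 : (0 : Cn n) ∈ closure (ball (0 : Cn n) r ∩ Kᶜ) :=
      hdense.open_subset_closure_inter isOpen_ball (mem_ball_self hr0)
    refine closure_mono ?_ h1
    intro w hw
    exact image_mono subset_closure (interior_subset (hsub ⟨hw.1, hw.2⟩))
  rw [hcomp.isClosed.closure_eq] at h0mem
  obtain ⟨z, hz, hz'⟩ := hdisj 0 (mem_ball_self hr0) h0mem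
  exact ⟨z, hW0W hz, hz'⟩

/-- A Rouché-type statement: a holomorphic map `h` on a bounded open set which is smaller at some
interior point than on the whole frontier has a zero. -/
lemma exists_zero_of_norm_lt_frontier {h : Cn n → Cn n} {W : Set (Cn n)} (hW : IsOpen W)
    (hb : Bornology.IsBounded W) (hc : ContinuousOn h (closure W)) (hd : DifferentiableOn ℂ h W)
    {r : ℝ} (hr : ∀ z ∈ frontier W, r ≤ ‖h z‖) {z0 : Cn n} (hz0 : z0 ∈ W) (h0 : ‖h z0‖ < r) :
    ∃ z ∈ W, h z = 0 := by
  obtain ⟨M, hM⟩ := hb.subset_ball z0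
  have hMpos : 0 < M := by simpa using hM hz0
  -- the perturbations `h + ε (z - z0)` have nonzero Jacobian at `z0` for all but finitely many `ε`
  have hcof : ∀ᶠ ε : ℂ in 𝓝[≠] 0, LinearMap.det
      (((fderiv ℂ h z0 : Cn n →L[ℂ] Cn n) : Cn n →ₗ[ℂ] Cn n) + ε • LinearMap.id) ≠ 0 := by
    set T : Cn n →ₗ[ℂ] Cn n := ((fderiv ℂ h z0 : Cn n →L[ℂ] Cn n) : Cn n →ₗ[ℂ] Cn n)
    have hfin : {μ : ℂ | Module.End.HasEigenvalue T μ}.Finite := Module.End.finite_hasEigenvalue T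
    have hfin' : {ε : ℂ | Module.End.HasEigenvalue T (-ε)}.Finite := by
      refine (hfin.image (fun x => -x)).subset ?_
      intro ε hε
      exact ⟨-ε, hε, by simp⟩
    have hmem : {ε : ℂ | Module.End.HasEigenvalue T (-ε)}ᶜ ∪ {0} ∈ 𝓝 (0 : ℂ) := by
      have := (hfin'.subset (sdiff_subset (t := {0}))).isClosed.isOpen_compl.mem_nhds
        (show (0 : ℂ) ∉ {ε : ℂ | Module.End.HasEigenvalue T (-ε)} \ {0} by simp)
      refine mem_of_superset this ?_
      intro ε hε
      by_cases h : ε = 0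
      · right; exact h
      · left; intro h'; exact hε ⟨h', h⟩
    rw [eventually_nhdsWithin_iff]
    filter_upwards [hmem] with ε hε hne hdet
    rcases hε with hε | hε
    · apply hε
      rw [mem_ofPred_eq, Module.End.hasEigenvalue_iff, Module.End.eigenspace_def]
      have h1 : T - (-ε) • (1 : Module.End ℂ (Cn n)) = T + ε • LinearMap.id := by
        ext v; simp
      rw [h1]
      intro hker
      have := LinearMap.bot_lt_ker_of_det_eq_zero hdet
      exact this.ne' hker
    · exact hne hε
  obtain ⟨ρ, hρ0, hρr⟩ := exists_between h0
  have hsmall : ∀ᶠ ε : ℂ in 𝓝[≠] 0, ‖ε‖ * M < r - ρ := by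
    have : Tendsto (fun ε : ℂ => ‖ε‖ * M) (𝓝[≠] 0) (𝓝 (‖(0 : ℂ)‖ * M)) :=
      (Continuous.tendsto (by fun_prop) 0).mono_left nhdsWithin_le_nhds
    exact this.eventually_lt_const (by simpa using hρr)
  have hclM : ∀ z ∈ closure W, ‖z - z0‖ ≤ M := by
    intro z hz
    rw [← dist_eq_norm]
    exact closure_ball_subset_closedBall (closure_mono hM hz)
  have hzero : ∀ᶠ ε : ℂ in 𝓝[≠] 0, ∃ z ∈ W, h z + ε • (z - z0) = 0 := by
    filter_upwards [hcof, hsmall] with ε hε1 hε2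
    have hda : DifferentiableAt ℂ h z0 := hd.differentiableAt (hW.mem_nhds hz0)
    refine exists_zero_of_cDet_ne_zero (h := fun z => h z + ε • (z - z0)) (r := ρ) hW hb ?_ ?_ ?_
      hz0 (by simpa using hρ0) ?_
    · exact hc.add (by fun_prop)
    · exact hd.add (by fun_prop)
    · intro z hz
      have h1 := hr z hz
      have h2 : ‖ε • (z - z0)‖ ≤ ‖ε‖ * M := by
        rw [norm_smul]; gcongr; exact hclM z (frontier_subset_closure hz)
      have h3 := norm_sub_le (h z + ε • (z - z0)) (ε • (z - z0))
      rw [add_sub_cancel_right] at h3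
      linarith
    · have hf : HasFDerivAt (fun z => h z + ε • (z - z0))
          (fderiv ℂ h z0 + ε • ContinuousLinearMap.id ℂ (Cn n)) z0 :=
        hda.hasFDerivAt.add (((hasFDerivAt_id z0).sub_const z0).const_smul ε)
      rw [cDet, hf.fderiv]
      simpa using hε1
  have hcomp : IsCompact (h '' closure W) :=
    hb.isCompact_closure.image_of_continuousOn hc
  have h0mem : (0 : Cn n) ∈ closure (h '' closure W) := by
    rw [Metric.mem_closure_iff]
    intro δ hδ
    have hsm : ∀ᶠ ε : ℂ in 𝓝[≠] 0, ‖ε‖ * M < δ := by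
      have : Tendsto (fun ε : ℂ => ‖ε‖ * M) (𝓝[≠] 0) (𝓝 (‖(0 : ℂ)‖ * M)) :=
        (Continuous.tendsto (by fun_prop) 0).mono_left nhdsWithin_le_nhds
      exact this.eventually_lt_const (by simpa using hδ)
    obtain ⟨ε, ⟨z, hz, hz'⟩, hε⟩ := (hzero.and hsm).exists
    refine ⟨h z, ⟨z, subset_closure hz, rfl⟩, ?_⟩
    have : h z = -(ε • (z - z0)) := eq_neg_of_add_eq_zero_left hz'
    rw [this, dist_eq_norm, zero_sub, neg_neg, norm_smul]
    refine lt_of_le_of_lt ?_ hε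
    gcongr
    exact hclM z (subset_closure hz)
  rw [hcomp.isClosed.closure_eq] at h0mem
  obtain ⟨z, hz, hz'⟩ := h0mem
  refine ⟨z, ?_, hz'⟩
  by_contra hzW
  have := hr z (by rw [frontier, Set.mem_sdiff, hW.interior_eq]; exact ⟨hz, hzW⟩)
  rw [hz', norm_zero] at this
  exact absurd ((norm_nonneg _).trans_lt h0) (not_lt.2 this)

end Hurwitz

section Preimage
variable {n d : ℕ}

/-- A thin set pulls back to a thin set near a point with nonzero Jacobian. -/
lemma CodimGE.preimage_local {K : Set (Cn n)} (hK : CodimGE n d K) {h : Cn n → Cn n}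
    {W : Set (Cn n)} (hW : IsOpen W) (hd : DifferentiableOn ℂ h W) {z : Cn n} (hz : z ∈ W)
    (hJ : cDet n h z ≠ 0) : ∃ u ∈ 𝓝 z, CodimGE n d (u ∩ h ⁻¹' K) := by
  obtain ⟨L, hL⟩ := exists_equiv_of_cDet_ne_zero hW hd hz hJ
  have hleft := hL.eventually_left_inverse
  obtain ⟨c, u, hu, hLip⟩ := hL.to_localInverse.exists_lipschitzOnWith
  refine ⟨_, inter_mem (hL.continuousAt.preimage_mem_nhds hu) hleft, ?_⟩
  refine ((hK.mono (inter_subset_left (t := u))).image_lipschitz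
    (hLip.mono inter_subset_right)).mono ?_
  rintro x ⟨⟨hxu, hx⟩, hxK⟩
  exact ⟨h x, ⟨hxK, hxu⟩, hx⟩

end Preimage

/-! ### The pseudoellipsoid -/

/-- The map `z ↦ (z_j ^ q_j)_j`; it is `φ^(p)` for suitable exponents. -/
noncomputable def powMap {n : ℕ} (q : Fin n → ℕ) (z : Cn n) : Cn n :=
  WithLp.toLp 2 (fun j => z j ^ q j)

/-- The pseudoellipsoid as the preimage of the unit ball under `powMap`. -/
def powDom {n : ℕ} (q : Fin n → ℕ) : Set (Cn n) := {z | ‖powMap q z‖ < 1}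

lemma phiMap_eq_powMap (n k : ℕ) (hk : k ≤ n) (p : Fin k → ℕ) (hp : ∀ i, 2 ≤ p i) :
    ∃ q : Fin n → ℕ, (∀ j, 1 ≤ q j) ∧ phiMap n k hk p = powMap q ∧
      pseudoEllipsoid n k hk p = powDom q := by
  let q : Fin n → ℕ := fun j => if h : (j : ℕ) < n - k then 1
    else p ⟨(j : ℕ) - (n - k), by have := j.isLt; omega⟩
  refine ⟨q, ?_, ?_, ?_⟩
  · intro j
    by_cases h : (j : ℕ) < n - k
    · simp [q, h]
    · simp only [q, h, dite_false]
      exact (by norm_num : 1 ≤ 2).trans (hp _)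
  · funext z
    ext j
    by_cases h : (j : ℕ) < n - k <;> simp [phiMap, powMap, q, h]
  · have e : (n - k) + k = n := Nat.sub_add_cancel hk
    ext z
    have hsum : ∑ j : Fin n, ‖z j ^ q j‖ ^ 2 =
        (∑ j : Fin (n - k), ‖z (Fin.castLE (Nat.sub_le n k) j)‖ ^ 2)
      + ∑ i : Fin k, ‖z ⟨n - k + (i : ℕ), by have := i.isLt; omega⟩‖ ^ (2 * p i) := by
      rw [← (finCongr e).sum_comp, Fin.sum_univ_add]
      congr 1
      · refine Finset.sum_congr rfl fun j _ => ?_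
        have h1 : q (finCongr e (Fin.castAdd k j)) = 1 := by simp [q]
        rw [h1, pow_one]
        rfl
      · refine Finset.sum_congr rfl fun i _ => ?_
        have h1 : q (finCongr e (Fin.natAdd (n - k) i)) = p i := by simp [q]
        rw [h1, norm_pow, ← pow_mul, mul_comm]
        rfl
    have h2 : ‖powMap q z‖ ^ 2 = ∑ j : Fin n, ‖z j ^ q j‖ ^ 2 := by
      rw [EuclideanSpace.norm_sq_eq]; rfl
    have h3 : ‖powMap q z‖ < 1 ↔ ‖powMap q z‖ ^ 2 < 1 := by
      rw [sq_lt_one_iff₀ (norm_nonneg _)]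
    change _ < (1 : ℝ) ↔ ‖powMap q z‖ < 1
    rw [h3, h2, hsum]

section Pow
variable {n d : ℕ} {q : Fin n → ℕ}

@[simp] lemma powMap_apply (q : Fin n → ℕ) (z : Cn n) (j : Fin n) :
    powMap q z j = z j ^ q j := rfl

lemma hasFDerivAt_powMap (q : Fin n → ℕ) (z : Cn n) :
    ∃ L : Cn n →L[ℂ] Cn n, HasFDerivAt (powMap q) L z ∧
      ∀ v j, L v j = q j * z j ^ (q j - 1) * v j := by
  let L' : Cn n →L[ℂ] (Fin n → ℂ) := ContinuousLinearMap.pi fun j =>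
    ((q j : ℂ) * z j ^ (q j - 1)) • EuclideanSpace.proj (𝕜 := ℂ) j
  refine ⟨(PiLp.continuousLinearEquiv 2 ℂ (fun _ : Fin n => ℂ)).symm.toContinuousLinearMap.comp L',
    ?_, fun v j => by simp [L']⟩
  refine (PiLp.continuousLinearEquiv 2 ℂ
    (fun _ : Fin n => ℂ)).symm.toContinuousLinearMap.hasFDerivAt.comp z
    (f := fun z : Cn n => fun j => z j ^ q j) ?_
  rw [hasFDerivAt_pi]
  intro j
  have h1 : HasFDerivAt (fun z : Cn n => z j) (EuclideanSpace.proj (𝕜 := ℂ) j) z :=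
    (EuclideanSpace.proj (𝕜 := ℂ) j : Cn n →L[ℂ] ℂ).hasFDerivAt
  exact (hasDerivAt_pow (q j) (z j)).comp_hasFDerivAt z h1

lemma differentiable_powMap (q : Fin n → ℕ) : Differentiable ℂ (powMap q) := fun z => by
  obtain ⟨L, hL, -⟩ := hasFDerivAt_powMap q z
  exact hL.differentiableAt

lemma continuous_powMap (q : Fin n → ℕ) : Continuous (powMap q) :=
  (differentiable_powMap q).continuous

lemma isOpen_powDom (q : Fin n → ℕ) : IsOpen (powDom q) :=
  isOpen_lt (continuous_powMap q).norm continuous_const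

lemma cDet_ne_zero_of_injective {h : Cn n → Cn n} {z : Cn n}
    (hinj : ∀ v, fderiv ℂ h z v = 0 → v = 0) : cDet n h z ≠ 0 := by
  intro h0
  have := LinearMap.bot_lt_ker_of_det_eq_zero h0
  apply this.ne'
  rw [LinearMap.ker_eq_bot']
  exact hinj

lemma injective_of_cDet_ne_zero {h : Cn n → Cn n} {z : Cn n}
    (hJ : cDet n h z ≠ 0) : ∀ v, fderiv ℂ h z v = 0 → v = 0 := by
  intro v hv
  exact (LinearMap.equivOfDetNeZero _ hJ).map_eq_zero_iff.1 hv

/-- Thin sets pull back to thin sets under `powMap`: on the stratum where exactly the coordinates in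
`I` vanish, the map agrees with one which is locally invertible there. -/
lemma CodimGE.preimage_powMap (hq : ∀ j, 1 ≤ q j) {K : Set (Cn n)} (hK : CodimGE n d K) :
    CodimGE n d (powMap q ⁻¹' K) := by
  classical
  have hmain : ∀ I : Finset (Fin n), CodimGE n d (powMap q ⁻¹' K ∩ {z | ∀ j, z j = 0 ↔ j ∈ I}) := by
    intro I
    let qI : Fin n → ℕ := fun j => if j ∈ I then 1 else q j
    refine codimGE_of_local ?_
    rintro z ⟨hzK, hzI⟩
    have hJ : cDet n (powMap qI) z ≠ 0 := by
      obtain ⟨L, hL, hLv⟩ := hasFDerivAt_powMap qI z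
      refine cDet_ne_zero_of_injective fun v hv => ?_
      rw [hL.fderiv] at hv
      ext j
      have hj := hLv v j
      rw [hv] at hj
      have hne : ((qI j : ℂ) * z j ^ (qI j - 1)) ≠ 0 := by
        by_cases hjI : j ∈ I
        · simp [qI, hjI]
        · have : z j ≠ 0 := fun h => hjI ((hzI j).1 h)
          have h2 : (q j : ℂ) ≠ 0 := by have := hq j; exact_mod_cast (by omega : q j ≠ 0)
          simp [qI, hjI, this, h2]
      simpa using (mul_eq_zero.1 hj.symm).resolve_left hne
    obtain ⟨u, hu, hc⟩ := hK.preimage_local isOpen_univ (differentiable_powMap qI).differentiableOn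
      (mem_univ z) hJ
    refine ⟨u, mem_nhdsWithin_of_mem_nhds hu, hc.mono ?_⟩
    rintro x ⟨hxu, hxK, hxI⟩
    refine ⟨hxu, ?_⟩
    have : powMap qI x = powMap q x := by
      ext j
      by_cases hj : j ∈ I
      · have h0 : x j = 0 := (hxI j).2 hj
        have : q j ≠ 0 := by have := hq j; omega
        simp [h0, qI, hj, this]
      · simp [qI, hj]
    rw [mem_preimage, this]
    exact hxK
  refine (codimGE_iUnion hmain).mono ?_
  intro z hz
  exact mem_iUnion.2 ⟨Finset.univ.filter (fun j => z j = 0), hz, fun j => by simp⟩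

lemma norm_powMap_smul_le (hq : ∀ j, 1 ≤ q j) {t : ℝ} (h0 : 0 ≤ t) (h1 : t ≤ 1) (z : Cn n) :
    ‖powMap q (t • z)‖ ≤ t * ‖powMap q z‖ := by
  rw [← Real.norm_of_nonneg h0, ← norm_smul, Real.norm_of_nonneg h0]
  rw [EuclideanSpace.norm_eq, EuclideanSpace.norm_eq]
  refine Real.sqrt_le_sqrt (Finset.sum_le_sum fun j _ => ?_)
  have : ‖powMap q (t • z) j‖ ≤ ‖(t • powMap q z) j‖ := by
    simp only [powMap_apply, PiLp.smul_apply, norm_smul, norm_pow, Real.norm_of_nonneg h0, mul_pow]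
    gcongr
    exact pow_le_of_le_one h0 h1 (by have := hq j; omega)
  gcongr

lemma exists_norm_powMap_sub_le (q : Fin n → ℕ) : ∃ P : ℝ, 0 < P ∧ ∀ t : ℝ, 0 ≤ t → t ≤ 1 →
    ∀ z : Cn n, ‖powMap q z - powMap q (t • z)‖ ≤ P * (1 - t) * ‖powMap q z‖ := by
  refine ⟨∑ j, (q j : ℝ) + 1, by positivity, fun t h0 h1 z => ?_⟩
  set P : ℝ := ∑ j, (q j : ℝ) + 1
  have hc : 0 ≤ P * (1 - t) := mul_nonneg (by positivity) (by linarith)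
  rw [← Real.norm_of_nonneg hc, ← norm_smul]
  rw [EuclideanSpace.norm_eq, EuclideanSpace.norm_eq]
  refine Real.sqrt_le_sqrt (Finset.sum_le_sum fun j _ => ?_)
  have : ‖(powMap q z - powMap q (t • z)) j‖ ≤ ‖((P * (1 - t)) • powMap q z) j‖ := by
    have e1 : (powMap q z - powMap q (t • z)) j = ((1 - t ^ q j : ℝ) : ℂ) * z j ^ q j := by
      simp only [PiLp.sub_apply, powMap_apply, PiLp.smul_apply, Complex.real_smul, mul_pow]
      push_cast; ring
    rw [e1, PiLp.smul_apply, norm_mul, norm_smul, Real.norm_of_nonneg hc, Complex.norm_real,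
      Real.norm_of_nonneg (sub_nonneg.2 (pow_le_one₀ h0 h1)), powMap_apply]
    gcongr
    have hB := one_add_mul_le_pow (show (-2 : ℝ) ≤ -(1 - t) by linarith) (q j)
    have hP : (q j : ℝ) ≤ P := by
      have := Finset.single_le_sum (f := fun j => (q j : ℝ)) (fun i _ => by positivity)
        (Finset.mem_univ j)
      simp only [P]; linarith
    have : (1 + -(1 - t)) = t := by ring
    rw [this] at hB
    nlinarith
  gcongr

lemma smul_mem_powDom (hq : ∀ j, 1 ≤ q j) {t : ℝ} (h0 : 0 ≤ t) (h1 : t ≤ 1) {z : Cn n}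
    (hz : z ∈ powDom q) : t • z ∈ powDom q := by
  have := norm_powMap_smul_le hq h0 h1 z
  have hz' : ‖powMap q z‖ < 1 := hz
  change ‖powMap q (t • z)‖ < 1
  nlinarith [norm_nonneg (powMap q z)]

lemma zero_mem_powDom (hq : ∀ j, 1 ≤ q j) : (0 : Cn n) ∈ powDom q := by
  have : powMap q (0 : Cn n) = 0 := by
    ext j
    have : q j ≠ 0 := by have := hq j; omega
    simp [this]
  simp [powDom, this]

lemma isPreconnected_powDom (hq : ∀ j, 1 ≤ q j) : IsPreconnected (powDom q) := by
  have : StarConvex ℝ 0 (powDom q) := starConvex_zero_iff.2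
    (fun z hz t h0 h1 => smul_mem_powDom hq h0 h1 hz)
  exact (this.isPathConnected (zero_mem_powDom hq)).isConnected.isPreconnected

lemma norm_coord_le_one (hq : ∀ j, 1 ≤ q j) {z : Cn n} (hz : ‖powMap q z‖ ≤ 1) (j : Fin n) :
    ‖z j‖ ≤ 1 := by
  by_contra! h
  have h1 := PiLp.norm_apply_le (powMap q z) j
  rw [powMap_apply, norm_pow] at h1
  have : 1 < ‖z j‖ ^ q j := one_lt_pow₀ h (by have := hq j; omega)
  linarith

lemma isCompact_powMap_le (hq : ∀ j, 1 ≤ q j) {κ : ℝ} (hκ : κ ≤ 1) :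
    IsCompact {z : Cn n | ‖powMap q z‖ ≤ κ} := by
  have hcl : IsClosed {z : Cn n | ‖powMap q z‖ ≤ κ} :=
    isClosed_le (continuous_powMap q).norm continuous_const
  refine Metric.isCompact_of_isClosed_isBounded hcl ?_
  refine (Metric.isBounded_closedBall (x := (0 : Cn n)) (r := √n)).subset ?_
  intro z hz
  rw [mem_closedBall_zero_iff, EuclideanSpace.norm_eq]
  apply Real.sqrt_le_sqrt
  calc ∑ j, ‖z j‖ ^ 2 ≤ ∑ _j : Fin n, (1 : ℝ) := by
        refine Finset.sum_le_sum fun j _ => ?_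
        exact pow_le_one₀ (norm_nonneg _) (norm_coord_le_one hq (le_trans hz hκ) j)
    _ = n := by simp

lemma finite_powMap_fiber (hq : ∀ j, 1 ≤ q j) (y : Cn n) : {z | powMap q z = y}.Finite := by
  have h1 : ∀ j, {x : ℂ | x ^ q j = y j}.Finite := by
    intro j
    have hpos : 0 < q j := by have := hq j; omega
    refine (Polynomial.nthRoots (q j) (y j)).toFinset.finite_toSet.subset ?_
    intro x hx
    simpa [Polynomial.mem_nthRoots hpos] using hx
  have h2 := Set.Finite.pi' h1
  refine Set.Finite.of_injOn (f := fun z : Cn n => (fun j => z j)) (t := _) ?_ ?_ h2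
  · intro z hz j
    have hz' : powMap q z = y := hz
    have := congrArg (fun w : Cn n => w j) hz'
    simpa using this
  · intro a _ b _ hab
    ext j
    exact congrFun hab j

end Pow

/-! ### Holomorphic maps with finite fibres -/

section FiniteFibres
variable {n : ℕ} {E : Set (Cn n)} {F : Cn n → Cn n}

/-- A holomorphic map with finite fibres between equidimensional domains is open. -/
lemma image_mem_nhds_of_finite_fibre (hE : IsOpen E) (hF : DifferentiableOn ℂ F E) {z0 : Cn n}
    (hz0 : z0 ∈ E) (hfin : (E ∩ F ⁻¹' {F z0}).Finite) {u : Set (Cn n)} (hu : u ∈ 𝓝 z0) :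
    F '' u ∈ 𝓝 (F z0) := by
  have hnb : u ∩ E ∩ ((E ∩ F ⁻¹' {F z0}) \ {z0})ᶜ ∈ 𝓝 z0 := by
    refine inter_mem (inter_mem hu (hE.mem_nhds hz0)) ?_
    exact (hfin.subset sdiff_subset).isClosed.isOpen_compl.mem_nhds (by simp)
  obtain ⟨ε, hε, hsub⟩ := Metric.nhds_basis_closedBall.mem_iff.1 hnb
  have hne : ∀ z ∈ sphere z0 ε, F z - F z0 ≠ 0 := by
    intro z hz h0
    have h1 := hsub (sphere_subset_closedBall hz)
    refine h1.2 ⟨⟨h1.1.2, sub_eq_zero.1 h0⟩, ?_⟩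
    rintro rfl
    simp at hz
    exact hε.ne hz
  have hcl : closedBall z0 ε ⊆ E := fun z hz => (hsub hz).1.2
  have hcont : ContinuousOn F (closedBall z0 ε) := hF.continuousOn.mono hcl
  obtain ⟨r, hr, hrle⟩ : ∃ r > 0, ∀ z ∈ sphere z0 ε, r ≤ ‖F z - F z0‖ := by
    rcases (sphere z0 ε).eq_empty_or_nonempty with he | hne'
    · exact ⟨1, one_pos, by simp [he]⟩
    · obtain ⟨x, hx, hmin⟩ := (isCompact_sphere z0 ε).exists_isMinOn hne'
        (f := fun z => ‖F z - F z0‖)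
        (((hcont.mono sphere_subset_closedBall).sub continuousOn_const).norm)
      exact ⟨_, norm_pos_iff.2 (hne x hx), fun z hz => hmin hz⟩
  refine mem_of_superset (ball_mem_nhds (F z0) (half_pos hr)) ?_
  intro w hw
  rw [mem_ball, dist_eq_norm] at hw
  obtain ⟨z, hz, hz'⟩ := exists_zero_of_norm_lt_frontier (h := fun z => F z - w)
    (W := ball z0 ε) (r := r / 2) isOpen_ball isBounded_ball
    ((hcont.mono closure_ball_subset_closedBall).sub continuousOn_const)
    ((hF.mono (ball_subset_closedBall.trans hcl)).sub (differentiableOn_const _))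
    (fun z hz => by
      have h1 := hrle z (by rwa [frontier_ball z0 hε.ne'] at hz)
      have h2 : F z - w = (F z - F z0) - (w - F z0) := by abel
      rw [h2]
      have := norm_sub_norm_le (F z - F z0) (w - F z0)
      linarith)
    (mem_ball_self hε) (by rwa [norm_sub_rev])
  exact ⟨z, (hsub (ball_subset_closedBall hz)).1.1, sub_eq_zero.1 hz'⟩

/-- By Sard's theorem, a holomorphic map with finite fibres is generically a local
biholomorphism. -/
lemma exists_cDet_ne_zero (hE : IsOpen E) (hF : DifferentiableOn ℂ F E) (hne : E.Nonempty)
    (hfin : ∀ w, (E ∩ F ⁻¹' {w}).Finite) : ∃ z ∈ E, cDet n F z ≠ 0 := by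
  by_contra! hall
  obtain ⟨z0, hz0⟩ := hne
  have h1 : (volume : Measure (Cn n)) (F '' E) = 0 := by
    refine addHaar_image_eq_zero_of_det_fderivWithin_eq_zero (s := E) volume
      (f' := fun z => (fderiv ℂ F z).restrictScalars ℝ) ?_ ?_
    · intro z hz
      exact ((hF.differentiableAt (hE.mem_nhds hz)).hasFDerivAt.restrictScalars ℝ).hasFDerivWithinAt
    · intro z hz
      by_contra hdet
      refine cDet_ne_zero_of_injective (h := F) (z := z) ?_ (hall z hz)
      intro v hv
      exact (LinearMap.equivOfDetNeZero _ hdet).map_eq_zero_iff.1 hv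
  have h2 := image_mem_nhds_of_finite_fibre hE hF hz0 (hfin _) (hE.mem_nhds hz0)
  exact (Measure.measure_pos_of_mem_nhds volume h2).ne' h1

lemma codimGE_singular (hE : IsOpen E) (hEc : IsPreconnected E) (hF : DifferentiableOn ℂ F E)
    (hfin : ∀ w, (E ∩ F ⁻¹' {w}).Finite) : CodimGE n 2 {z ∈ E | cDet n F z = 0} := by
  rcases E.eq_empty_or_nonempty with rfl | hne
  · simpa using codimGE_empty
  obtain ⟨z1, hz1, h1⟩ := exists_cDet_ne_zero hE hF hne hfin
  exact codimGE_zeroSet hE hEc (differentiableOn_cDet hE hF) hz1 h1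

lemma CodimGE.preimage_finite {K : Set (Cn n)} (hK : CodimGE n 2 K) (hE : IsOpen E)
    (hEc : IsPreconnected E) (hF : DifferentiableOn ℂ F E)
    (hfin : ∀ w, (E ∩ F ⁻¹' {w}).Finite) : CodimGE n 2 (E ∩ F ⁻¹' K) := by
  have h1 : CodimGE n 2 {z ∈ E | cDet n F z ≠ 0 ∧ F z ∈ K} := by
    refine codimGE_of_local ?_
    rintro z ⟨hz, hJ, hzK⟩
    obtain ⟨u, hu, hc⟩ := hK.preimage_local hE hF hz hJ
    exact ⟨u, mem_nhdsWithin_of_mem_nhds hu, hc.mono fun x hx => ⟨hx.1, hx.2.2.2⟩⟩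
  refine ((codimGE_singular hE hEc hF hfin).union h1).mono ?_
  rintro z ⟨hz, hzK⟩
  by_cases hJ : cDet n F z = 0
  · exact Or.inl ⟨hz, hJ⟩
  · exact Or.inr ⟨hz, hJ, hzK⟩

end FiniteFibres

/-! ### Cocycles on the fibre product of a finite map and their trivialisations -/

section Purity
variable {n : ℕ} {E Es A Ω : Set (Cn n)} {F : Cn n → Cn n} {G : Type*} [Group G]
  {c : Cn n → Cn n → G}

/-- `F : E → Ω` is a surjective holomorphic map with finite fibres, `E` being a domain. -/
structure FiniteHolo (E Ω : Set (Cn n)) (F : Cn n → Cn n) : Prop where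
  isOpen_dom : IsOpen E
  preconn : IsPreconnected E
  holo : DifferentiableOn ℂ F E
  maps : MapsTo F E Ω
  surj : SurjOn F E Ω
  fin : ∀ w, (E ∩ F ⁻¹' {w}).Finite

/-- A locally constant `G`-valued cocycle `c` on the pairs of points of `Es` with the same
image under `F`, where `Es` is the complement in `E` of the preimage of a set `A` of real
codimension at least `4`. -/
structure FibreCocycle (E Es A : Set (Cn n)) (F : Cn n → Cn n) (c : Cn n → Cn n → G) :
    Prop where
  isOpen_reg : IsOpen Es
  sub : Es ⊆ E
  sat : ∀ x ∈ E, x ∈ Es ↔ F x ∉ A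
  codim : CodimGE n 4 A
  trans : ∀ x ∈ Es, ∀ x' ∈ Es, ∀ x'' ∈ Es, F x = F x' → F x' = F x'' →
    c x x'' = c x' x'' * c x x'
  locConst : ∀ x ∈ Es, ∀ x' ∈ Es, F x = F x' → ∃ u ∈ 𝓝 x, ∃ u' ∈ 𝓝 x',
    ∀ y ∈ u ∩ Es, ∀ y' ∈ u' ∩ Es, F y = F y' → c y y' = c x x'

/-- `s` trivialises the cocycle `c` over `T`. -/
structure IsTriv (E : Set (Cn n)) (F : Cn n → Cn n) (c : Cn n → Cn n → G)
    (T : Set (Cn n)) (s : Cn n → G) : Prop where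
  locConst : ∀ x ∈ E, F x ∈ T → ∀ᶠ y in 𝓝 x, s y = s x
  eq : ∀ x ∈ E, ∀ x' ∈ E, F x = F x' → F x ∈ T → s x' = c x x' * s x

lemma FiniteHolo.image_mem_nhds (h : FiniteHolo E Ω F) {z : Cn n} (hz : z ∈ E)
    {u : Set (Cn n)} (hu : u ∈ 𝓝 z) : F '' u ∈ 𝓝 (F z) :=
  image_mem_nhds_of_finite_fibre h.isOpen_dom h.holo hz (h.fin _) hu

lemma FiniteHolo.isOpen_image (h : FiniteHolo E Ω F) {u : Set (Cn n)} (hu : IsOpen u)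
    (huE : u ⊆ E) : IsOpen (F '' u) := by
  rw [isOpen_iff_mem_nhds]
  rintro _ ⟨z, hz, rfl⟩
  exact h.image_mem_nhds (huE hz) (hu.mem_nhds hz)

lemma FiniteHolo.continuousAt (h : FiniteHolo E Ω F) {z : Cn n} (hz : z ∈ E) :
    ContinuousAt F z := h.holo.continuousOn.continuousAt (h.isOpen_dom.mem_nhds hz)

lemma FiniteHolo.isOpen_preimage (h : FiniteHolo E Ω F) {U : Set (Cn n)} (hU : IsOpen U) :
    IsOpen (E ∩ F ⁻¹' U) := h.holo.continuousOn.isOpen_inter_preimage h.isOpen_dom hU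

lemma FibreCocycle.self (hc : FibreCocycle E Es A F c) {x : Cn n} (hx : x ∈ Es) :
    c x x = 1 := by
  have := hc.trans x hx x hx x hx rfl rfl
  simpa using this

lemma FiniteHolo.exists_triv (h : FiniteHolo E Ω F) (hc : FibreCocycle E Es A F c)
    {w : Cn n} (hw : w ∈ Ω) (hwA : w ∉ A) :
    ∃ T, IsOpen T ∧ w ∈ T ∧ T ⊆ Ω \ A ∧ ∃ s, IsTriv E F c T s := by
  classical
  obtain ⟨z0, hz0, rfl⟩ := h.surj hw
  have hz0s : z0 ∈ Es := (hc.sat z0 hz0).2 hwA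
  obtain ⟨u, hu, u', hu', hcc⟩ := hc.locConst z0 hz0s z0 hz0s rfl
  have hnb : u ∩ u' ∩ Es ∈ 𝓝 z0 :=
    inter_mem (inter_mem hu hu') (hc.isOpen_reg.mem_nhds hz0s)
  obtain ⟨D, hD, hDo, hzD⟩ := _root_.mem_nhds_iff.1 hnb
  have hDs : D ⊆ Es := fun x hx => (hD hx).2
  have h1 : ∀ y ∈ D, ∀ y' ∈ D, F y = F y' → c y y' = 1 := by
    intro y hy y' hy' hF
    rw [hcc y ⟨(hD hy).1.1, hDs hy⟩ y' ⟨(hD hy').1.2, hDs hy'⟩ hF, hc.self hz0s]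
  have hex : ∀ x, ∃ x0, F x ∈ F '' D → x0 ∈ D ∧ F x0 = F x := by
    intro x
    by_cases hx : F x ∈ F '' D
    · obtain ⟨x0, h0, h0'⟩ := hx
      exact ⟨x0, fun _ => ⟨h0, h0'⟩⟩
    · exact ⟨0, fun hh => absurd hh hx⟩
  choose σ hσ using hex
  have hTA : F '' D ⊆ Ω \ A := by
    rintro _ ⟨x, hx, rfl⟩
    exact ⟨h.maps (hc.sub (hDs hx)), (hc.sat x (hc.sub (hDs hx))).1 (hDs hx)⟩
  have key : ∀ x ∈ E, ∀ x0 ∈ D, F x0 = F x → c (σ x) x = c x0 x := by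
    intro x hx x0 hx0 hF
    have hxT : F x ∈ F '' D := ⟨x0, hx0, hF⟩
    have hxs : x ∈ Es := (hc.sat x hx).2 (hTA hxT).2
    obtain ⟨h2, h3⟩ := hσ x hxT
    rw [hc.trans (σ x) (hDs h2) x0 (hDs hx0) x hxs (h3.trans hF.symm) hF,
      h1 _ h2 _ hx0 (h3.trans hF.symm), mul_one]
  refine ⟨F '' D, h.isOpen_image hDo (hDs.trans hc.sub), ⟨z0, hzD, rfl⟩, hTA,
    fun x => c (σ x) x, ?_, ?_⟩
  · intro x hx hxT
    have hxs : x ∈ Es := (hc.sat x hx).2 (hTA hxT).2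
    obtain ⟨h2, h3⟩ := hσ x hxT
    obtain ⟨v, hv, v', hv', hcv⟩ := hc.locConst (σ x) (hDs h2) x hxs h3
    have h4 : F '' (v ∩ D) ∈ 𝓝 (F x) := by
      rw [← h3]
      exact h.image_mem_nhds (hc.sub (hDs h2)) (inter_mem hv (hDo.mem_nhds h2))
    filter_upwards [hv', hc.isOpen_reg.mem_nhds hxs, (h.continuousAt hx) h4] with y hy hys hyF
    obtain ⟨y0, ⟨hy0, hy0D⟩, hyy⟩ := hyF
    rw [key y (hc.sub hys) y0 hy0D hyy]
    exact hcv y0 ⟨hy0, hDs hy0D⟩ y ⟨hy, hys⟩ hyy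
  · intro x hx x' hx' hF hxT
    have hxs : x ∈ Es := (hc.sat x hx).2 (hTA hxT).2
    have hxs' : x' ∈ Es := (hc.sat x' hx').2 (hF ▸ (hTA hxT).2)
    obtain ⟨h2, h3⟩ := hσ x hxT
    change c (σ x') x' = c x x' * c (σ x) x
    rw [key x' hx' (σ x) h2 (h3.trans hF)]
    exact hc.trans _ (hDs h2) _ hxs _ hxs' h3 hF

lemma IsTriv.mul_right {T : Set (Cn n)} {s : Cn n → G} (hs : IsTriv E F c T s) (g : G) :
    IsTriv E F c T (fun x => s x * g) where
  locConst x hx hT := (hs.locConst x hx hT).mono fun y hy => by rw [hy]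
  eq x hx x' hx' hF hT := by rw [hs.eq x hx x' hx' hF hT, mul_assoc]

lemma IsTriv.mono {T T' : Set (Cn n)} {s : Cn n → G} (hs : IsTriv E F c T s) (hT : T' ⊆ T) :
    IsTriv E F c T' s where
  locConst x hx h := hs.locConst x hx (hT h)
  eq x hx x' hx' hF h := hs.eq x hx x' hx' hF (hT h)

lemma FiniteHolo.triv_unique (h : FiniteHolo E Ω F) {T : Set (Cn n)} (hTo : IsOpen T)
    (hTc : IsPreconnected T) (hTΩ : T ⊆ Ω) {s s' : Cn n → G} (hs : IsTriv E F c T s)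
    (hs' : IsTriv E F c T s') {x0 : Cn n} (hx0 : x0 ∈ E) (hx0T : F x0 ∈ T)
    (heq : s x0 = s' x0) : ∀ x ∈ E, F x ∈ T → s x = s' x := by
  have hgen : ∀ R : G → G → Prop, IsOpen (F '' {x ∈ E | F x ∈ T ∧ R (s x) (s' x)}) := by
    intro R
    refine h.isOpen_image ?_ fun x hx => hx.1
    rw [isOpen_iff_mem_nhds]
    rintro x ⟨hx, hxT, hR⟩
    filter_upwards [(h.isOpen_preimage hTo).mem_nhds ⟨hx, hxT⟩, hs.locConst x hx hxT,
      hs'.locConst x hx hxT] with y hy h1 h2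
    refine ⟨hy.1, hy.2, ?_⟩
    rw [h1, h2]; exact hR
  intro x hx hxT
  by_contra hne
  obtain ⟨w, hwT, ⟨y, hy, hyw⟩, ⟨y', hy', hyw'⟩⟩ := hTc _ _ (hgen fun a b => a = b)
    (hgen fun a b => a ≠ b)
    (by
      intro w hw
      obtain ⟨y, hy, rfl⟩ := h.surj (hTΩ hw)
      by_cases hh : s y = s' y
      · exact Or.inl ⟨y, ⟨hy, hw, hh⟩, rfl⟩
      · exact Or.inr ⟨y, ⟨hy, hw, hh⟩, rfl⟩)
    ⟨F x0, hx0T, x0, ⟨hx0, hx0T, heq⟩, rfl⟩ ⟨F x, hxT, x, ⟨hx, hxT, hne⟩, rfl⟩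
  refine hy'.2.2 ?_
  have hF : F y = F y' := hyw.trans hyw'.symm
  rw [hs.eq y hy.1 y' hy'.1 hF hy.2.1, hs'.eq y hy.1 y' hy'.1 hF hy.2.1, hy.2.2]

lemma FiniteHolo.triv_glue (h : FiniteHolo E Ω F) {ι : Type*} {T : ι → Set (Cn n)}
    {s : ι → Cn n → G} (hTo : ∀ i, IsOpen (T i)) (hs : ∀ i, IsTriv E F c (T i) (s i))
    (hag : ∀ i j, ∀ x ∈ E, F x ∈ T i → F x ∈ T j → s i x = s j x) :
    ∃ s', IsTriv E F c (⋃ i, T i) s' ∧ ∀ i, ∀ x ∈ E, F x ∈ T i → s' x = s i x := by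
  classical
  have hex : ∀ x, ∃ g : G, ∀ i, x ∈ E → F x ∈ T i → g = s i x := by
    intro x
    by_cases hx : x ∈ E ∧ ∃ i, F x ∈ T i
    · obtain ⟨hx, i, hi⟩ := hx
      exact ⟨s i x, fun j _ hj => hag i j x hx hi hj⟩
    · exact ⟨1, fun i h1 h2 => absurd ⟨h1, i, h2⟩ hx⟩
  choose s' hs' using hex
  refine ⟨s', ⟨?_, ?_⟩, fun i x hx hi => hs' x i hx hi⟩
  · intro x hx hxT
    obtain ⟨i, hi⟩ := mem_iUnion.1 hxT
    filter_upwards [(h.isOpen_preimage (hTo i)).mem_nhds ⟨hx, hi⟩,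
      (hs i).locConst x hx hi] with y hy h1
    rw [hs' y i hy.1 hy.2, hs' x i hx hi, h1]
  · intro x hx x' hx' hF hxT
    obtain ⟨i, hi⟩ := mem_iUnion.1 hxT
    rw [hs' x i hx hi, hs' x' i hx' (hF ▸ hi)]
    exact (hs i).eq x hx x' hx' hF hi

end Purity

/-! ### Trivialisations along rays -/

section Star
variable {n : ℕ} {E Es A Ω : Set (Cn n)} {F : Cn n → Cn n} {G : Type*} [Group G]
  {c : Cn n → Cn n → G}

/-- Along the rays issued from `b`, a trivialisation over a star-shaped open set `M` extends
across any ray which does not meet `A`. -/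
lemma FiniteHolo.star_extend (h : FiniteHolo E Ω F) (hc : FibreCocycle E Es A F c)
    {U M : Set (Cn n)} (hU : IsOpen U) (hUc : Convex ℝ U) (hUΩ : U ⊆ Ω)
    {b b0 : Cn n} (hb0 : b0 ∈ E) (hFb : F b0 = b)
    (hMo : IsOpen M) (hMU : M ⊆ U \ A) (hbM : b ∈ M) (hM : StarConvex ℝ b M)
    {s : Cn n → G} (hs : IsTriv E F c M s) (hs1 : s b0 = 1) {w : Cn n} (hwU : w ∈ U)
    (hwA : ∀ t ∈ Icc (0:ℝ) 1, b + t • (w - b) ∉ A) (hwM : w ∉ M) :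
    ∃ T, IsOpen T ∧ T ⊆ U \ A ∧ b ∈ T ∧ StarConvex ℝ b T ∧ ¬ T ⊆ M ∧
      ∃ s', IsTriv E F c T s' ∧ s' b0 = 1 := by
  classical
  have hbU : b ∈ U := (hMU hbM).1
  have hcγ : Continuous fun t : ℝ => b + t • (w - b) := by fun_prop
  -- first exit parameter of the segment from `b` to `w`
  obtain ⟨t1, ⟨ht1, ht1M⟩, hmin⟩ :
      ∃ t1, IsLeast {t | t ∈ Icc (0:ℝ) 1 ∧ b + t • (w - b) ∉ M} t1 := by
    refine IsCompact.exists_isLeast ?_ ⟨1, by simp, by simpa using hwM⟩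
    exact isCompact_Icc.inter_right (hMo.isClosed_compl.preimage hcγ)
  set w1 := b + t1 • (w - b) with hw1
  have hw1U : w1 ∈ U := hUc.add_smul_sub_mem hbU hwU ht1
  have hw1A : w1 ∉ A := hwA t1 ht1
  have ht1pos : 0 < t1 := by
    refine lt_of_le_of_ne ht1.1 fun h0 => ht1M ?_
    rw [hw1, ← h0]; simpa using hbM
  have hin : ∀ ρ ∈ Ico (0:ℝ) 1, b + ρ • (w1 - b) ∈ M := by
    intro ρ hρ
    by_contra hno
    have h1 : b + ρ • (w1 - b) = b + (ρ * t1) • (w - b) := by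
      rw [hw1, add_sub_cancel_left, smul_smul]
    rw [h1] at hno
    have h2 : ρ * t1 < t1 := by nlinarith [hρ.2]
    have h3 := hmin ⟨⟨mul_nonneg hρ.1 ht1.1, by linarith [ht1.2]⟩, hno⟩
    linarith
  obtain ⟨T0, hT0o, hwT0, hT0A, s0, hs0⟩ := h.exists_triv hc (hUΩ hw1U) hw1A
  obtain ⟨δ, hδ, hδsub⟩ := Metric.isOpen_iff.1 (hT0o.inter hU) w1 ⟨hwT0, hw1U⟩
  set D := ball w1 δ with hD
  have hDc : Convex ℝ D := convex_ball _ _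
  obtain ⟨ρ, hρ0, hρ1, hρD⟩ : ∃ ρ : ℝ, 0 < ρ ∧ ρ < 1 ∧ b + ρ • (w1 - b) ∈ D := by
    have hcont : Tendsto (fun ρ : ℝ => b + ρ • (w1 - b)) (𝓝[<] 1) (𝓝 (b + (1:ℝ) • (w1 - b))) :=
      tendsto_nhdsWithin_of_tendsto_nhds (Continuous.tendsto (by fun_prop) 1)
    rw [one_smul, add_sub_cancel] at hcont
    have h1 := hcont (isOpen_ball.mem_nhds (mem_ball_self hδ))
    have h2 : Ioo (0:ℝ) 1 ∈ 𝓝[<] (1:ℝ) := Ioo_mem_nhdsLT one_pos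
    obtain ⟨ρ, h3, h4⟩ := Filter.nonempty_of_mem (inter_mem (mem_map.1 h1) h2)
    exact ⟨ρ, h4.1, h4.2, h3⟩
  have hρM := hin ρ ⟨hρ0.le, hρ1⟩
  obtain ⟨ε, hε, hεsub⟩ : ∃ ε > 0, ∀ u ∈ ball w1 ε, u ∈ D ∧ b + ρ • (u - b) ∈ M ∩ D := by
    have hcu : Continuous fun u : Cn n => b + ρ • (u - b) := by fun_prop
    have h1 := (isOpen_ball.inter ((hMo.inter isOpen_ball).preimage hcu)).mem_nhds
      (show w1 ∈ D ∩ (fun u : Cn n => b + ρ • (u - b)) ⁻¹' (M ∩ D) from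
        ⟨mem_ball_self hδ, hρM, hρD⟩)
    obtain ⟨ε, hε, hh⟩ := Metric.mem_nhds_iff.1 h1
    exact ⟨ε, hε, fun u hu => hh hu⟩
  set T2 : Set (Cn n) := {v | ∃ r ∈ Ioc (0:ℝ) 1, ∃ u ∈ ball w1 ε, v = b + r • (u - b)} with hT2
  have hT2o : IsOpen T2 := by
    have : T2 = ⋃ r ∈ Ioc (0:ℝ) 1, (fun v : Cn n => b + r⁻¹ • (v - b)) ⁻¹' ball w1 ε := by
      ext v
      simp only [hT2, mem_ofPred_eq, mem_iUnion, mem_preimage, exists_prop]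
      refine exists_congr fun r => and_congr_right fun hr => ?_
      constructor
      · rintro ⟨u, hu, rfl⟩
        rwa [add_sub_cancel_left, smul_smul, inv_mul_cancel₀ hr.1.ne', one_smul, add_sub_cancel]
      · intro hv
        refine ⟨_, hv, ?_⟩
        rw [add_sub_cancel_left, smul_smul, mul_inv_cancel₀ hr.1.ne', one_smul, add_sub_cancel]
    rw [this]
    refine isOpen_biUnion fun r _ => isOpen_ball.preimage (by fun_prop)
  have hlow : ∀ u ∈ ball w1 ε, ∀ r : ℝ, 0 ≤ r → r ≤ ρ → b + r • (u - b) ∈ M := by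
    intro u hu r h0 hr
    have := hM.add_smul_sub_mem (hεsub u hu).2.1 (div_nonneg h0 hρ0.le)
      ((div_le_one hρ0).2 hr)
    rwa [add_sub_cancel_left, smul_smul, div_mul_cancel₀ _ hρ0.ne'] at this
  have hseg : ∀ u : Cn n, ∀ r r' θ : ℝ,
      (b + r • (u - b)) + θ • ((b + r' • (u - b)) - (b + r • (u - b)))
        = b + (r + θ * (r' - r)) • (u - b) := by
    intro u r r' θ; module
  have hhigh : ∀ u ∈ ball w1 ε, ∀ r, ρ ≤ r → r ≤ 1 → b + r • (u - b) ∈ D := by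
    intro u hu r h0 hr
    have h1ρ : 0 < 1 - ρ := by linarith
    have := hDc.add_smul_sub_mem (hεsub u hu).2.2 (hεsub u hu).1
      (t := (r - ρ) / (1 - ρ)) ⟨div_nonneg (by linarith) h1ρ.le, (div_le_one h1ρ).2 (by linarith)⟩
    have h2 := hseg u ρ 1 ((r - ρ) / (1 - ρ))
    rw [one_smul, add_sub_cancel] at h2
    rw [h2, div_mul_cancel₀ _ h1ρ.ne'] at this
    simpa using this
  have hT2sub : T2 ⊆ M ∪ (T2 ∩ D) := by
    rintro v ⟨r, hr, u, hu, rfl⟩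
    rcases le_total r ρ with h1 | h1
    · exact Or.inl (hlow u hu r hr.1.le h1)
    · exact Or.inr ⟨⟨r, hr, u, hu, rfl⟩, hhigh u hu r h1 hr.2⟩
  set T3 := T2 ∩ D with hT3
  have hT3o : IsOpen T3 := hT2o.inter isOpen_ball
  have hT3D : T3 ⊆ D := fun v hv => hv.2
  set v0 := b + ρ • (w1 - b) with hv0
  have hmemT2 : ∀ u ∈ ball w1 ε, ∀ r : ℝ, 0 < r → r ≤ 1 → b + r • (u - b) ∈ T2 :=
    fun u hu r h0 h1 => ⟨r, ⟨h0, h1⟩, u, hu, rfl⟩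
  have hv0m : v0 ∈ M ∩ T3 := ⟨hρM, hmemT2 w1 (mem_ball_self hε) ρ hρ0 hρ1.le, hρD⟩
  have hpre : IsPreconnected (M ∩ T3) := by
    refine isPreconnected_of_forall v0 ?_
    rintro v ⟨hvM, ⟨r, hr, u, hu, rfl⟩, hvD⟩
    refine ⟨segment ℝ (b + r • (u - b)) (b + ρ • (u - b)) ∪ segment ℝ (b + ρ • (u - b)) v0,
      ?_, Or.inr (right_mem_segment _ _ _), Or.inl (left_mem_segment _ _ _), ?_⟩
    · refine union_subset ?_ ?_
      · rw [segment_eq_image']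
        rintro _ ⟨θ, hθ, rfl⟩
        have hD' : (b + r • (u - b)) + θ • ((b + ρ • (u - b)) - (b + r • (u - b))) ∈ D :=
          hDc.add_smul_sub_mem hvD (hεsub u hu).2.2 hθ
        dsimp only
        rw [hseg] at hD' ⊢
        have hpos : 0 < r + θ * (ρ - r) := by
          rcases eq_or_lt_of_le hθ.2 with h1 | h1
          · rw [h1]; linarith
          · nlinarith [hr.1, hθ.1, mul_nonneg hθ.1 hρ0.le, mul_pos hr.1 (sub_pos.2 h1)]
        have hle : r + θ * (ρ - r) ≤ 1 := by nlinarith [hr.2, hθ.1, hθ.2]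
        refine ⟨?_, hmemT2 u hu _ hpos hle, hD'⟩
        rcases le_total r ρ with h1 | h1
        · exact hlow u hu _ hpos.le (by nlinarith [hθ.1, hθ.2])
        · have h2 : r + θ * (ρ - r) ≤ r := by nlinarith [hθ.1]
          have := hM.add_smul_sub_mem hvM (div_nonneg hpos.le hr.1.le) ((div_le_one hr.1).2 h2)
          rwa [add_sub_cancel_left, smul_smul, div_mul_cancel₀ _ hr.1.ne'] at this
      · rw [segment_eq_image']
        rintro _ ⟨θ, hθ, rfl⟩
        dsimp only
        have h1 : b + ρ • (u - b) + θ • (v0 - (b + ρ • (u - b)))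
            = b + ρ • ((u + θ • (w1 - u)) - b) := by rw [hv0]; module
        have h2 : u + θ • (w1 - u) ∈ ball w1 ε :=
          (convex_ball w1 ε).add_smul_sub_mem hu (mem_ball_self hε) hθ
        rw [h1]
        exact ⟨(hεsub _ h2).2.1, hmemT2 _ h2 ρ hρ0 hρ1.le, (hεsub _ h2).2.2⟩
    · exact IsPreconnected.union (b + ρ • (u - b)) (right_mem_segment _ _ _)
        (left_mem_segment _ _ _) (convex_segment _ _).isPreconnected
        (convex_segment _ _).isPreconnected
  obtain ⟨x0, hx0, hFx0⟩ := h.surj (hUΩ (hMU hv0m.1).1)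
  have hs0' : IsTriv E F c T3 (fun x => s0 x * ((s0 x0)⁻¹ * s x0)) :=
    (hs0.mono fun v hv => (hδsub (hT3D hv)).1).mul_right _
  have hagree := h.triv_unique (hMo.inter hT3o) hpre (fun v hv => hUΩ (hMU hv.1).1)
    (hs.mono inter_subset_left) (hs0'.mono inter_subset_right) hx0 (hFx0 ▸ hv0m)
    (by rw [mul_inv_cancel_left])
  obtain ⟨s', hs', hs'eq⟩ := h.triv_glue (ι := Bool) (T := fun i => cond i M T3)
    (s := fun i => cond i s (fun x => s0 x * ((s0 x0)⁻¹ * s x0)))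
    (by rintro (_ | _); exacts [hT3o, hMo]) (by rintro (_ | _); exacts [hs0', hs])
    (by
      rintro (_ | _) (_ | _) x hx h1 h2
      · rfl
      · exact (hagree x hx ⟨h2, h1⟩).symm
      · exact hagree x hx ⟨h1, h2⟩
      · rfl)
  have hun : (⋃ i : Bool, cond i M T3) = M ∪ T3 := by
    rw [union_eq_iUnion]
  rw [hun] at hs'
  refine ⟨M ∪ T3, hMo.union hT3o, ?_, Or.inl hbM, ?_, ?_, s', hs', ?_⟩
  · refine union_subset hMU fun v hv => ?_
    have := hδsub (hT3D hv)
    exact ⟨this.2, (hT0A this.1).2⟩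
  · rw [starConvex_iff_segment_subset]
    intro v hv
    rw [segment_eq_image']
    rintro _ ⟨θ, hθ, rfl⟩
    rcases hv with hv | hv
    · exact Or.inl (hM.add_smul_sub_mem hv hθ.1 hθ.2)
    · obtain ⟨⟨r, hr, u, hu, rfl⟩, -⟩ := hv
      dsimp only
      rw [add_sub_cancel_left, smul_smul]
      rcases eq_or_lt_of_le hθ.1 with h0 | h0
      · rw [← h0]; simpa using Or.inl hbM
      · exact hT2sub (hmemT2 u hu _ (mul_pos h0 hr.1) (mul_le_one₀ hθ.2 hr.1.le hr.2))
  · intro hsub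
    refine ht1M (hsub (Or.inr ⟨?_, mem_ball_self hδ⟩))
    have := hmemT2 w1 (mem_ball_self hε) 1 one_pos le_rfl
    rwa [one_smul, add_sub_cancel] at this
  · rw [← hs1]
    exact hs'eq true b0 hb0 (by rw [hFb]; exact hbM)

/-- Over a convex open set the cocycle is trivial on the part seen from `b`. -/
lemma FiniteHolo.exists_triv_star (h : FiniteHolo E Ω F) (hc : FibreCocycle E Es A F c)
    {U : Set (Cn n)} (hU : IsOpen U) (hUc : Convex ℝ U) (hUΩ : U ⊆ Ω)
    {b : Cn n} (hbU : b ∈ U) (hbA : b ∉ A) :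
    ∃ M, IsOpen M ∧ M = {w ∈ U | ∀ t ∈ Icc (0:ℝ) 1, b + t • (w - b) ∉ A} ∧
      ∃ s, IsTriv E F c M s := by
  classical
  obtain ⟨b0, hb0, hFb⟩ := h.surj (hUΩ hbU)
  let 𝓣 : Set (Set (Cn n)) := {T | IsOpen T ∧ T ⊆ U \ A ∧ b ∈ T ∧ StarConvex ℝ b T ∧
      ∃ s', IsTriv E F c T s' ∧ s' b0 = 1}
  have hne : 𝓣.Nonempty := by
    obtain ⟨T0, hT0o, hbT0, hT0A, s0, hs0⟩ := h.exists_triv hc (hUΩ hbU) hbA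
    obtain ⟨δ, hδ, hδsub⟩ := Metric.isOpen_iff.1 (hT0o.inter hU) b ⟨hbT0, hbU⟩
    refine ⟨ball b δ, isOpen_ball, fun v hv => ⟨(hδsub hv).2, (hT0A (hδsub hv).1).2⟩,
      mem_ball_self hδ, (convex_ball b δ).starConvex (mem_ball_self hδ), _,
      (hs0.mono fun v hv => (hδsub hv).1).mul_right (s0 b0)⁻¹, by simp⟩
  have hch : ∀ T : 𝓣, ∃ s', IsTriv E F c T.1 s' ∧ s' b0 = 1 := fun T => T.2.2.2.2.2
  choose S hS hS1 using hch
  obtain ⟨s, hs, hseq⟩ := h.triv_glue (T := fun T : 𝓣 => T.1) (s := S) (fun T => T.2.1) hS (by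
    intro T T' x hx hxT hxT'
    have hstar : StarConvex ℝ b (T.1 ∩ T'.1) := T.2.2.2.2.1.inter T'.2.2.2.2.1
    refine h.triv_unique (T.2.1.inter T'.2.1)
      (hstar.isPathConnected ⟨T.2.2.2.1, T'.2.2.2.1⟩).isConnected.isPreconnected
      (fun v hv => hUΩ (T.2.2.1 hv.1).1) ((hS T).mono inter_subset_left)
      ((hS T').mono inter_subset_right) hb0 (by rw [hFb]; exact ⟨T.2.2.2.1, T'.2.2.2.1⟩)
      (by rw [hS1, hS1]) x hx ⟨hxT, hxT'⟩)
  obtain ⟨T1, hT1⟩ := hne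
  set M := ⋃ T : 𝓣, T.1 with hM
  have hMo : IsOpen M := isOpen_iUnion fun T => T.2.1
  have hMU : M ⊆ U \ A := iUnion_subset fun T => T.2.2.1
  have hbM : b ∈ M := mem_iUnion.2 ⟨⟨T1, hT1⟩, hT1.2.2.1⟩
  have hMs : StarConvex ℝ b M := starConvex_iUnion fun T => T.2.2.2.2.1
  have hs1 : s b0 = 1 := by
    rw [hseq ⟨T1, hT1⟩ b0 hb0 (by rw [hFb]; exact hT1.2.2.1), hS1]
  refine ⟨M, hMo, Subset.antisymm ?_ ?_, s, hs⟩
  · intro w hw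
    exact ⟨(hMU hw).1, fun t ht => (hMU (hMs.add_smul_sub_mem hw ht.1 ht.2)).2⟩
  · rintro w ⟨hwU, hwA⟩
    by_contra hwM
    obtain ⟨T, h1, h2, h3, h4, h5, h6⟩ := h.star_extend hc hU hUc hUΩ hb0 hFb hMo hMU hbM hMs hs
      hs1 hwU hwA hwM
    exact h5 fun v hv => mem_iUnion.2 ⟨⟨T, h1, h2, h3, h4, h6⟩, hv⟩

end Star

/-! ### Purity: extending the cocycle across a set of codimension four -/

section Extend
variable {n : ℕ} {E Es A Ω : Set (Cn n)} {F : Cn n → Cn n} {G : Type*} [Group G]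
  {c : Cn n → Cn n → G}

lemma eq_of_locConst {X G : Type*} [TopologicalSpace X] {S : Set X} (hS : IsPreconnected S)
    {s : X → G} (h : ∀ x ∈ S, ∀ᶠ y in 𝓝 x, s y = s x) {x y : X} (hx : x ∈ S) (hy : y ∈ S) :
    s x = s y := by
  by_contra hne
  have ho : ∀ R : G → Prop, IsOpen (interior {z | R (s z)}) := fun _ => isOpen_interior
  obtain ⟨z, -, h1, h2⟩ := hS _ _ (ho (· = s x)) (ho (· ≠ s x))
    (by
      intro z hz
      by_cases hh : s z = s x
      · refine Or.inl (mem_interior_iff_mem_nhds.2 ?_)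
        filter_upwards [h z hz] with y' hy'
        exact hy'.trans hh
      · refine Or.inr (mem_interior_iff_mem_nhds.2 ?_)
        filter_upwards [h z hz] with y' hy' h3
        exact hh (hy'.symm.trans h3))
    ⟨x, hx, mem_interior_iff_mem_nhds.2 (h x hx)⟩
    ⟨y, hy, mem_interior_iff_mem_nhds.2 (by
      filter_upwards [h y hy] with y' hy' h3
      exact hne (h3.symm.trans hy'))⟩
  have h1' : s z = s x := by simpa using interior_subset h1
  have h2' : s z ≠ s x := by simpa using interior_subset h2
  exact h2' h1'

/-- The shadow of `A` seen from a point has codimension three, so that its preimage does not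
separate small balls; hence the trivialisation of `exists_triv_star` extends to all of `U`. -/
lemma FiniteHolo.exists_ext_triv (h : FiniteHolo E Ω F) (hc : FibreCocycle E Es A F c)
    {U : Set (Cn n)} (hU : IsOpen U) (hUc : Convex ℝ U) (hUΩ : U ⊆ Ω) :
    ∃ s : Cn n → G, (∀ x ∈ E, F x ∈ U → ∀ᶠ y in 𝓝 x, s y = s x) ∧
      ∀ x ∈ Es, ∀ x' ∈ Es, F x = F x' → F x ∈ U → s x' = c x x' * s x := by
  classical
  rcases U.eq_empty_or_nonempty with rfl | hne
  · exact ⟨fun _ => 1, by simp, by simp⟩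
  obtain ⟨b, hbU, hbA⟩ := (hc.codim.dense_compl (by norm_num)).inter_open_nonempty U hU hne
  obtain ⟨M, hMo, hM, s, hs⟩ := h.exists_triv_star hc hU hUc hUΩ hbU hbA
  have hMU : M ⊆ U := by rw [hM]; exact fun w hw => hw.1
  have hcone : CodimGE n 3 (U \ M) := by
    refine (CodimGE.cone (d := 3) hc.codim b).mono ?_
    rintro w ⟨hwU, hwM⟩
    rw [hM] at hwM
    simp only [mem_ofPred_eq, not_and, not_forall, not_not] at hwM
    obtain ⟨t, ht, htA⟩ := hwM hwU
    have ht0 : t ≠ 0 := by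
      rintro rfl
      refine hbA ?_
      simpa using htA
    refine ⟨t⁻¹, _, htA, ?_⟩
    rw [add_sub_cancel_left, smul_smul, inv_mul_cancel₀ ht0, one_smul, add_sub_cancel]
  have hpre : CodimGE n 2 (E ∩ F ⁻¹' (U \ M)) :=
    (hcone.mono_codim (by norm_num)).preimage_finite h.isOpen_dom h.preconn h.holo h.fin
  have hMdense : ∀ O : Set (Cn n), IsOpen O → (O ∩ U).Nonempty → (O ∩ M).Nonempty := by
    intro O hO hne
    obtain ⟨w, hw, hw'⟩ := (hcone.dense_compl (by norm_num)).inter_open_nonempty _ (hO.inter hU) hne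
    refine ⟨w, hw.1, ?_⟩
    by_contra hh
    exact hw' ⟨hw.2, hh⟩
  have hEdense : ∀ O : Set (Cn n), IsOpen O → O ⊆ E ∩ F ⁻¹' U → O.Nonempty →
      ∃ x ∈ O, F x ∈ M := by
    intro O hO hsub hne
    obtain ⟨w, hw, hw'⟩ := (hpre.dense_compl (by norm_num)).inter_open_nonempty _ hO hne
    refine ⟨w, hw, ?_⟩
    by_contra hh
    exact hw' ⟨(hsub hw).1, (hsub hw).2, hh⟩
  have hloc : ∀ z, ∃ (g : G) (r : ℝ), z ∈ E → F z ∈ U → 0 < r ∧ ball z r ⊆ E ∩ F ⁻¹' U ∧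
      ∀ y ∈ ball z r, F y ∈ M → s y = g := by
    intro z
    by_cases hz : z ∈ E ∧ F z ∈ U
    swap
    · exact ⟨1, 1, fun h1 h2 => absurd ⟨h1, h2⟩ hz⟩
    obtain ⟨r, hr, hsub⟩ := Metric.isOpen_iff.1 (h.isOpen_preimage hU) z hz
    have hconn := hpre.isPreconnected_diff isOpen_ball (convex_ball z r)
    obtain ⟨y0, hy0, hy0M⟩ := hEdense _ isOpen_ball hsub ⟨z, mem_ball_self hr⟩
    refine ⟨s y0, r, fun _ _ => ⟨hr, hsub, fun y hy hyM => ?_⟩⟩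
    refine eq_of_locConst hconn ?_ ⟨hy, fun hh => hh.2.2 hyM⟩ ⟨hy0, fun hh => hh.2.2 hy0M⟩
    intro x hx
    refine hs.locConst x (hsub hx.1).1 ?_
    by_contra hxM
    exact hx.2 ⟨(hsub hx.1).1, (hsub hx.1).2, hxM⟩
  choose g r hg using hloc
  have hgl : ∀ z ∈ E, F z ∈ U → ∀ y ∈ ball z (r z), g y = g z := by
    intro z hz hzU y hy
    obtain ⟨hr, hsub, hgz⟩ := hg z hz hzU
    obtain ⟨hr', hsub', hgy⟩ := hg y (hsub hy).1 (hsub hy).2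
    obtain ⟨x, hx, hxM⟩ := hEdense (ball z (r z) ∩ ball y (r y)) (isOpen_ball.inter isOpen_ball)
      (fun x hx => hsub hx.1) ⟨y, hy, mem_ball_self hr'⟩
    rw [← hgz x hx.1 hxM, ← hgy x hx.2 hxM]
  refine ⟨g, fun z hz hzU => ?_, ?_⟩
  · filter_upwards [ball_mem_nhds z (hg z hz hzU).1] with y hy
    exact hgl z hz hzU y hy
  · intro x hx x' hx' hF hxU
    have hxE := hc.sub hx
    have hxE' := hc.sub hx'
    obtain ⟨hr, hsub, hgz⟩ := hg x hxE hxU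
    obtain ⟨hr', hsub', hgz'⟩ := hg x' hxE' (hF ▸ hxU)
    obtain ⟨u, hu, u', hu', hcc⟩ := hc.locConst x hx x' hx' hF
    have h1 := h.image_mem_nhds hxE (inter_mem (inter_mem (ball_mem_nhds x hr) hu)
      (hc.isOpen_reg.mem_nhds hx))
    have h2 := h.image_mem_nhds hxE' (inter_mem (inter_mem (ball_mem_nhds x' hr') hu')
      (hc.isOpen_reg.mem_nhds hx'))
    rw [← hF] at h2
    obtain ⟨O, hO, hOo, hxO⟩ := _root_.mem_nhds_iff.1 (inter_mem h1 h2)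
    obtain ⟨w, hwO, hwM⟩ := hMdense O hOo ⟨_, hxO, hxU⟩
    obtain ⟨⟨y, ⟨⟨hy1, hy2⟩, hy3⟩, rfl⟩, ⟨y', ⟨⟨hy1', hy2'⟩, hy3'⟩, hyF⟩⟩ := hO hwO
    rw [← hgz y hy1 hwM, ← hgz' y' hy1' (hyF ▸ hwM), ← hcc y ⟨hy2, hy3⟩ y' ⟨hy2', hy3'⟩ hyF.symm]
    exact hs.eq y (hc.sub hy3) y' (hc.sub hy3') hyF.symm hwM

/-- The cocycle extends to a locally constant function on the whole fibre product. -/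
lemma FiniteHolo.exists_ext_cocycle (h : FiniteHolo E Ω F) (hΩ : IsOpen Ω)
    (hc : FibreCocycle E Es A F c) :
    ∃ d : Cn n → Cn n → G, (∀ x ∈ E, d x x = 1) ∧
      (∀ x ∈ Es, ∀ x' ∈ Es, F x = F x' → d x x' = c x x') ∧
      ∀ x ∈ E, ∀ x' ∈ E, F x = F x' → ∀ᶠ y in 𝓝 (x, x'), F y.1 = F y.2 →
        d y.1 y.2 = d x x' := by
  classical
  have hloc : ∀ w, ∃ (s : Cn n → G) (r : ℝ), w ∈ Ω → 0 < r ∧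
      (∀ x ∈ E, F x ∈ ball w r → ∀ᶠ y in 𝓝 x, s y = s x) ∧
      ∀ x ∈ Es, ∀ x' ∈ Es, F x = F x' → F x ∈ ball w r → s x' = c x x' * s x := by
    intro w
    by_cases hw : w ∈ Ω
    swap
    · exact ⟨fun _ => 1, 1, fun h1 => absurd h1 hw⟩
    obtain ⟨r, hr, hsub⟩ := Metric.isOpen_iff.1 hΩ w hw
    obtain ⟨s, hs⟩ := h.exists_ext_triv hc isOpen_ball (convex_ball w r) hsub
    exact ⟨s, r, fun _ => ⟨hr, hs⟩⟩
  choose s r hs using hloc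
  -- the quotient `s x' / s x` does not depend on the local trivialisation
  have hind : ∀ w ∈ Ω, ∀ w' ∈ Ω, ∀ x ∈ E, ∀ x' ∈ E, F x = F x' → F x ∈ ball w (r w) →
      F x ∈ ball w' (r w') → s w x' * (s w x)⁻¹ = s w' x' * (s w' x)⁻¹ := by
    intro w hw w' hw' x hx x' hx' hF hxw hxw'
    obtain ⟨hr, hl, hcy⟩ := hs w hw
    obtain ⟨hr', hl', hcy'⟩ := hs w' hw'
    have hFx' : F x' ∈ ball w (r w) := by rw [← hF]; exact hxw
    have hFx'' : F x' ∈ ball w' (r w') := by rw [← hF]; exact hxw'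
    have h1 := h.image_mem_nhds hx (inter_mem (inter_mem (hl x hx hxw) (hl' x hx hxw'))
      (h.isOpen_dom.mem_nhds hx))
    have h2 := h.image_mem_nhds hx' (inter_mem (inter_mem (hl x' hx' hFx') (hl' x' hx' hFx''))
      (h.isOpen_dom.mem_nhds hx'))
    rw [← hF] at h2
    obtain ⟨O, hO, hOo, hxO⟩ := _root_.mem_nhds_iff.1 (inter_mem (inter_mem h1 h2)
      (inter_mem (isOpen_ball.mem_nhds hxw) (isOpen_ball.mem_nhds hxw')))
    obtain ⟨v, hvO, hvA⟩ := (hc.codim.dense_compl (by norm_num)).inter_open_nonempty O hOo ⟨_, hxO⟩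
    obtain ⟨⟨⟨y, ⟨⟨hy1, hy2⟩, hy3⟩, rfl⟩, ⟨y', ⟨⟨hy1', hy2'⟩, hy3'⟩, hyF⟩⟩, hv1, hv2⟩ := hO hvO
    simp only [mem_ofPred_eq] at hy1 hy2 hy1' hy2'
    have hys : y ∈ Es := (hc.sat y hy3).2 hvA
    have hys' : y' ∈ Es := (hc.sat y' hy3').2 (by rw [hyF]; exact hvA)
    rw [← hy1, ← hy1', ← hy2, ← hy2', hcy y hys y' hys' hyF.symm hv1,
      hcy' y hys y' hys' hyF.symm hv2]
    group
  refine ⟨fun x x' => s (F x) x' * (s (F x) x)⁻¹, fun x _ => mul_inv_cancel _, ?_, ?_⟩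
  · intro x hx x' hx' hF
    have hw := h.maps (hc.sub hx)
    obtain ⟨hr, -, hcy⟩ := hs _ hw
    change s (F x) x' * (s (F x) x)⁻¹ = _
    rw [hcy x hx x' hx' hF (mem_ball_self hr)]
    group
  · intro x hx x' hx' hF
    have hw := h.maps hx
    obtain ⟨hr, hl, -⟩ := hs _ hw
    have h1 := hl x hx (mem_ball_self hr)
    have hxb : F x ∈ ball (F x) (r (F x)) := mem_ball_self hr
    have h2 := hl x' hx' (by rw [← hF]; exact hxb)
    have h3 : ∀ᶠ y in 𝓝 x, y ∈ E ∧ F y ∈ ball (F x) (r (F x)) := by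
      filter_upwards [(h.isOpen_preimage (isOpen_ball (x := F x) (ε := r (F x)))).mem_nhds
        ⟨hx, hxb⟩] with y hy
      exact hy
    rw [nhds_prod_eq]
    filter_upwards [(h1.and h3).prod_mk (h2.and (h.isOpen_dom.mem_nhds hx'))] with y hy hyF
    obtain ⟨⟨ha, hb⟩, hc', hd⟩ := hy
    have hd' : y.2 ∈ E := hd
    have h5 := hind (F y.1) (h.maps hb.1) (F x) hw y.1 hb.1 y.2 hd' hyF
      (mem_ball_self (hs _ (h.maps hb.1)).1) hb.2
    rw [ha, hc'] at h5
    exact h5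

end Extend

/-! ### Triviality of the extended cocycle by a continuation argument -/

section Continuation
variable {n : ℕ} {E Ω : Set (Cn n)} {F : Cn n → Cn n} {G : Type*}
  {d : Cn n → Cn n → G}

/-- If `d` takes the value `g` on the fibre product, then it takes it over every point. -/
lemma FiniteHolo.exists_value_at (h : FiniteHolo E Ω F) (hprop : ProperOn n F E Ω)
    (hdl : ∀ x ∈ E, ∀ x' ∈ E, F x = F x' → ∀ᶠ y in 𝓝 (x, x'), F y.1 = F y.2 →
        d y.1 y.2 = d x x') {x x' : Cn n} (hx : x ∈ E) (hx' : x' ∈ E) (hF : F x = F x')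
    {b : Cn n} (hb : b ∈ E) : ∃ a ∈ E, F a = F b ∧ d a b = d x x' := by
  set Z : Set (Cn n) := {z ∈ E | ∃ a ∈ E, F a = F z ∧ d a z = d x x'} with hZ
  have hZo : IsOpen Z := by
    rw [isOpen_iff_mem_nhds]
    rintro z ⟨hz, a, ha, haz, hda⟩
    have h1 := hdl a ha z hz haz
    rw [nhds_prod_eq] at h1
    obtain ⟨u, hu, v, hv, huv⟩ := Filter.mem_prod_iff.1 h1
    have h2 := h.image_mem_nhds ha (inter_mem hu (h.isOpen_dom.mem_nhds ha))
    rw [haz] at h2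
    filter_upwards [h.isOpen_dom.mem_nhds hz, hv, h.continuousAt hz h2] with y hy hyv hyF
    obtain ⟨a', ⟨ha'u, ha'E⟩, ha'F⟩ := hyF
    refine ⟨hy, a', ha'E, ha'F, ?_⟩
    have := huv (show (a', y) ∈ u ×ˢ v from ⟨ha'u, hyv⟩)
    rw [← hda]
    exact this ha'F
  have hZc : IsOpen (E \ Z) := by
    rw [isOpen_iff_mem_nhds]
    rintro z ⟨hz, hzZ⟩
    suffices hh : ∀ᶠ y in 𝓝 z, y ∉ Z by
      filter_upwards [h.isOpen_dom.mem_nhds hz, hh] with y h1 h2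
      exact ⟨h1, h2⟩
    by_contra hfr
    have hfr' : ∃ᶠ y in 𝓝 z, y ∈ Z := hfr
    obtain ⟨y, hy, hyZ⟩ := exists_seq_forall_of_frequently hfr'
    choose hyE a ha haF had using fun k => hyZ k
    have hFy : Tendsto (fun k => F (y k)) atTop (𝓝 (F z)) := (h.continuousAt hz).tendsto.comp hy
    have hcomp : IsCompact {v ∈ E | F v ∈ insert (F z) (range fun k => F (y k))} := by
      refine hprop _ ?_ hFy.isCompact_insert_range
      rintro w (rfl | ⟨k, rfl⟩)
      exacts [h.maps hz, h.maps (hyE k)]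
    obtain ⟨a0, ha0, φ, hφ, hlim⟩ := hcomp.tendsto_subseq (x := a)
      (fun k => ⟨ha k, Or.inr ⟨k, (haF k).symm⟩⟩)
    have hFa : F a0 = F z := by
      refine tendsto_nhds_unique ((h.continuousAt ha0.1).tendsto.comp hlim) ?_
      refine (hFy.comp hφ.tendsto_atTop).congr fun k => ?_
      simp only [Function.comp_apply, haF]
    have hpair : Tendsto (fun k => (a (φ k), y (φ k))) atTop (𝓝 (a0, z)) := by
      rw [nhds_prod_eq]
      exact hlim.prodMk (hy.comp hφ.tendsto_atTop)
    obtain ⟨k, hk⟩ := (hpair.eventually (hdl a0 ha0.1 z hz hFa)).exists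
    exact hzZ ⟨hz, a0, ha0.1, hFa, (hk (haF _)).symm.trans (had _)⟩
  have hsub : E ⊆ Z := by
    refine h.preconn.subset_left_of_subset_union hZo hZc disjoint_sdiff_self_right ?_ ?_
    · intro z hz
      by_cases hh : z ∈ Z
      exacts [Or.inl hh, Or.inr ⟨hz, hh⟩]
    · exact ⟨x', hx', hx', x, hx, hF, rfl⟩
  exact (hsub hb).2

/-- The solutions of `F (t z) = F z` are followed from `t = 0` to `t = 1`; at `t = 1` they
lie on the diagonal, where `d = 1`. -/
lemma FiniteHolo.ext_cocycle_trivial [One G] (h : FiniteHolo E Ω F)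
    (hprop : ProperOn n F E Ω) (h0 : (0 : Cn n) ∈ E)
    (hstar : ∀ z ∈ E, ∀ t ∈ Icc (0:ℝ) 1, t • z ∈ E) (hd1 : ∀ x ∈ E, d x x = 1)
    (hdl : ∀ x ∈ E, ∀ x' ∈ E, F x = F x' → ∀ᶠ y in 𝓝 (x, x'), F y.1 = F y.2 →
        d y.1 y.2 = d x x') {K : Set (Cn n)} (hKc : IsCompact K) (hKE : K ⊆ E)
    (hK : ∀ t ∈ Ico (0:ℝ) 1, ∀ z ∈ E, F (t • z) = F z → z ∈ K) {x x' : Cn n} (hx : x ∈ E)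
    (hx' : x' ∈ E) (hF : F x = F x') : d x x' = 1 := by
  classical
  set g := d x x' with hg
  set P : Set (ℝ × Cn n) :=
    {q | q ∈ Icc (0:ℝ) 1 ×ˢ K ∧ F (q.1 • q.2) = F q.2 ∧ d q.2 (q.1 • q.2) = g} with hP
  have hcs : Continuous fun q : ℝ × Cn n => q.1 • q.2 := by fun_prop
  have hca : ∀ t ∈ Icc (0:ℝ) 1, ∀ z ∈ E, ContinuousAt (fun q : ℝ × Cn n => F (q.1 • q.2)) (t, z) :=
    fun t ht z hz => ContinuousAt.comp (x := (t, z)) (f := fun q : ℝ × Cn n => q.1 • q.2) (g := F)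
      (h.continuousAt (hstar z hz t ht)) hcs.continuousAt
  have hdd : ∀ t ∈ Icc (0:ℝ) 1, ∀ z ∈ E, F (t • z) = F z → ∀ᶠ q : ℝ × Cn n in 𝓝 (t, z),
      F (q.1 • q.2) = F q.2 → d q.2 (q.1 • q.2) = d z (t • z) := by
    intro t ht z hz hFz
    have h1 : Tendsto (fun q : ℝ × Cn n => (q.2, q.1 • q.2)) (𝓝 (t, z)) (𝓝 (z, t • z)) :=
      Continuous.tendsto (by fun_prop) (t, z)
    filter_upwards [h1.eventually (hdl z hz _ (hstar z hz t ht) hFz.symm)] with q hq hFq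
    exact hq hFq.symm
  have hPc : IsCompact P := by
    refine (isCompact_Icc.prod hKc).of_isClosed_subset ?_ fun q hq => hq.1
    refine IsSeqClosed.isClosed ?_
    intro q q0 hq hlim
    have hq0 : q0 ∈ Icc (0:ℝ) 1 ×ˢ K :=
      (isClosed_Icc.prod hKc.isClosed).mem_of_tendsto hlim (Eventually.of_forall fun k => (hq k).1)
    have hFq : F (q0.1 • q0.2) = F q0.2 := by
      refine tendsto_nhds_unique ((hca q0.1 hq0.1 q0.2 (hKE hq0.2)).tendsto.comp hlim) ?_
      refine (((h.continuousAt (hKE hq0.2)).tendsto.comp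
        ((continuous_snd.tendsto q0).comp hlim))).congr fun k => ?_
      exact ((hq k).2.1).symm
    refine ⟨hq0, hFq, ?_⟩
    obtain ⟨k, hk⟩ := (hlim.eventually (hdd q0.1 hq0.1 q0.2 (hKE hq0.2) hFq)).exists
    exact (hk (hq k).2.1).symm.trans (hq k).2.2
  set T : Set ℝ := Prod.fst '' P with hT
  have hTIcc : T ⊆ Icc 0 1 := by
    rintro _ ⟨q, hq, rfl⟩
    exact hq.1.1
  have hTc : IsClosed (T ∩ Icc 0 1) :=
    ((hPc.image continuous_fst).isClosed).inter isClosed_Icc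
  have hT0 : (0:ℝ) ∈ T := by
    obtain ⟨a, ha, haF, had⟩ := h.exists_value_at hprop hdl hx hx' hF h0
    have h1 : F ((0:ℝ) • a) = F a := by rw [zero_smul, haF]
    refine ⟨(0, a), ⟨⟨by simp, hK 0 (by simp) a ha h1⟩, h1, ?_⟩, rfl⟩
    rw [zero_smul, had]
  have hTr : ∀ t0 ∈ T ∩ Ico 0 1, T ∈ 𝓝[>] t0 := by
    rintro t1 ⟨⟨⟨t0, z0⟩, hq0, hqt⟩, ht0⟩
    obtain rfl : t0 = t1 := hqt
    have ht0I : t0 ∈ Icc (0:ℝ) 1 := Ico_subset_Icc_self ht0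
    set S : Set (Cn n) := {z | (t0, z) ∈ P} with hS
    have hz0S : z0 ∈ S := hq0
    have hSK : S ⊆ K := fun z hz => hz.1.2
    have hSc : IsCompact S :=
      hKc.of_isClosed_subset (hPc.isClosed.preimage (by fun_prop)) hSK
    obtain ⟨I, W0, hIo, hW0o, hI, hSW, hIW⟩ := generalized_tube_lemma
      (isCompact_singleton (x := t0)) hSc
      (isOpen_interior (s := {q : ℝ × Cn n | q.2 ∈ E ∧
        (F (q.1 • q.2) = F q.2 → d q.2 (q.1 • q.2) = g)}))
      (by
        rintro ⟨t, z⟩ ⟨rfl, hz⟩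
        rw [mem_interior_iff_mem_nhds]
        filter_upwards [hdd _ ht0I z (hKE (hSK hz)) hz.2.1,
          (h.isOpen_dom.preimage continuous_snd).mem_nhds (hKE (hSK hz))] with q hq hqE
        exact ⟨hqE, fun hh => (hq hh).trans hz.2.2⟩)
    have hO : ∀ t ∈ I, ∀ z ∈ W0, z ∈ E ∧ (F (t • z) = F z → d z (t • z) = g) := by
      intro t ht z hz
      have := interior_subset (hIW (show (t, z) ∈ I ×ˢ W0 from ⟨ht, hz⟩))
      exact this
    have ht0I1 : t0 ∈ I := hI rfl
    obtain ⟨δ, hδ, hδW⟩ := hSc.exists_cthickening_subset_open hW0o hSW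
    set W := thickening δ S with hW
    have hcl : closure W ⊆ cthickening δ S := closure_thickening_subset_cthickening δ S
    have hclE : cthickening δ S ⊆ E := fun z hz => (hO t0 ht0I1 z (hδW hz)).1
    have hctc : IsCompact (cthickening δ S) := hSc.cthickening
    have hcont : ∀ t ∈ Icc (0:ℝ) 1, DifferentiableOn ℂ (fun z => F (t • z) - F z) E := by
      intro t ht
      refine DifferentiableOn.sub ?_ h.holo
      have : DifferentiableOn ℂ (fun z : Cn n => t • z) E := by
        have h1 : (fun z : Cn n => t • z) = fun z : Cn n => (t : ℂ) • z := by
          funext z; simp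
        rw [h1]; fun_prop
      exact h.holo.comp this fun z hz => hstar z hz t ht
    have hfr : ∀ z ∈ frontier W, F (t0 • z) - F z ≠ 0 := by
      intro z hz hzero
      have hz1 := hO t0 ht0I1 z (hδW (hcl (frontier_subset_closure hz)))
      have hFz := sub_eq_zero.1 hzero
      have hzS : z ∈ S := ⟨⟨ht0I, hK t0 ht0 z hz1.1 hFz⟩, hFz, hz1.2 hFz⟩
      rw [isOpen_thickening.frontier_eq] at hz
      exact hz.2 (self_subset_thickening hδ S hzS)
    have hfrc : IsCompact (frontier W) :=
      hctc.of_isClosed_subset isClosed_frontier (frontier_subset_closure.trans hcl)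
    obtain ⟨r, hr, hrle⟩ : ∃ r > 0, ∀ z ∈ frontier W, 2 * r ≤ ‖F (t0 • z) - F z‖ := by
      rcases (frontier W).eq_empty_or_nonempty with he | hne
      · exact ⟨1, one_pos, by simp [he]⟩
      · obtain ⟨y, hy, hmin⟩ := hfrc.exists_isMinOn hne (f := fun z => ‖F (t0 • z) - F z‖)
          (((hcont t0 ht0I).continuousOn.mono
            ((frontier_subset_closure.trans hcl).trans hclE)).norm)
        refine ⟨‖F (t0 • y) - F y‖ / 2, half_pos (norm_pos_iff.2 (hfr y hy)), fun z hz => ?_⟩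
        have := hmin hz
        simp only [mem_ofPred_eq] at this
        linarith
    have hunif : ∀ᶠ t in 𝓝 t0, ∀ z ∈ cthickening δ S, ‖F (t • z) - F (t0 • z)‖ < r := by
      refine hctc.eventually_forall_of_forall_eventually fun z hz => ?_
      have h1 : ContinuousAt (fun q : ℝ × Cn n => F (q.1 • q.2) - F (t0 • q.2)) (t0, z) := by
        refine (hca t0 ht0I z (hclE hz)).sub ?_
        exact ContinuousAt.comp (x := (t0, z)) (f := fun q : ℝ × Cn n => t0 • q.2) (g := F)
          (h.continuousAt (hstar z (hclE hz) t0 ht0I)) (Continuous.continuousAt (by fun_prop))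
      have h2 := h1.norm.tendsto
      simp only [sub_self, norm_zero] at h2
      exact h2.eventually (gt_mem_nhds hr)
    filter_upwards [mem_nhdsWithin_of_mem_nhds hunif,
      mem_nhdsWithin_of_mem_nhds (hIo.mem_nhds ht0I1), Ioo_mem_nhdsGT ht0.2] with t hu htI ht1
    have htm : t ∈ Ico (0:ℝ) 1 := ⟨ht0.1.trans ht1.1.le, ht1.2⟩
    have htm' := Ico_subset_Icc_self htm
    have hz0W : z0 ∈ W := self_subset_thickening hδ S hz0S
    obtain ⟨z, hz, hz'⟩ := exists_zero_of_norm_lt_frontier (h := fun z => F (t • z) - F z)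
      (W := W) (r := r) isOpen_thickening (hctc.isBounded.subset (subset_closure.trans hcl))
      ((hcont t htm').continuousOn.mono (hcl.trans hclE))
      ((hcont t htm').mono ((subset_closure.trans hcl).trans hclE))
      (fun z hz => by
        have h1 := hrle z hz
        have h2 := hu z (hcl (frontier_subset_closure hz))
        have h3 : F (t0 • z) - F z = (F (t • z) - F z) - (F (t • z) - F (t0 • z)) := by abel
        rw [h3] at h1
        have := norm_sub_le (F (t • z) - F z) (F (t • z) - F (t0 • z))
        linarith)
      hz0W (by
        have h2 := hu z0 (hcl (subset_closure hz0W))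
        have h4 : F (t0 • z0) = F z0 := hz0S.2.1
        rwa [h4] at h2)
    have hFz := sub_eq_zero.1 hz'
    have hz1 := hO t htI z (hδW (hcl (subset_closure hz)))
    exact ⟨(t, z), ⟨⟨htm', hK t htm z hz1.1 hFz⟩, hFz, hz1.2 hFz⟩, rfl⟩
  obtain ⟨⟨_, z⟩, hq, rfl⟩ := hTc.Icc_subset_of_forall_mem_nhdsWithin hT0 hTr
    (show (1:ℝ) ∈ Icc (0:ℝ) 1 by simp)
  have h1 := hq.2.2
  simp only [one_smul] at h1
  rw [← h1, hd1 z (hKE hq.1.2)]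

end Continuation

/-! ### A maximum principle along complex lines -/

section MaxPrinciple
variable {n : ℕ} {E Ω : Set (Cn n)} {F : Cn n → Cn n}

lemma FiniteHolo.exists_section (h : FiniteHolo E Ω F) {z : Cn n} (hz : z ∈ E)
    (hJ : cDet n F z ≠ 0) : ∃ σ : Cn n → Cn n, σ (F z) = z ∧ ContinuousAt σ (F z) ∧
      ∀ᶠ y in 𝓝 (F z), F (σ y) = y ∧ σ y ∈ E ∧ cDet n F (σ y) ≠ 0 ∧ DifferentiableAt ℂ σ y := by
  obtain ⟨L, hL⟩ := exists_equiv_of_cDet_ne_zero h.isOpen_dom h.holo hz hJ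
  have hcd : ContDiffAt ℂ 2 F z :=
    (contDiffOn_two_of_holo h.isOpen_dom h.holo).contDiffAt (h.isOpen_dom.mem_nhds hz)
  have hn : (2 : WithTop ℕ∞) ≠ 0 := by norm_num
  have h2 := hcd.to_localInverse hL.hasFDerivAt hn
  have h3 := hcd.localInverse_apply_image hL.hasFDerivAt hn
  set σ := hcd.localInverse hL.hasFDerivAt hn with hσ
  have hJc : ContinuousAt (cDet n F) z :=
    (differentiableOn_cDet h.isOpen_dom h.holo).continuousOn.continuousAt
      (h.isOpen_dom.mem_nhds hz)
  have hnb : {y ∈ E | cDet n F y ≠ 0} ∈ 𝓝 (σ (F z)) := by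
    rw [h3]
    filter_upwards [h.isOpen_dom.mem_nhds hz, hJc (isOpen_ne.mem_nhds hJ)] with y h1 h2
    exact ⟨h1, h2⟩
  refine ⟨σ, h3, h2.continuousAt, ?_⟩
  filter_upwards [(hcd.hasStrictFDerivAt' hL.hasFDerivAt hn).eventually_right_inverse,
    h2.continuousAt hnb, h2.eventually (by norm_num)] with y h4 h5 h6
  exact ⟨h4, h5.1, h5.2, h6.differentiableAt (by norm_num)⟩

lemma le_of_pow_mul_le {x M c C : ℝ} (hM : 0 ≤ M) (hc : 0 < c)
    (h : ∀ N : ℕ, x ^ N * c ≤ M ^ N * C) : x ≤ M := by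
  by_contra hlt
  push Not at hlt
  rcases hM.eq_or_lt with rfl | hM
  · have := h 1
    simp only [pow_one, zero_mul] at this
    nlinarith
  · have h1 : 1 < x / M := (one_lt_div hM).2 hlt
    obtain ⟨N, hN⟩ := pow_unbounded_of_one_lt (C / c) h1
    have h2 := h N
    rw [div_pow, div_lt_div_iff₀ hc (pow_pos hM N)] at hN
    nlinarith

/-- Maximum principle on a complex line, for a continuous function which is holomorphic at the
regular values of `F`: the possible singularities are absorbed by a power of the Jacobian of `F`,
which is harmless after taking high powers of the function. -/
lemma FiniteHolo.norm_le_of_sphere (h : FiniteHolo E Ω F) (hprop : ProperOn n F E Ω)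
    {a v : Cn n} (hℓ : ∀ ζ ∈ closedBall (0:ℂ) 1, a + ζ • v ∈ Ω) {g : ℂ → ℂ}
    (hgc : ContinuousOn g (closedBall 0 1))
    (hgd : ∀ z ∈ E, cDet n F z ≠ 0 → ∀ ζ ∈ ball (0:ℂ) 1, F z = a + ζ • v →
      DifferentiableAt ℂ g ζ) {M : ℝ}
    (hM : ∀ ζ ∈ sphere (0:ℂ) 1, ‖g ζ‖ ≤ M) {z0 : Cn n} (hz0 : z0 ∈ E) (hJ0 : cDet n F z0 ≠ 0)
    {ζ0 : ℂ} (hζ0 : ζ0 ∈ ball (0:ℂ) 1) (hF0 : F z0 = a + ζ0 • v) : ‖g ζ0‖ ≤ M := by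
  have hM0 : 0 ≤ M := (norm_nonneg _).trans (hM 1 (by simp))
  have hℓc : Continuous fun ζ : ℂ => a + ζ • v := by fun_prop
  set Y : Set (ℂ × Cn n) := {q | q.1 ∈ closedBall (0:ℂ) 1 ∧ q.2 ∈ E ∧ F q.2 = a + q.1 • v} with hY
  have hYc : IsCompact Y := by
    have hX : IsCompact {z ∈ E | F z ∈ (fun ζ : ℂ => a + ζ • v) '' closedBall (0:ℂ) 1} := by
      refine hprop _ ?_ ((isCompact_closedBall 0 1).image hℓc)
      rintro _ ⟨ζ, hζ, rfl⟩
      exact hℓ ζ hζ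
    refine ((isCompact_closedBall (0:ℂ) 1).prod hX).of_isClosed_subset ?_
      fun q hq => ⟨hq.1, hq.2.1, q.1, hq.1, hq.2.2.symm⟩
    refine IsSeqClosed.isClosed ?_
    intro q q0 hq hlim
    have hq0 := (((isCompact_closedBall (0:ℂ) 1).prod hX).isClosed).mem_of_tendsto hlim
      (Eventually.of_forall fun k =>
        ⟨(hq k).1, (hq k).2.1, (q k).1, (hq k).1, (hq k).2.2.symm⟩)
    refine ⟨hq0.1, hq0.2.1, ?_⟩
    refine tendsto_nhds_unique ((h.continuousAt hq0.2.1).tendsto.comp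
      ((continuous_snd.tendsto q0).comp hlim)) ?_
    refine ((hℓc.tendsto q0.1).comp ((continuous_fst.tendsto q0).comp hlim)).congr fun k => ?_
    exact ((hq k).2.2).symm
  have hJc : ContinuousOn (fun q : ℂ × Cn n => ‖cDet n F q.2‖) Y :=
    ((differentiableOn_cDet h.isOpen_dom h.holo).continuousOn.comp continuousOn_snd
      fun q hq => hq.2.1).norm
  have hgY : ContinuousOn (fun q : ℂ × Cn n => ‖g q.1‖) Y :=
    (hgc.comp continuousOn_fst fun q hq => hq.1).norm
  have hq0 : (ζ0, z0) ∈ Y := ⟨ball_subset_closedBall hζ0, hz0, hF0⟩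
  obtain ⟨qJ, -, hqJ⟩ := hYc.exists_isMaxOn ⟨_, hq0⟩ hJc
  by_contra hgt
  push Not at hgt
  refine absurd (le_of_pow_mul_le hM0 (norm_pos_iff.2 hJ0) (C := ‖cDet n F qJ.2‖) ?_) (not_le.2 hgt)
  intro N
  set u : ℂ × Cn n → ℝ := fun q => ‖g q.1‖ ^ N * ‖cDet n F q.2‖ with hu
  have huc : ContinuousOn u Y := (hgY.pow N).mul hJc
  obtain ⟨q1, hq1, hmax1⟩ := hYc.exists_isMaxOn ⟨_, hq0⟩ huc
  -- among the maximum points, one with maximal real part in the parameter of the line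
  set Ym : Set (ℂ × Cn n) := Y ∩ u ⁻¹' {u q1} with hYm
  have hYmc : IsCompact Ym :=
    hYc.of_isClosed_subset (huc.preimage_isClosed_of_isClosed hYc.isClosed isClosed_singleton)
      inter_subset_left
  obtain ⟨q2, hq2, hmax2⟩ := hYmc.exists_isMaxOn ⟨q1, hq1, rfl⟩
    (f := fun q : ℂ × Cn n => q.1.re) (by fun_prop)
  have hu2 : u q2 = u q1 := hq2.2
  have hmax : ∀ q ∈ Y, u q ≤ u q2 := fun q hq => by rw [hu2]; exact hmax1 hq
  refine (hmax _ hq0).trans ?_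
  have hsph : ‖q2.1‖ = 1 := by
    by_contra hne
    have hlt : ‖q2.1‖ < 1 := lt_of_le_of_ne (by simpa using hq2.1.1) hne
    obtain ⟨ζ2, z2⟩ := q2
    have hz2E : z2 ∈ E := hq2.1.2.1
    have hFz2 : F z2 = a + ζ2 • v := hq2.1.2.2
    have hupos : 0 < u (ζ2, z2) := by
      refine lt_of_lt_of_le ?_ (hmax _ hq0)
      exact mul_pos (pow_pos (hM0.trans_lt hgt) N) (norm_pos_iff.2 hJ0)
    have hJ2 : cDet n F z2 ≠ 0 := by
      intro h0
      simp [hu, h0] at hupos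
    obtain ⟨σ, hσ, hσc, hσe⟩ := h.exists_section hz2E hJ2
    have hev : ∀ᶠ ζ in 𝓝 ζ2, ζ ∈ ball (0:ℂ) 1 ∧ F (σ (a + ζ • v)) = a + ζ • v ∧
        σ (a + ζ • v) ∈ E ∧ cDet n F (σ (a + ζ • v)) ≠ 0 ∧ DifferentiableAt ℂ σ (a + ζ • v) := by
      have h1 : Tendsto (fun ζ : ℂ => a + ζ • v) (𝓝 ζ2) (𝓝 (F z2)) := by
        rw [hFz2]; exact hℓc.tendsto ζ2
      filter_upwards [h1.eventually hσe,
        isOpen_ball.mem_nhds (show ζ2 ∈ ball (0:ℂ) 1 by simpa using hlt)] with ζ h2 h3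
      exact ⟨h3, h2⟩
    have hval : σ (a + ζ2 • v) = z2 := by rw [← hFz2, hσ]
    have hconst := Complex.eventually_eq_of_isLocalMax_norm
      (f := fun ζ => g ζ ^ N * cDet n F (σ (a + ζ • v))) (c := ζ2)
      (by
        filter_upwards [hev] with ζ hζ
        refine ((hgd _ hζ.2.2.1 hζ.2.2.2.1 ζ hζ.1 hζ.2.1).pow N).mul ?_
        have h2 : DifferentiableAt ℂ (cDet n F) (σ (a + ζ • v)) :=
          (differentiableOn_cDet h.isOpen_dom h.holo).differentiableAt
            (h.isOpen_dom.mem_nhds hζ.2.2.1)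
        have h3 : DifferentiableAt ℂ (fun ζ : ℂ => a + ζ • v) ζ := by fun_prop
        have h4 : DifferentiableAt ℂ (fun ζ : ℂ => σ (a + ζ • v)) ζ :=
          DifferentiableAt.comp (g := σ) (f := fun ζ : ℂ => a + ζ • v) ζ hζ.2.2.2.2 h3
        exact DifferentiableAt.comp (g := cDet n F) (f := fun ζ : ℂ => σ (a + ζ • v)) ζ h2 h4)
      (by
        filter_upwards [hev] with ζ hζ
        simp only [Function.comp_apply, norm_mul, norm_pow, hval]
        exact hmax (ζ, σ (a + ζ • v)) ⟨ball_subset_closedBall hζ.1, hζ.2.2.1, hζ.2.1⟩)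
    obtain ⟨ε, hε, hεs⟩ := Metric.eventually_nhds_iff.1 (hev.and hconst)
    have hd : dist (ζ2 + ((ε / 2 : ℝ) : ℂ)) ζ2 < ε := by
      rw [dist_eq_norm, add_sub_cancel_left, Complex.norm_real, Real.norm_of_nonneg (by linarith)]
      linarith
    obtain ⟨hζ, hc⟩ := hεs hd
    have hmem : ((ζ2 + ((ε / 2 : ℝ) : ℂ)), σ (a + (ζ2 + ((ε / 2 : ℝ) : ℂ)) • v)) ∈ Ym := by
      refine ⟨⟨ball_subset_closedBall hζ.1, hζ.2.2.1, hζ.2.1⟩, ?_⟩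
      rw [mem_preimage, mem_singleton_iff, ← hu2]
      have := congrArg norm hc
      simpa only [norm_mul, norm_pow, hval] using this
    have := hmax2 hmem
    simp at this
    linarith
  refine mul_le_mul (pow_le_pow_left₀ (norm_nonneg _) (hM _ (by simpa using hsph)) N)
    (hqJ hq2.1) (norm_nonneg _) (pow_nonneg hM0 N)

end MaxPrinciple

/-! ### Descent of holomorphic functions through a finite proper map -/

section Descent
variable {n : ℕ} {E Ω : Set (Cn n)} {F : Cn n → Cn n}

lemma FiniteHolo.line_taylor (h : FiniteHolo E Ω F) (hprop : ProperOn n F E Ω)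
    {a v : Cn n} (hℓ : ∀ ζ ∈ closedBall (0:ℂ) 1, a + ζ • v ∈ Ω) {f : ℂ → ℂ}
    (hfc : ContinuousOn f (closedBall 0 1))
    (hfd : ∀ z ∈ E, cDet n F z ≠ 0 → ∀ ζ ∈ ball (0:ℂ) 1, F z = a + ζ • v →
      DifferentiableAt ℂ f ζ) {M : ℝ} (hM : ∀ ζ ∈ closedBall (0:ℂ) 1, ‖f ζ‖ ≤ M)
    {z0 : Cn n} (hz0 : z0 ∈ E) (hJ0 : cDet n F z0 ≠ 0) (hF0 : F z0 = a) :
    ‖deriv f 0‖ ≤ 2 * M ∧ ∀ z ∈ E, cDet n F z ≠ 0 → ∀ ζ ∈ ball (0:ℂ) 1, F z = a + ζ • v →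
      ‖f ζ - f 0 - ζ * deriv f 0‖ ≤ 4 * M * ‖ζ‖ ^ 2 := by
  have hF0' : F z0 = a + (0:ℂ) • v := by rw [zero_smul, add_zero, hF0]
  have h0b : (0:ℂ) ∈ ball (0:ℂ) 1 := by simp
  have hnb : closedBall (0:ℂ) 1 ∈ 𝓝 (0:ℂ) := closedBall_mem_nhds 0 one_pos
  have hds : ∀ f : ℂ → ℂ, (∀ z ∈ E, cDet n F z ≠ 0 → ∀ ζ ∈ ball (0:ℂ) 1, F z = a + ζ • v →
      DifferentiableAt ℂ f ζ) → ∀ z ∈ E, cDet n F z ≠ 0 → ∀ ζ ∈ ball (0:ℂ) 1, F z = a + ζ • v →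
      DifferentiableAt ℂ (dslope f 0) ζ := by
    intro f hfd z hz hJ ζ hζ hFz
    rcases eq_or_ne ζ 0 with rfl | hne
    · obtain ⟨σ, hσ, hσc, hσe⟩ := h.exists_section hz hJ
      have h1 : Tendsto (fun ζ : ℂ => a + ζ • v) (𝓝 0) (𝓝 (F z)) := by
        rw [hFz]; exact Continuous.tendsto (by fun_prop) 0
      have h2 : ∀ᶠ ζ in 𝓝 (0:ℂ), DifferentiableAt ℂ f ζ := by
        filter_upwards [h1.eventually hσe, isOpen_ball.mem_nhds h0b] with ζ h2 h3
        exact hfd _ h2.2.1 h2.2.2.1 ζ h3 h2.1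
      have h3 : DifferentiableOn ℂ f {ζ | DifferentiableAt ℂ f ζ} :=
        fun ζ hζ => DifferentiableAt.differentiableWithinAt hζ
      exact ((Complex.differentiableOn_dslope h2).2 h3).differentiableAt h2
    · exact (differentiableAt_dslope_of_ne hne).2 (hfd z hz hJ ζ hζ hFz)
  have hg0 := hfd z0 hz0 hJ0 0 h0b hF0'
  set g := dslope f 0 with hg
  have hgc : ContinuousOn g (closedBall 0 1) := (continuousOn_dslope hnb).2 ⟨hfc, hg0⟩
  have hgd := hds f hfd
  have hgM : ∀ ζ ∈ sphere (0:ℂ) 1, ‖g ζ‖ ≤ 2 * M := by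
    intro ζ hζ
    have h1 := congrArg norm (sub_smul_dslope f 0 ζ)
    rw [norm_smul, sub_zero, mem_sphere_zero_iff_norm.1 hζ, one_mul] at h1
    rw [hg, h1]
    have h2 := hM ζ (sphere_subset_closedBall hζ)
    have h3 := hM 0 (by simp)
    exact (norm_sub_le _ _).trans (by linarith)
  have hder : ‖g 0‖ ≤ 2 * M := h.norm_le_of_sphere hprop hℓ hgc hgd hgM hz0 hJ0 h0b hF0'
  have hgg : g 0 = deriv f 0 := dslope_same f 0
  refine ⟨hgg ▸ hder, ?_⟩
  have hk0 := hgd z0 hz0 hJ0 0 h0b hF0'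
  have hkc : ContinuousOn (dslope g 0) (closedBall 0 1) := (continuousOn_dslope hnb).2 ⟨hgc, hk0⟩
  have hkd := hds g hgd
  have hkM : ∀ ζ ∈ sphere (0:ℂ) 1, ‖dslope g 0 ζ‖ ≤ 4 * M := by
    intro ζ hζ
    have h1 := congrArg norm (sub_smul_dslope g 0 ζ)
    rw [norm_smul, sub_zero, mem_sphere_zero_iff_norm.1 hζ, one_mul] at h1
    rw [h1]
    have h2 := hgM ζ hζ
    exact (norm_sub_le _ _).trans (by linarith)
  intro z hz hJ ζ hζ hFz
  have h1 := h.norm_le_of_sphere hprop hℓ hkc hkd hkM hz hJ hζ hFz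
  have h2 := sub_smul_dslope f 0 ζ
  have h3 := sub_smul_dslope g 0 ζ
  rw [sub_zero, smul_eq_mul] at h2 h3
  have h4 : f ζ - f 0 - ζ * deriv f 0 = ζ ^ 2 * dslope g 0 ζ := by
    rw [← h2, ← hgg, ← hg]
    linear_combination (-ζ) * h3
  rw [h4, norm_mul, norm_pow]
  nlinarith [sq_nonneg ‖ζ‖]

/-- A function on the base whose pull-back is holomorphic is holomorphic. -/
lemma FiniteHolo.descent_scalar (h : FiniteHolo E Ω F) (hΩ : IsOpen Ω)
    (hprop : ProperOn n F E Ω) {q ψ : Cn n → ℂ} (hq : DifferentiableOn ℂ q E)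
    (hψ : ∀ z ∈ E, ψ (F z) = q z) : DifferentiableOn ℂ ψ Ω := by
  have hψc : ∀ w ∈ Ω, ContinuousAt ψ w := by
    intro w hw
    obtain ⟨z, hz, rfl⟩ := h.surj hw
    intro V hV
    rw [hψ z hz] at hV
    have h1 := h.image_mem_nhds hz (inter_mem (h.isOpen_dom.mem_nhds hz)
      ((hq.continuousOn.continuousAt (h.isOpen_dom.mem_nhds hz)) hV))
    rw [mem_map]
    refine mem_of_superset h1 ?_
    rintro _ ⟨y, ⟨hy, hyV⟩, rfl⟩
    rw [mem_preimage, hψ y hy]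
    exact hyV
  have hψd : ∀ z ∈ E, cDet n F z ≠ 0 → DifferentiableAt ℂ ψ (F z) := by
    intro z hz hJ
    obtain ⟨σ, hσ, hσc, hσe⟩ := h.exists_section hz hJ
    have h1 : DifferentiableAt ℂ (fun y => q (σ y)) (F z) := by
      refine DifferentiableAt.comp (g := q) (f := σ) (F z) ?_ hσe.self_of_nhds.2.2.2
      rw [hσ]
      exact hq.differentiableAt (h.isOpen_dom.mem_nhds hz)
    refine h1.congr_of_eventuallyEq ?_
    filter_upwards [hσe] with y hy
    rw [← hψ _ hy.2.1, hy.1]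
  set Reg : Set (Cn n) := F '' {z ∈ E | cDet n F z ≠ 0} with hReg
  have hdense : ∀ O : Set (Cn n), IsOpen O → (O ∩ Ω).Nonempty → (O ∩ Reg).Nonempty := by
    rintro O hO ⟨w, hwO, hw⟩
    obtain ⟨z, hz, rfl⟩ := h.surj hw
    obtain ⟨y, hy, hyn⟩ := ((codimGE_singular h.isOpen_dom h.preconn h.holo h.fin).dense_compl
      (by norm_num)).inter_open_nonempty _ (h.isOpen_preimage hO) ⟨z, hz, hwO⟩
    exact ⟨F y, hy.2, y, ⟨hy.1, fun h0 => hyn ⟨hy.1, h0⟩⟩, rfl⟩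
  intro s hs
  refine DifferentiableAt.differentiableWithinAt ?_
  obtain ⟨ρ, hρ, hρΩ⟩ : ∃ ρ > 0, closedBall s (2 * ρ) ⊆ Ω := by
    obtain ⟨r, hr, hrs⟩ := Metric.nhds_basis_closedBall.mem_iff.1 (hΩ.mem_nhds hs)
    exact ⟨r / 2, half_pos hr, by rwa [mul_div_cancel₀ _ (two_ne_zero)]⟩
  obtain ⟨M, hM⟩ := (isCompact_closedBall s (2 * ρ)).exists_bound_of_continuousOn
    (f := ψ) fun w hw => (hψc w (hρΩ hw)).continuousWithinAt
  have hM0 : 0 ≤ M := (norm_nonneg _).trans (hM s (mem_closedBall_self (by linarith)))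
  have hline : ∀ a ∈ ball s ρ, ∀ v : Cn n, ‖v‖ ≤ ρ → ∀ ζ ∈ closedBall (0:ℂ) 1,
      a + ζ • v ∈ closedBall s (2 * ρ) := by
    intro a ha v hv ζ hζ
    rw [mem_closedBall, dist_eq_norm]
    rw [mem_ball, dist_eq_norm] at ha
    have h1 : a + ζ • v - s = (a - s) + ζ • v := by abel
    rw [h1]
    refine (norm_add_le _ _).trans ?_
    rw [norm_smul]
    have h2 : ‖ζ‖ ≤ 1 := by simpa using hζ
    nlinarith [norm_nonneg v]
  have key : ∀ a ∈ Reg, a ∈ ball s ρ → ∀ v : Cn n, ‖v‖ ≤ ρ →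
      ‖fderiv ℂ ψ a v‖ ≤ 2 * M ∧ ∀ ζ ∈ ball (0:ℂ) 1, a + ζ • v ∈ Reg →
        ‖ψ (a + ζ • v) - ψ a - ζ * fderiv ℂ ψ a v‖ ≤ 4 * M * ‖ζ‖ ^ 2 := by
    rintro _ ⟨z0, ⟨hz0, hJ0⟩, rfl⟩ ha v hv
    have hcont : Continuous fun ζ : ℂ => F z0 + ζ • v := by fun_prop
    have hder : HasDerivAt (fun ζ : ℂ => ψ (F z0 + ζ • v)) (fderiv ℂ ψ (F z0) v) 0 := by
      have h1 := (hψd z0 hz0 hJ0).hasFDerivAt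
      have h2 : HasDerivAt (fun ζ : ℂ => F z0 + ζ • v) v 0 := by
        simpa using ((hasDerivAt_id (0:ℂ)).smul_const v).const_add (F z0)
      refine HasFDerivAt.comp_hasDerivAt (f := fun ζ : ℂ => F z0 + ζ • v) (0:ℂ) ?_ h2
      simpa using h1
    have h1 := h.line_taylor hprop (a := F z0) (v := v)
      (fun ζ hζ => hρΩ (hline _ ha v hv ζ hζ)) (f := fun ζ : ℂ => ψ (F z0 + ζ • v))
      (fun ζ hζ => (ContinuousAt.comp (g := ψ) (f := fun ζ : ℂ => F z0 + ζ • v) (x := ζ) (hψc _ (hρΩ (hline _ ha v hv ζ hζ)))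
        hcont.continuousAt).continuousWithinAt)
      (by
        intro z hz hJ ζ hζ hFz
        have h1 := hψd z hz hJ
        rw [hFz] at h1
        exact DifferentiableAt.comp (g := ψ) (f := fun ζ : ℂ => F z0 + ζ • v) ζ h1 (by fun_prop))
      (fun ζ hζ => hM _ (hline _ ha v hv ζ hζ)) hz0 hJ0 rfl
    rw [hder.deriv] at h1
    refine ⟨h1.1, ?_⟩
    rintro ζ hζ ⟨z, ⟨hz, hJ⟩, hFz⟩
    have h2 := h1.2 z hz hJ ζ hζ hFz
    simpa using h2
  -- rescaled form of the estimate
  have key2 : ∀ a ∈ Reg, a ∈ ball s ρ → ‖fderiv ℂ ψ a‖ ≤ 2 * M / ρ ∧ ∀ b ∈ Reg, ‖b - a‖ < ρ →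
      ‖ψ b - ψ a - fderiv ℂ ψ a (b - a)‖ ≤ 4 * M / ρ ^ 2 * ‖b - a‖ ^ 2 := by
    intro a ha has
    constructor
    · refine ContinuousLinearMap.opNorm_le_of_shell' (ε := ρ) (c := (2⁻¹ : ℂ)) hρ
        (div_nonneg (by linarith) hρ.le) (by norm_num) ?_
      intro x hx1 hx2
      have hx0 : 0 < ‖x‖ := lt_of_lt_of_le (mul_pos hρ (by norm_num)) hx1
      have h1 := (key a ha has ((ρ / ‖x‖ : ℂ) • x) (by
        rw [norm_smul, norm_div, Complex.norm_real, Complex.norm_real, norm_norm,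
          Real.norm_of_nonneg hρ.le, div_mul_cancel₀ _ hx0.ne'])).1
      rw [map_smul, norm_smul, norm_div, Complex.norm_real, Complex.norm_real, norm_norm,
          Real.norm_of_nonneg hρ.le] at h1
      have h2 : ‖fderiv ℂ ψ a x‖ = (ρ / ‖x‖ * ‖fderiv ℂ ψ a x‖) * (‖x‖ / ρ) := by
        field_simp
      rw [h2]
      calc _ ≤ 2 * M * (‖x‖ / ρ) := by gcongr
        _ = _ := by ring
    · intro b hb hba
      rcases eq_or_ne b a with rfl | hne
      · simp
      have hx0 : 0 < ‖b - a‖ := norm_pos_iff.2 (sub_ne_zero.2 hne)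
      have hc1 : ((‖b - a‖ / ρ : ℂ)) • ((ρ / ‖b - a‖ : ℂ) • (b - a)) = b - a := by
        rw [smul_smul, div_mul_div_comm, mul_comm, div_self, one_smul]
        exact mul_ne_zero (by exact_mod_cast hρ.ne') (by exact_mod_cast hx0.ne')
      have hnn : ‖(‖b - a‖ / ρ : ℂ)‖ = ‖b - a‖ / ρ := by
        rw [norm_div, Complex.norm_real, Complex.norm_real, norm_norm, Real.norm_of_nonneg hρ.le]
      have h1 := (key a ha has ((ρ / ‖b - a‖ : ℂ) • (b - a)) (by
        rw [norm_smul, norm_div, Complex.norm_real, Complex.norm_real, norm_norm,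
          Real.norm_of_nonneg hρ.le, div_mul_cancel₀ _ hx0.ne'])).2 (‖b - a‖ / ρ : ℂ)
        (by rw [mem_ball_zero_iff, hnn, div_lt_one hρ]; exact hba)
        (by rw [hc1, add_sub_cancel]; exact hb)
      rw [← smul_eq_mul (‖b - a‖ / ρ : ℂ), ← map_smul, hc1, add_sub_cancel, hnn] at h1
      refine h1.trans (le_of_eq ?_)
      rw [div_pow]; ring
  have hsR : ∀ ε > 0, ∃ a ∈ Reg, a ∈ ball s ε := fun ε hε => by
    obtain ⟨a, h1, h2⟩ := hdense (ball s ε) isOpen_ball ⟨s, mem_ball_self hε, hs⟩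
    exact ⟨a, h2, h1⟩
  choose a haR hab using fun k : ℕ => hsR (ρ / (k + 1)) (by positivity)
  have habρ : ∀ k, a k ∈ ball s ρ := fun k =>
    ball_subset_ball (div_le_self hρ.le (by linarith [(Nat.cast_nonneg k : (0:ℝ) ≤ k)])) (hab k)
  have halim : Tendsto a atTop (𝓝 s) := by
    rw [tendsto_iff_dist_tendsto_zero]
    refine squeeze_zero (fun _ => dist_nonneg) (fun k => (mem_ball.1 (hab k)).le) ?_
    have := (tendsto_one_div_add_atTop_nhds_zero_nat (𝕜 := ℝ)).const_mul ρ
    simpa [div_eq_mul_inv] using this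
  obtain ⟨L, -, φ, hφ, hL⟩ := (isCompact_closedBall (0 : Cn n →L[ℂ] ℂ) (2 * M / ρ)).tendsto_subseq
    (x := fun k => fderiv ℂ ψ (a k)) fun k => by
      rw [mem_closedBall_zero_iff]; exact (key2 _ (haR k) (habρ k)).1
  have halim' := halim.comp hφ.tendsto_atTop
  have est1 : ∀ b ∈ Reg, b ∈ ball s ρ → ‖ψ b - ψ s - L (b - s)‖ ≤ 4 * M / ρ ^ 2 * ‖b - s‖ ^ 2 := by
    intro b hb hbs
    have h1 : Tendsto (fun k => ‖b - a (φ k)‖) atTop (𝓝 ‖b - s‖) := (halim'.const_sub b).norm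
    have hL' : Tendsto (fun k => fderiv ℂ ψ (a (φ k))) atTop (𝓝 L) := hL
    have h2 : Tendsto (fun k => ψ b - ψ (a (φ k)) - fderiv ℂ ψ (a (φ k)) (b - a (φ k))) atTop
        (𝓝 (ψ b - ψ s - L (b - s))) :=
      (((hψc s hs).tendsto.comp halim').const_sub (ψ b)).sub 
        (((isBoundedBilinearMap_apply (𝕜 := ℂ)).continuous.tendsto (L, b - s)).comp
          (hL'.prodMk_nhds (halim'.const_sub b)))
    refine le_of_tendsto_of_tendsto h2.norm ((h1.pow 2).const_mul _) ?_
    have h3 : ‖b - s‖ < ρ := by rwa [← dist_eq_norm]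
    filter_upwards [h1.eventually (gt_mem_nhds h3)] with k hk
    exact (key2 _ (haR _) (habρ _)).2 b hb hk
  have est2 : ∀ b ∈ ball s ρ, ‖ψ b - ψ s - L (b - s)‖ ≤ 4 * M / ρ ^ 2 * ‖b - s‖ ^ 2 := by
    intro b hb
    have hbΩ : b ∈ Ω := hρΩ (ball_subset_closedBall.trans
      (closedBall_subset_closedBall (by linarith)) hb)
    have hcl : ContinuousAt (fun b => 4 * M / ρ ^ 2 * ‖b - s‖ ^ 2 - ‖ψ b - ψ s - L (b - s)‖) b := by
      have := hψc b hbΩ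
      fun_prop
    by_contra hlt
    push Not at hlt
    have h1 : ∀ᶠ y in 𝓝 b, 4 * M / ρ ^ 2 * ‖y - s‖ ^ 2 - ‖ψ y - ψ s - L (y - s)‖ < 0 :=
      hcl.tendsto.eventually (gt_mem_nhds (by linarith))
    obtain ⟨O, hO, hOo, hbO⟩ := _root_.mem_nhds_iff.1 (inter_mem h1 (isOpen_ball.mem_nhds hb))
    obtain ⟨y, hyO, hyR⟩ := hdense O hOo ⟨b, hbO, hbΩ⟩
    have h2 := (hO hyO).1
    have h3 := est1 y hyR (hO hyO).2
    simp only [mem_ofPred_eq] at h2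
    linarith
  have hfin : HasFDerivAt ψ L s := by
    rw [hasFDerivAt_iff_isLittleO]
    have hO : (fun b => ψ b - ψ s - L (b - s)) =O[𝓝 s] fun b => ‖b - s‖ ^ 2 := by
      refine Asymptotics.IsBigO.of_bound (4 * M / ρ ^ 2) ?_
      filter_upwards [ball_mem_nhds s hρ] with b hb
      rw [norm_pow, norm_norm]
      exact est2 b hb
    refine hO.trans_isLittleO ?_
    have := (Asymptotics.isLittleO_norm_pow_id (E' := Cn n) (one_lt_two)).comp_tendsto
      (tendsto_sub_nhds_zero_iff.2 (tendsto_id (x := 𝓝 s)))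
    simpa [Function.comp_def] using this
  exact hfin.differentiableAt

lemma FiniteHolo.descent (h : FiniteHolo E Ω F) (hΩ : IsOpen Ω)
    (hprop : ProperOn n F E Ω) {Q Ψ : Cn n → Cn n} (hQ : DifferentiableOn ℂ Q E)
    (hΨ : ∀ z ∈ E, Ψ (F z) = Q z) : DifferentiableOn ℂ Ψ Ω := by
  rw [differentiableOn_euclidean] at hQ ⊢
  exact fun i => h.descent_scalar hΩ hprop (hQ i) fun z hz => by rw [hΨ z hz]

end Descent

/-! ### Automorphisms of the ball -/

section Moebius
variable {n : ℕ}

/-- The involutive automorphism of the unit ball exchanging `0` and `a`, written with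
`s = √(1 - ‖a‖²)`. -/
noncomputable def moebius (a y : Cn n) : Cn n :=
  (1 - inner ℂ a y)⁻¹ • ((1 - inner ℂ a y / (1 + (√(1 - ‖a‖ ^ 2) : ℂ))) • a
    - (√(1 - ‖a‖ ^ 2) : ℂ) • y)

lemma norm_inner_lt_one {a y : Cn n} (ha : ‖a‖ < 1) (hy : ‖y‖ ≤ 1) : ‖inner ℂ a y‖ < 1 := by
  have := norm_inner_le_norm (𝕜 := ℂ) a y
  nlinarith [norm_nonneg a, norm_nonneg y]

lemma one_sub_inner_ne_zero {a y : Cn n} (ha : ‖a‖ < 1) (hy : ‖y‖ ≤ 1) :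
    1 - inner ℂ a y ≠ 0 := by
  intro h
  have h1 := norm_inner_lt_one ha hy
  rw [← sub_eq_zero.1 h, norm_one] at h1
  exact lt_irrefl _ h1

lemma differentiableOn_moebius {a : Cn n} (ha : ‖a‖ < 1) :
    DifferentiableOn ℂ (moebius a) (ball 0 1) := by
  have hi : Differentiable ℂ fun y : Cn n => inner ℂ a y := (innerSL ℂ a).differentiable
  intro y hy
  refine DifferentiableAt.differentiableWithinAt ?_
  have hne := one_sub_inner_ne_zero ha (mem_ball_zero_iff.1 hy).le
  have hi' := hi y
  unfold moebius
  refine DifferentiableAt.smul (DifferentiableAt.inv (hi'.const_sub 1) hne) ?_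
  refine DifferentiableAt.sub ?_ (by fun_prop)
  have h3 : DifferentiableAt ℂ (fun y : Cn n =>
      1 - inner ℂ a y * (1 + (√(1 - ‖a‖ ^ 2) : ℂ))⁻¹) y := (hi'.mul_const _).const_sub 1
  simp only [div_eq_mul_inv]
  exact h3.smul_const a

lemma one_sub_norm_moebius {a y : Cn n} (ha : ‖a‖ < 1) (hy : ‖y‖ < 1) :
    (1 - ‖moebius a y‖ ^ 2) * ‖1 - inner ℂ a y‖ ^ 2 = (1 - ‖a‖ ^ 2) * (1 - ‖y‖ ^ 2) := by
  have hne := one_sub_inner_ne_zero ha hy.le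
  have hpos : 0 ≤ 1 - ‖a‖ ^ 2 := by nlinarith [norm_nonneg a]
  set s := √(1 - ‖a‖ ^ 2) with hs
  have hs0 : 0 ≤ s := Real.sqrt_nonneg _
  have hs2 : s ^ 2 = 1 - ‖a‖ ^ 2 := Real.sq_sqrt hpos
  have h1s : (1 + (s : ℂ)) ≠ 0 := by
    have : (1 + s : ℝ) ≠ 0 := by positivity
    exact_mod_cast this
  set c := inner ℂ a y / (1 + (s : ℂ)) with hc
  have hu : inner ℂ a y = (1 + s) * c := by rw [hc]; field_simp
  have hm : ‖moebius a y‖ ^ 2 * ‖1 - inner ℂ a y‖ ^ 2 = ‖(1 - c) • a - (s : ℂ) • y‖ ^ 2 := by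
    unfold moebius
    rw [← hs, ← hc, norm_smul, norm_inv]
    have : ‖1 - inner ℂ a y‖ ≠ 0 := norm_ne_zero_iff.2 hne
    field_simp
  have h2 : ‖(1 - c) • a - (s : ℂ) • y‖ ^ 2
      = ‖1 - c‖ ^ 2 * ‖a‖ ^ 2 - 2 * ((starRingEnd ℂ (1 - c)) * (s * ((1 + s) * c))).re
        + s ^ 2 * ‖y‖ ^ 2 := by
    rw [@norm_sub_sq ℂ, inner_smul_left, inner_smul_right, hu, norm_smul, norm_smul, mul_pow,
      mul_pow, Complex.norm_real, Real.norm_of_nonneg hs0]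
    rfl
  rw [sub_mul, hm, h2, hu, one_mul]
  have ha2 : ‖a‖ ^ 2 = 1 - s ^ 2 := by linarith
  rw [ha2, ← Complex.normSq_eq_norm_sq, ← Complex.normSq_eq_norm_sq, Complex.normSq_apply,
    Complex.normSq_apply]
  simp
  ring

lemma norm_moebius_lt {a y : Cn n} (ha : ‖a‖ < 1) (hy : ‖y‖ < 1) : ‖moebius a y‖ < 1 := by
  have h := one_sub_norm_moebius ha hy
  have h1 : 0 < (1 - ‖a‖ ^ 2) * (1 - ‖y‖ ^ 2) := by
    refine mul_pos ?_ ?_ <;> nlinarith [norm_nonneg a, norm_nonneg y]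
  rw [← h] at h1
  have h2 := pos_of_mul_pos_left h1 (sq_nonneg _)
  nlinarith [norm_nonneg (moebius a y)]

lemma moebius_self (a : Cn n) (ha : ‖a‖ < 1) : moebius a a = 0 := by
  have hpos : 0 ≤ 1 - ‖a‖ ^ 2 := by nlinarith [norm_nonneg a]
  have hs2 : (√(1 - ‖a‖ ^ 2)) ^ 2 = 1 - ‖a‖ ^ 2 := Real.sq_sqrt hpos
  have hs0 := Real.sqrt_nonneg (1 - ‖a‖ ^ 2)
  unfold moebius
  set s := √(1 - ‖a‖ ^ 2) with hs
  have h1s : (1 + (s : ℂ)) ≠ 0 := by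
    have : (1 + s : ℝ) ≠ 0 := by positivity
    exact_mod_cast this
  have hi : (inner ℂ a a : ℂ) = 1 - (s : ℂ) ^ 2 := by
    rw [inner_self_eq_norm_sq_to_K]
    have : ‖a‖ ^ 2 = 1 - s ^ 2 := by linarith
    have h2 : ((‖a‖ : ℂ)) ^ 2 = 1 - (s : ℂ) ^ 2 := by exact_mod_cast congrArg ((↑) : ℝ → ℂ) this
    exact h2
  have : (1 - inner ℂ a a / (1 + (s : ℂ))) = s := by
    rw [hi]; field_simp; ring
  rw [this, sub_self, smul_zero]

lemma moebius_zero (a : Cn n) : moebius a 0 = a := by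
  simp [moebius]

lemma moebius_moebius {a y : Cn n} (ha : ‖a‖ < 1) (hy : ‖y‖ < 1) :
    moebius a (moebius a y) = y := by
  have hne := one_sub_inner_ne_zero ha hy.le
  have hpos : 0 < 1 - ‖a‖ ^ 2 := by nlinarith [norm_nonneg a]
  have hs2 : (√(1 - ‖a‖ ^ 2)) ^ 2 = 1 - ‖a‖ ^ 2 := Real.sq_sqrt hpos.le
  have hs0 := Real.sqrt_pos.2 hpos
  set s := √(1 - ‖a‖ ^ 2) with hs
  have h1s : (1 + (s : ℂ)) ≠ 0 := by
    have : (1 + s : ℝ) ≠ 0 := by positivity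
    exact_mod_cast this
  have hsc : (s : ℂ) ≠ 0 := by exact_mod_cast hs0.ne'
  have hi : (inner ℂ a a : ℂ) = 1 - (s : ℂ) ^ 2 := by
    rw [inner_self_eq_norm_sq_to_K]
    have : ‖a‖ ^ 2 = 1 - s ^ 2 := by linarith
    have h2 : ((‖a‖ : ℂ)) ^ 2 = 1 - (s : ℂ) ^ 2 := by exact_mod_cast congrArg ((↑) : ℝ → ℂ) this
    exact h2
  set u := inner ℂ a y with hu
  have hm : moebius a y = (1 - u)⁻¹ • ((1 - u / (1 + (s : ℂ))) • a - (s : ℂ) • y) := rfl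
  have hiu : inner ℂ a (moebius a y) = (1 - u)⁻¹ * (1 - s ^ 2 - u) := by
    rw [hm, inner_smul_right, inner_sub_right, inner_smul_right, inner_smul_right, hi, ← hu]
    field_simp
    ring
  have h1 : 1 - inner ℂ a (moebius a y) = s ^ 2 / (1 - u) := by
    rw [hiu]; field_simp; ring
  have hm2 : moebius a (moebius a y) = (1 - inner ℂ a (moebius a y))⁻¹ •
    ((1 - inner ℂ a (moebius a y) / (1 + (s : ℂ))) • a - (s : ℂ) • moebius a y) := rfl
  rw [hm2, h1, hiu, hm, smul_sub, smul_sub, smul_sub, smul_sub]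
  simp only [smul_smul]
  have e1 : (s ^ 2 / (1 - u))⁻¹ * (1 - (1 - u)⁻¹ * (1 - s ^ 2 - u) / (1 + (s : ℂ)))
      = (s ^ 2 / (1 - u))⁻¹ * (s * ((1 - u)⁻¹ * (1 - u / (1 + s)))) := by
    congr 1
    field_simp
    ring
  have e2 : (s ^ 2 / (1 - u))⁻¹ * (s * ((1 - u)⁻¹ * s)) = 1 := by
    field_simp
  rw [e1, e2, one_smul]
  abel

/-- An automorphism `h` of the ball with `h x₀ = 0` changes the defining function of the ball
by an explicit factor. -/
lemma one_sub_norm_aut {h : Equiv.Perm (BallPt n)} (hh : IsBallAut n h) {x0 : BallPt n}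
    (h0 : (h x0 : Cn n) = 0) (y : BallPt n) :
    (1 - ‖(h y : Cn n)‖ ^ 2) * ‖1 - inner ℂ (x0 : Cn n) (y : Cn n)‖ ^ 2
      = (1 - ‖(x0 : Cn n)‖ ^ 2) * (1 - ‖(y : Cn n)‖ ^ 2) := by
  obtain ⟨⟨g, hg, hgh⟩, ⟨g', hg', hgh'⟩⟩ := hh
  have hb : ∀ z : BallPt n, ‖(z : Cn n)‖ < 1 := fun z => mem_ball_zero_iff.1 z.2
  have ha := hb x0
  set a : Cn n := (x0 : Cn n) with hadef
  have hmb : MapsTo (moebius a) (ball 0 1) (ball 0 1) := fun z hz =>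
    mem_ball_zero_iff.2 (norm_moebius_lt ha (mem_ball_zero_iff.1 hz))
  have hgb : MapsTo g (ball 0 1) (ball 0 1) := fun z hz => by
    rw [hgh ⟨z, hz⟩]; exact (h ⟨z, hz⟩).2
  have hgb' : MapsTo g' (ball 0 1) (ball 0 1) := fun z hz => by
    rw [hgh' ⟨z, hz⟩]; exact (h.symm ⟨z, hz⟩).2
  have hle : ‖(h y : Cn n)‖ ≤ ‖moebius a y‖ := by
    have := Complex.norm_le_norm_of_mapsTo_ball (f := fun z => g (moebius a z))
      (hg.comp (differentiableOn_moebius ha) hmb)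
      (fun z hz => ball_subset_closedBall (hgb (hmb hz)))
      (by simp only [moebius_zero]; rw [hadef, hgh, h0]) (norm_moebius_lt ha (hb y))
    simp only [moebius_moebius ha (hb y), hgh] at this
    exact this
  have hge : ‖moebius a y‖ ≤ ‖(h y : Cn n)‖ := by
    have hx : h.symm ⟨0, by simp⟩ = x0 := by
      rw [Equiv.symm_apply_eq]; exact Subtype.ext h0.symm
    have := Complex.norm_le_norm_of_mapsTo_ball (f := fun z => moebius a (g' z))
      ((differentiableOn_moebius ha).comp hg' hgb')
      (fun z hz => ball_subset_closedBall (hmb (hgb' hz)))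
      (by
        have h1 := hgh' ⟨0, by simp⟩
        rw [hx] at h1
        simp only [h1]
        exact moebius_self a ha) (hb (h y))
    simp only [hgh', Equiv.symm_apply_apply] at this
    exact this
  rw [le_antisymm hle hge]
  exact one_sub_norm_moebius ha (hb y)

/-- The ratio of the defining functions at `y` and at a shrunk point `y'` cannot be compensated
by the factors of `one_sub_norm_aut` when `y` is close to the sphere. -/
lemma norm_sq_bound {a y y' : Cn n} (ha : ‖a‖ < 1) (hy : ‖y‖ < 1) {t P : ℝ} (hP0 : 0 ≤ P) (ht0 : 0 ≤ t)
    (ht : t < 1) (h1 : ‖y'‖ ≤ t * ‖y‖) (h2 : ‖y - y'‖ ≤ P * (1 - t) * ‖y‖)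
    (h : (1 - ‖y'‖ ^ 2) * ‖1 - inner ℂ a y‖ ^ 2 = (1 - ‖y‖ ^ 2) * ‖1 - inner ℂ a y'‖ ^ 2) :
    ‖y‖ ^ 2 * (1 - ‖a‖) ^ 2 ≤ 4 * P * (1 - ‖y‖ ^ 2) := by
  set d := ‖1 - inner ℂ a y‖
  set d' := ‖1 - inner ℂ a y'‖
  have hy' : ‖y'‖ ≤ 1 := h1.trans (by nlinarith [norm_nonneg y])
  have hP : 0 ≤ P * ‖y‖ := mul_nonneg hP0 (norm_nonneg y)
  have hd : 1 - ‖a‖ ≤ d := by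
    have e1 := norm_inner_le_norm (𝕜 := ℂ) a y
    have e2 := norm_sub_norm_le (1:ℂ) (inner ℂ a y)
    rw [norm_one] at e2
    have : ‖a‖ * ‖y‖ ≤ ‖a‖ := by nlinarith [norm_nonneg a]
    simp only [d]; linarith
  have hd2 : ∀ z : Cn n, ‖z‖ ≤ 1 → ‖1 - inner ℂ a z‖ ≤ 2 := by
    intro z hz
    have e1 := norm_inner_lt_one ha hz
    have e2 := norm_sub_le (1:ℂ) (inner ℂ a z)
    rw [norm_one] at e2
    linarith
  have hdd : d' - d ≤ P * (1 - t) * ‖y‖ := by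
    have e1 := norm_sub_norm_le (1 - inner ℂ a y') (1 - inner ℂ a y)
    have e2 : (1 - inner ℂ a y') - (1 - inner ℂ a y) = inner ℂ a (y - y') := by
      rw [inner_sub_right]; ring
    rw [e2] at e1
    have e3 := norm_inner_le_norm (𝕜 := ℂ) a (y - y')
    have e4 : ‖a‖ * ‖y - y'‖ ≤ ‖y - y'‖ := by nlinarith [norm_nonneg (y - y')]
    simp only [d, d']; linarith
  have hda := hd2 y hy.le
  have hdb := hd2 y' hy'
  have hd0 : 0 ≤ d := norm_nonneg _
  have hd0' : 0 ≤ d' := norm_nonneg _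
  have hyy : 0 < 1 - ‖y‖ ^ 2 := by nlinarith [norm_nonneg y]
  -- `(‖y‖² - ‖y'‖²) d² = (1 - ‖y‖²) (d'² - d²)`
  have hkey : (‖y‖ ^ 2 - ‖y'‖ ^ 2) * d ^ 2 = (1 - ‖y‖ ^ 2) * (d' ^ 2 - d ^ 2) := by
    linear_combination h
  have hL : (1 - t) * ‖y‖ ^ 2 * (1 - ‖a‖) ^ 2 ≤ (‖y‖ ^ 2 - ‖y'‖ ^ 2) * d ^ 2 := by
    have e1 : (1 - t) * ‖y‖ ^ 2 ≤ ‖y‖ ^ 2 - ‖y'‖ ^ 2 := by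
      have : ‖y'‖ ^ 2 ≤ (t * ‖y‖) ^ 2 := pow_le_pow_left₀ (norm_nonneg _) h1 2
      nlinarith [sq_nonneg ‖y‖, mul_nonneg ht0 (sub_nonneg.2 ht.le)]
    have e2 : (1 - ‖a‖) ^ 2 ≤ d ^ 2 := pow_le_pow_left₀ (by linarith) hd 2
    refine mul_le_mul e1 e2 (sq_nonneg _) (le_trans ?_ e1)
    exact mul_nonneg (by linarith) (sq_nonneg _)
  have hR : d' ^ 2 - d ^ 2 ≤ 4 * (P * (1 - t) * ‖y‖) := by
    have e1 : d' ^ 2 - d ^ 2 = (d' - d) * (d' + d) := by ring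
    have e0 : 0 ≤ P * (1 - t) * ‖y‖ := by nlinarith
    rw [e1]
    nlinarith
  have hR2 : (1 - ‖y‖ ^ 2) * (d' ^ 2 - d ^ 2) ≤ (1 - ‖y‖ ^ 2) * (4 * (P * (1 - t) * ‖y‖)) :=
    mul_le_mul_of_nonneg_left hR hyy.le
  have hP2 : (P * ‖y‖) * (1 - ‖y‖ ^ 2) ≤ P * (1 - ‖y‖ ^ 2) := by
    nlinarith [mul_nonneg hP0 hyy.le]
  have h1t : 0 < 1 - t := by linarith
  refine le_of_mul_le_mul_left ?_ h1t
  calc (1 - t) * (‖y‖ ^ 2 * (1 - ‖a‖) ^ 2) = (1 - t) * ‖y‖ ^ 2 * (1 - ‖a‖) ^ 2 := by ring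
    _ ≤ (1 - ‖y‖ ^ 2) * (4 * (P * (1 - t) * ‖y‖)) := hL.trans (hkey.le.trans hR2)
    _ = (1 - t) * (4 * ((P * ‖y‖) * (1 - ‖y‖ ^ 2))) := by ring
    _ ≤ (1 - t) * (4 * P * (1 - ‖y‖ ^ 2)) := by
      refine mul_le_mul_of_nonneg_left ?_ h1t.le
      linarith

end Moebius

/-! ### Reflections in a finite group of automorphisms of the ball -/

section Reflections
variable {n : ℕ} {hn : 0 < n} {Γ : Subgroup (Equiv.Perm (BallPt n))}

lemma IsHoloPerm.mul {f g : Equiv.Perm (BallPt n)} (hf : IsHoloPerm n f) (hg : IsHoloPerm n g) :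
    IsHoloPerm n (f * g) := by
  obtain ⟨a, ha, haf⟩ := hf
  obtain ⟨b, hb, hbg⟩ := hg
  refine ⟨fun z => a (b z), ha.comp hb fun z hz => ?_, fun z => ?_⟩
  · rw [hbg ⟨z, hz⟩]; exact (g ⟨z, hz⟩).2
  · change a (b z) = _
    rw [hbg z, haf, Equiv.Perm.mul_apply]

lemma IsBallAut.mul {f g : Equiv.Perm (BallPt n)} (hf : IsBallAut n f) (hg : IsBallAut n g) :
    IsBallAut n (f * g) :=
  ⟨hf.1.mul hg.1, hg.2.mul hf.2⟩

lemma IsBallAut.inv {f : Equiv.Perm (BallPt n)} (hf : IsBallAut n f) : IsBallAut n f⁻¹ :=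
  ⟨hf.2, hf.1⟩

lemma IsFiniteBallAutSubgroup.aut (hΓ : IsFiniteBallAutSubgroup n Γ) {f : Equiv.Perm (BallPt n)}
    (hf : f ∈ Γ) : IsBallAut n f :=
  ⟨hΓ.2 f hf, hΓ.2 f⁻¹ (Γ.inv_mem hf)⟩

lemma IsFiniteBallAutSubgroup.finOrder (hΓ : IsFiniteBallAutSubgroup n Γ)
    {f : Equiv.Perm (BallPt n)} (hf : f ∈ Γ) : IsOfFinOrder f := by
  have : Finite Γ := hΓ.1
  exact Submonoid.isOfFinOrder_coe.2 (isOfFinOrder_of_finite (⟨f, hf⟩ : Γ))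

lemma IsReflection.conj {f g : Equiv.Perm (BallPt n)} (hf : IsReflection n hn f)
    (hg : IsBallAut n g) : IsReflection n hn (g * f * g⁻¹) := by
  obtain ⟨h1, h2, a, ha, hfa⟩ := hf
  refine ⟨(hg.mul h1).mul hg.inv, ?_, g * a, hg.mul ha, ?_⟩
  · exact (MulAut.conj g).toMonoidHom.isOfFinOrder h2
  · rw [Equiv.Perm.coe_mul g a, image_comp, ← hfa]
    ext z
    simp only [mem_ofPred_eq, Equiv.Perm.mul_apply, mem_image]
    constructor
    · intro hz
      refine ⟨g⁻¹ z, ?_, by simp⟩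
      rw [Equiv.Perm.eq_inv_iff_eq]; exact hz
    · rintro ⟨y, hy, rfl⟩
      simp [hy]

lemma reflSubgroup_le : reflSubgroup n hn Γ ≤ Γ :=
  (Subgroup.closure_le _).2 fun _ hf => hf.1

lemma reflSubgroup_conj (hΓ : IsFiniteBallAutSubgroup n Γ) {g : Equiv.Perm (BallPt n)}
    (hg : g ∈ Γ) {f : Equiv.Perm (BallPt n)} (hf : f ∈ reflSubgroup n hn Γ) :
    g * f * g⁻¹ ∈ reflSubgroup n hn Γ := by
  have : reflSubgroup n hn Γ ≤ (reflSubgroup n hn Γ).comap (MulAut.conj g).toMonoidHom := by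
    refine (Subgroup.closure_le _).2 ?_
    rintro f ⟨h1, h2⟩
    exact Subgroup.subset_closure ⟨Γ.mul_mem (Γ.mul_mem hg h1) (Γ.inv_mem hg), h2.conj (hΓ.aut hg)⟩
  exact this hf

/-- The permutation of the ball defined by a unitary map. -/
noncomputable def unitaryPerm (V : Cn n ≃ₗᵢ[ℂ] Cn n) : Equiv.Perm (BallPt n) where
  toFun z := ⟨V z, by simpa using mem_ball_zero_iff.1 z.2⟩
  invFun z := ⟨V.symm z, by simpa using mem_ball_zero_iff.1 z.2⟩
  left_inv z := by simp
  right_inv z := by simp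

lemma isBallAut_unitaryPerm (V : Cn n ≃ₗᵢ[ℂ] Cn n) : IsBallAut n (unitaryPerm V) :=
  ⟨⟨V, V.toContinuousLinearEquiv.differentiable.differentiableOn, fun _ => rfl⟩,
    ⟨V.symm, V.symm.toContinuousLinearEquiv.differentiable.differentiableOn, fun _ => rfl⟩⟩

lemma exists_unitary_hyperplane {hn : 0 < n} {L : Submodule ℂ (Cn n)}
    (hL : Module.finrank ℂ L + 1 = n) :
    ∃ V : Cn n ≃ₗᵢ[ℂ] Cn n, ∀ y, y ∈ L ↔ V y ⟨n - 1, Nat.sub_lt hn one_pos⟩ = 0 := by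
  have h1 := Submodule.finrank_add_finrank_orthogonal L
  rw [finrank_euclideanSpace, Fintype.card_fin] at h1
  have h2 : Module.finrank ℂ Lᗮ = 1 := by omega
  obtain ⟨e, he, hspan⟩ : ∃ e : Cn n, ‖e‖ = 1 ∧ Lᗮ = Submodule.span ℂ {e} := by
    obtain ⟨v, hv0, hv⟩ := finrank_eq_one_iff'.1 h2
    have hv0' : (v : Cn n) ≠ 0 := fun h => hv0 (Subtype.ext h)
    refine ⟨(‖(v : Cn n)‖⁻¹ : ℂ) • (v : Cn n), norm_smul_inv_norm hv0', ?_⟩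
    rw [Submodule.span_singleton_smul_eq]
    · refine le_antisymm (fun w hw => ?_) ?_
      · obtain ⟨c, hc⟩ := hv ⟨w, hw⟩
        exact Submodule.mem_span_singleton.2 ⟨c, congrArg Subtype.val hc⟩
      · rw [Submodule.span_singleton_le_iff_mem]; exact v.2
    · exact (IsUnit.mk0 _ (inv_ne_zero (by exact_mod_cast norm_ne_zero_iff.2 hv0')))
  set i0 : Fin n := ⟨n - 1, by omega⟩
  obtain ⟨b, hb⟩ := Orthonormal.exists_orthonormalBasis_extension_of_card_eq (𝕜 := ℂ)
    (E := Cn n) (ι := Fin n) (by simp) (v := fun _ => e) (s := {i0}) (by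
      constructor
      · intro i; exact he
      · intro i j hij; exact absurd (Subsingleton.elim i j) hij)
  refine ⟨b.repr, fun y => ?_⟩
  rw [b.repr_apply_apply, hb i0 rfl, ← Submodule.mem_orthogonal_singleton_iff_inner_right,
    ← Submodule.orthogonal_orthogonal L, hspan]

/-- The fixed space of a unitary map. -/
noncomputable def fixSpace (U : Cn n ≃ₗᵢ[ℂ] Cn n) : Submodule ℂ (Cn n) :=
  LinearMap.ker (U.toLinearEquiv.toLinearMap - LinearMap.id)

lemma mem_fixSpace {U : Cn n ≃ₗᵢ[ℂ] Cn n} {y : Cn n} : y ∈ fixSpace U ↔ U y = y := by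
  rw [fixSpace, LinearMap.mem_ker, LinearMap.sub_apply, sub_eq_zero]; rfl

lemma mem_reflSubgroup_of_finrank (hΓ : IsFiniteBallAutSubgroup n Γ) (C : ChevalleyData n hn Γ)
    {f : Equiv.Perm (BallPt n)} (hf : f ∈ Γ) {U : Cn n ≃ₗᵢ[ℂ] Cn n}
    (hU : RepresentsOnBall n (C.hmap * f * C.hmap⁻¹) U)
    (hr : n ≤ Module.finrank ℂ (fixSpace U) + 1) :
    f ∈ reflSubgroup n hn Γ := by
  set L := fixSpace U with hLdef
  have hmem : ∀ y, y ∈ L ↔ U y = y := fun y => mem_fixSpace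
  have hfU : ∀ y, f y = y ↔ ((C.hmap y : BallPt n) : Cn n) ∈ L := by
    intro y
    rw [hmem, ← hU (C.hmap y)]
    simp [Subtype.ext_iff.symm]
  have hle : Module.finrank ℂ L ≤ n := by
    simpa using Submodule.finrank_le L
  rcases Nat.lt_or_ge (Module.finrank ℂ L) n with hlt | hge
  · have h1 : Module.finrank ℂ L + 1 = n := by omega
    obtain ⟨V, hV⟩ := exists_unitary_hyperplane (hn := hn) h1
    refine Subgroup.subset_closure ⟨hf, hΓ.aut hf, hΓ.finOrder hf,
      C.hmap⁻¹ * (unitaryPerm V)⁻¹,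
      C.hmap_aut.inv.mul (isBallAut_unitaryPerm V).inv, ?_⟩
    rw [Equiv.image_eq_preimage_symm]
    ext y
    simp only [mem_ofPred_eq, mem_preimage]
    rw [hfU, hV]
    rfl
  · have h1 : L = ⊤ := Submodule.eq_top_of_finrank_eq (by simpa using le_antisymm hle hge)
    have : f = 1 := Equiv.ext fun y => (hfU y).2 (h1 ▸ Submodule.mem_top)
    rw [this]; exact one_mem _

/-- The fixed point set in `ℂⁿ` of a permutation of the ball. -/
def fixSet (f : Equiv.Perm (BallPt n)) : Set (Cn n) := Subtype.val '' {y : BallPt n | f y = y}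

lemma codimGE_fixSet (hΓ : IsFiniteBallAutSubgroup n Γ) (C : ChevalleyData n hn Γ)
    {f : Equiv.Perm (BallPt n)} (hf : f ∈ Γ) (hfr : f ∉ reflSubgroup n hn Γ) :
    CodimGE n 4 (fixSet f) := by
  obtain ⟨U, hU⟩ := C.conj_unitary f hf
  set L := fixSpace U with hLdef
  have hr : Module.finrank ℂ L + 2 ≤ n := by
    by_contra hlt
    exact hfr (mem_reflSubgroup_of_finrank hΓ C hf hU (by rw [← hLdef]; omega))
  have h1 : CodimGE n 4 ((L : Set (Cn n)) ∩ ball 0 1) :=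
    (codimGE_complex_submodule L hr).mono inter_subset_left
  obtain ⟨g, hg, hgh⟩ := C.hmap_aut.2
  refine (h1.image_holo isOpen_ball hg inter_subset_right).mono ?_
  rintro _ ⟨y, hy, rfl⟩
  refine ⟨C.hmap y, ⟨?_, (C.hmap y).2⟩, by rw [hgh, Equiv.symm_apply_apply]⟩
  change _ ∈ L
  rw [hLdef, mem_fixSpace]
  have h2 := hU (C.hmap y)
  have hy' : f y = y := hy
  simp only [Equiv.Perm.mul_apply, Equiv.Perm.inv_def, Equiv.symm_apply_apply, hy'] at h2
  exact h2.symm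

end Reflections

/-! ### Points of a fibre differ by an element of the reflection subgroup -/

section Monodromy
variable {n : ℕ} {hn : 0 < n} {Γ : Subgroup (Equiv.Perm (BallPt n))} {q : Fin n → ℕ}
  {Ω : Set (Cn n)} {F : Cn n → Cn n}

open Classical in
/-- A permutation of the ball, extended by `0` to `ℂⁿ`. -/
noncomputable def permExt (f : Equiv.Perm (BallPt n)) (y : Cn n) : Cn n :=
  if hy : y ∈ ball (0 : Cn n) 1 then (f ⟨y, hy⟩ : Cn n) else 0

lemma permExt_of_mem (f : Equiv.Perm (BallPt n)) {y : Cn n} (hy : y ∈ ball (0 : Cn n) 1) :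
    permExt f y = f ⟨y, hy⟩ := by
  simp [permExt, mem_ball_zero_iff.1 hy]

lemma permExt_mem (f : Equiv.Perm (BallPt n)) {y : Cn n} (hy : y ∈ ball (0 : Cn n) 1) :
    permExt f y ∈ ball (0 : Cn n) 1 := by
  rw [permExt_of_mem f hy]; exact (f ⟨y, hy⟩).2

lemma permExt_mul (f g : Equiv.Perm (BallPt n)) {y : Cn n} (hy : y ∈ ball (0 : Cn n) 1) :
    permExt (f * g) y = permExt f (permExt g y) := by
  rw [permExt_of_mem f (permExt_mem g hy), permExt_of_mem _ hy]
  simp [permExt_of_mem g hy]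

lemma permExt_inv {f : Equiv.Perm (BallPt n)} {y y' : Cn n} (hy : y ∈ ball (0 : Cn n) 1)
    (h : permExt f y = y') : permExt f⁻¹ y' = y := by
  rw [← h, ← permExt_mul _ _ hy, inv_mul_cancel, permExt_of_mem _ hy]
  rfl

lemma differentiableOn_permExt {f : Equiv.Perm (BallPt n)} (hf : IsHoloPerm n f) :
    DifferentiableOn ℂ (permExt f) (ball 0 1) := by
  obtain ⟨g, hg, hgf⟩ := hf
  exact hg.congr fun z hz => by rw [permExt_of_mem f hz, ← hgf]

lemma powMap_mem_ball {z : Cn n} (hz : z ∈ powDom q) : powMap q z ∈ ball (0 : Cn n) 1 :=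
  mem_ball_zero_iff.2 hz

lemma continuousAt_permExt_powMap {f : Equiv.Perm (BallPt n)} (hf : IsHoloPerm n f) {z : Cn n}
    (hz : z ∈ powDom q) : ContinuousAt (fun y => permExt f (powMap q y)) z :=
  ContinuousAt.comp (f := powMap q)
    ((differentiableOn_permExt hf).continuousOn.continuousAt
      (isOpen_ball.mem_nhds (powMap_mem_ball hz))) (continuous_powMap q).continuousAt

/-- The relation `γ φ(x) = φ(x')` is closed, so a pair close to `(x, x')` is related only by elements
which relate `x` and `x'`. -/
lemma eventually_rel (hΓ : IsFiniteBallAutSubgroup n Γ) {x x' : Cn n} (hx : x ∈ powDom q) :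
    ∀ᶠ y in 𝓝 (x, x'), ∀ f ∈ Γ, permExt f (powMap q y.1) = powMap q y.2 →
      permExt f (powMap q x) = powMap q x' := by
  refine (Filter.eventually_all_finite hΓ.1).2 fun f hf => ?_
  by_cases hxx : permExt f (powMap q x) = powMap q x'
  · exact Eventually.of_forall fun _ _ => hxx
  · have h1 : ContinuousAt (fun y : Cn n × Cn n => permExt f (powMap q y.1)) (x, x') :=
      ContinuousAt.comp (f := Prod.fst) (g := fun y => permExt f (powMap q y))
        (continuousAt_permExt_powMap (hΓ.2 f hf) hx) continuousAt_fst
    have h2 : ContinuousAt (fun y : Cn n × Cn n => powMap q y.2) (x, x') :=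
      ((continuous_powMap q).comp continuous_snd).continuousAt
    filter_upwards [(h1.tendsto.prodMk_nhds h2.tendsto).eventually
      (isClosed_diagonal.isOpen_compl.mem_nhds (x := (_, _)) hxx)] with y hy h3
    exact absurd h3 hy

/-- The points `z` of the pseudoellipsoid such that the isotropy group of `φ(z)` in `Γ` is
contained in the reflection subgroup. -/
def regSet (hn : 0 < n) (Γ : Subgroup (Equiv.Perm (BallPt n))) (q : Fin n → ℕ) : Set (Cn n) :=
  {z ∈ powDom q | ∀ f ∈ Γ, permExt f (powMap q z) = powMap q z → f ∈ reflSubgroup n hn Γ}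

lemma isOpen_regSet (hΓ : IsFiniteBallAutSubgroup n Γ) : IsOpen (regSet hn Γ q) := by
  rw [isOpen_iff_mem_nhds]
  rintro z ⟨hz, hzf⟩
  have h1 := (continuous_id.prodMk continuous_id).tendsto z |>.eventually
    (eventually_rel (q := q) hΓ (x := z) (x' := z) hz)
  filter_upwards [(isOpen_powDom q).mem_nhds hz, h1] with y hy h2
  exact ⟨hy, fun f hf hfy => hzf f hf (h2 f hf hfy)⟩

lemma codimGE_compl_regSet (hΓ : IsFiniteBallAutSubgroup n Γ) (C : ChevalleyData n hn Γ)
    (hq : ∀ j, 1 ≤ q j) : CodimGE n 4 (powDom q \ regSet hn Γ q) := by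
  have h1 : CodimGE n 4 (⋃ f ∈ {f | f ∈ Γ ∧ f ∉ reflSubgroup n hn Γ}, powMap q ⁻¹' fixSet f) :=
    codimGE_biUnion (hΓ.1.subset fun f hf => hf.1).countable fun f hf =>
      (codimGE_fixSet hΓ C hf.1 hf.2).preimage_powMap hq
  refine h1.mono ?_
  rintro z ⟨hz, hzr⟩
  simp only [regSet, mem_ofPred_eq, not_and, not_forall] at hzr
  obtain ⟨f, hf, hfz, hfr⟩ := hzr hz
  refine mem_biUnion (show f ∈ {f | f ∈ Γ ∧ f ∉ reflSubgroup n hn Γ} from ⟨hf, hfr⟩) ?_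
  refine ⟨⟨_, powMap_mem_ball hz⟩, ?_, rfl⟩
  rw [permExt_of_mem f (powMap_mem_ball hz)] at hfz
  exact Subtype.ext hfz

/-- The reflection subgroup, as a subgroup of `Γ`. -/
def reflIn (hn : 0 < n) (Γ : Subgroup (Equiv.Perm (BallPt n))) : Subgroup Γ :=
  (reflSubgroup n hn Γ).subgroupOf Γ

lemma reflIn_normal (hΓ : IsFiniteBallAutSubgroup n Γ) : (reflIn hn Γ).Normal :=
  ⟨fun _ hf g => reflSubgroup_conj hΓ g.2 hf⟩

open Classical in
/-- The class modulo the reflection subgroup of an element of `Γ` carrying `φ(x)` to `φ(x')`. -/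
noncomputable def relClass (hn : 0 < n) (Γ : Subgroup (Equiv.Perm (BallPt n))) (q : Fin n → ℕ)
    (x x' : Cn n) : Γ ⧸ reflIn hn Γ :=
  if h : ∃ f : Γ, permExt f.1 (powMap q x) = powMap q x' then QuotientGroup.mk h.choose
  else QuotientGroup.mk 1

lemma relClass_eq {x x' : Cn n} (hx : x ∈ regSet hn Γ q) (f : Γ)
    (hf : permExt f.1 (powMap q x) = powMap q x') : relClass hn Γ q x x' = QuotientGroup.mk f := by
  have h : ∃ f : Γ, permExt f.1 (powMap q x) = powMap q x' := ⟨f, hf⟩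
  rw [relClass, dif_pos h, QuotientGroup.eq]
  have hb := powMap_mem_ball hx.1
  refine hx.2 _ (h.choose⁻¹ * f).2 ?_
  have h1 := permExt_inv hb h.choose_spec
  change permExt (h.choose.1⁻¹ * f.1) (powMap q x) = powMap q x
  rw [permExt_mul _ _ hb, hf]
  exact h1

/-- The hypothesis that points of the same fibre of `F` are related by `Γ`. -/
def FibreRel (Γ : Subgroup (Equiv.Perm (BallPt n))) (q : Fin n → ℕ) (F : Cn n → Cn n) : Prop :=
  ∀ x ∈ powDom q, ∀ x' ∈ powDom q, F x = F x' →
    ∃ f ∈ Γ, permExt f (powMap q x) = powMap q x'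

lemma mem_regSet_of_fibre (hΓ : IsFiniteBallAutSubgroup n Γ) (hrel : FibreRel Γ q F)
    {x x' : Cn n} (hx : x ∈ regSet hn Γ q) (hx' : x' ∈ powDom q) (hF : F x = F x') :
    x' ∈ regSet hn Γ q := by
  refine ⟨hx', fun f hf hfx => ?_⟩
  obtain ⟨g, hg, hgx⟩ := hrel x hx.1 x' hx' hF
  have hb := powMap_mem_ball hx.1
  have hb' := powMap_mem_ball hx'
  have h1 : g⁻¹ * f * g ∈ reflSubgroup n hn Γ := by
    refine hx.2 _ (Γ.mul_mem (Γ.mul_mem (Γ.inv_mem hg) hf) hg) ?_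
    rw [permExt_mul _ _ hb, hgx, permExt_mul _ _ hb', hfx]
    exact permExt_inv hb hgx
  have h2 := reflSubgroup_conj hΓ hg h1
  have h3 : g * (g⁻¹ * f * g) * g⁻¹ = f := by group
  rwa [h3] at h2

lemma fibreCocycle_relClass (hΓ : IsFiniteBallAutSubgroup n Γ) (C : ChevalleyData n hn Γ)
    (hq : ∀ j, 1 ≤ q j) (h : FiniteHolo (powDom q) Ω F) (hrel : FibreRel Γ q F)
    [(reflIn hn Γ).Normal] :
    FibreCocycle (powDom q) (regSet hn Γ q) (F '' (powDom q \ regSet hn Γ q)) F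
      (relClass hn Γ q) where
  isOpen_reg := isOpen_regSet hΓ
  sub := fun _ hx => hx.1
  sat := by
    intro x hx
    constructor
    · rintro hxr ⟨y, ⟨hy, hyr⟩, hyF⟩
      exact hyr (mem_regSet_of_fibre hΓ hrel hxr hy hyF.symm)
    · intro hxA
      by_contra hxr
      exact hxA ⟨x, ⟨hx, hxr⟩, rfl⟩
  codim := (codimGE_compl_regSet hΓ C hq).image_holo h.isOpen_dom h.holo sdiff_subset
  trans := by
    intro x hx x' hx' x'' hx'' h1 h2
    obtain ⟨f, hf, hfx⟩ := hrel x hx.1 x' hx'.1 h1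
    obtain ⟨g, hg, hgx⟩ := hrel x' hx'.1 x'' hx''.1 h2
    rw [relClass_eq hx ⟨f, hf⟩ hfx, relClass_eq hx' ⟨g, hg⟩ hgx,
      relClass_eq hx (⟨g, hg⟩ * ⟨f, hf⟩) (by
        rw [Subgroup.coe_mul, permExt_mul _ _ (powMap_mem_ball hx.1), hfx, hgx])]
    rfl
  locConst := by
    intro x hx x' hx' _
    have h1 := eventually_rel (q := q) (x' := x') hΓ hx.1
    rw [nhds_prod_eq] at h1
    obtain ⟨u, hu, u', hu', huu⟩ := Filter.mem_prod_iff.1 h1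
    refine ⟨u, hu, u', hu', fun y hy y' hy' hyy => ?_⟩
    obtain ⟨f, hf, hfy⟩ := hrel y hy.2.1 y' hy'.2.1 hyy
    have h2 : permExt f (powMap q x) = powMap q x' := huu (mk_mem_prod hy.1 hy'.1) f hf hfy
    rw [relClass_eq hy.2 ⟨f, hf⟩ hfy, relClass_eq hx ⟨f, hf⟩ h2]

/-- Two points `t z`, `z` with `t < 1` of the same fibre stay in a compact set. -/
lemma exists_compact_shrink (C : ChevalleyData n hn Γ)
    (hq : ∀ j, 1 ≤ q j) (hrel : FibreRel Γ q F) :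
    ∃ K ⊆ powDom q, IsCompact K ∧
      ∀ t ∈ Ico (0:ℝ) 1, ∀ z ∈ powDom q, F (t • z) = F z → z ∈ K := by
  obtain ⟨P, hP, hPz⟩ := exists_norm_powMap_sub_le q
  set a : Cn n := (C.x0 : Cn n) with ha
  have ha1 : ‖a‖ < 1 := mem_ball_zero_iff.1 C.x0.2
  set κ : ℝ := 4 * P / ((1 - ‖a‖) ^ 2 + 4 * P) with hκ
  have hpos : 0 < (1 - ‖a‖) ^ 2 := pow_pos (by linarith) 2
  have hκ1 : κ < 1 := by rw [hκ, div_lt_one (by positivity)]; linarith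
  have hκs : √κ < 1 := by rw [Real.sqrt_lt' one_pos]; simpa using hκ1
  refine ⟨{z | ‖powMap q z‖ ≤ √κ}, fun z hz => lt_of_le_of_lt hz hκs,
    isCompact_powMap_le hq hκs.le, ?_⟩
  intro t ht z hz hF
  have htz := smul_mem_powDom hq ht.1 ht.2.le hz
  obtain ⟨f, hf, hfz⟩ := hrel z hz _ htz hF.symm
  have hb := powMap_mem_ball hz
  have hb' := powMap_mem_ball htz
  set y : BallPt n := ⟨powMap q z, hb⟩ with hy
  have hfy : f y = ⟨powMap q (t • z), hb'⟩ := by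
    rw [permExt_of_mem f hb] at hfz
    exact Subtype.ext hfz
  have hnorm : ‖(C.hmap (f y) : Cn n)‖ = ‖(C.hmap y : Cn n)‖ := by
    obtain ⟨U, hU⟩ := C.conj_unitary f hf
    have h1 := hU (C.hmap y)
    simp only [Equiv.Perm.mul_apply, Equiv.Perm.inv_def, Equiv.symm_apply_apply] at h1
    rw [h1, LinearIsometryEquiv.norm_map]
  have e1 := one_sub_norm_aut C.hmap_aut C.hmap_x0 y
  have e2 := one_sub_norm_aut C.hmap_aut C.hmap_x0 (f y)
  rw [hnorm, hfy] at e2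
  simp only [hy] at e1
  have ha2 : 1 - ‖a‖ ^ 2 ≠ 0 := by
    have : 0 < 1 - ‖a‖ ^ 2 := by nlinarith [norm_nonneg a]
    exact this.ne'
  have key : (1 - ‖powMap q (t • z)‖ ^ 2) * ‖1 - inner ℂ a (powMap q z)‖ ^ 2
      = (1 - ‖powMap q z‖ ^ 2) * ‖1 - inner ℂ a (powMap q (t • z))‖ ^ 2 := by
    refine mul_left_cancel₀ ha2 ?_
    linear_combination ‖1 - inner ℂ a (powMap q (t • z))‖ ^ 2 * e1
      - ‖1 - inner ℂ a (powMap q z)‖ ^ 2 * e2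
  have h3 := norm_sq_bound ha1 hz hP.le ht.1 ht.2 (norm_powMap_smul_le hq ht.1 ht.2.le z)
    (hPz t ht.1 ht.2.le z) key
  refine Real.le_sqrt_of_sq_le ?_
  rw [hκ, le_div_iff₀ (by positivity)]
  linarith

/-- The monodromy of the fibres of `F` in `Γ / Γ_ref` is trivial. -/
lemma exists_refl_rel (hΓ : IsFiniteBallAutSubgroup n Γ) (C : ChevalleyData n hn Γ)
    (hq : ∀ j, 1 ≤ q j) (hΩ : IsOpen Ω) (h : FiniteHolo (powDom q) Ω F)
    (hprop : ProperOn n F (powDom q) Ω) (hrel : FibreRel Γ q F) {x x' : Cn n}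
    (hx : x ∈ powDom q) (hx' : x' ∈ powDom q) (hF : F x = F x') :
    ∃ f ∈ reflSubgroup n hn Γ, permExt f (powMap q x) = powMap q x' := by
  have := reflIn_normal (hn := hn) hΓ
  have hc := fibreCocycle_relClass hΓ C hq h hrel
  obtain ⟨d, hd1, hdc, hdl⟩ := h.exists_ext_cocycle hΩ hc
  obtain ⟨K, hKE, hKc, hK⟩ := exists_compact_shrink C hq hrel
  have hd : ∀ x ∈ powDom q, ∀ x' ∈ powDom q, F x = F x' → d x x' = 1 := fun x hx x' hx' hF =>
    h.ext_cocycle_trivial hprop (zero_mem_powDom hq)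
      (fun z hz t ht => smul_mem_powDom hq ht.1 ht.2 hz) hd1 hdl hKc hKE hK hx hx' hF
  have h1 := eventually_rel (q := q) (x' := x') hΓ hx
  rw [nhds_prod_eq] at h1
  obtain ⟨u, hu, u', hu', huu⟩ := Filter.mem_prod_iff.1 h1
  have hE := h.isOpen_dom
  have h2 := h.image_mem_nhds hx (inter_mem hu (hE.mem_nhds hx))
  have h3 := h.image_mem_nhds hx' (inter_mem hu' (hE.mem_nhds hx'))
  rw [← hF] at h3
  obtain ⟨O, hO, hOo, hxO⟩ := _root_.mem_nhds_iff.1 (inter_mem h2 h3)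
  obtain ⟨w, hwO, hwA⟩ := (hc.codim.dense_compl (by norm_num)).inter_open_nonempty O hOo ⟨_, hxO⟩
  obtain ⟨⟨y, ⟨hyu, hyE⟩, hyw⟩, ⟨y', ⟨hyu', hyE'⟩, hyw'⟩⟩ := hO hwO
  have hy : y ∈ regSet hn Γ q := (hc.sat y hyE).2 (by rw [hyw]; exact hwA)
  have hy' : y' ∈ regSet hn Γ q := (hc.sat y' hyE').2 (by rw [hyw']; exact hwA)
  have hyy : F y = F y' := hyw.trans hyw'.symm
  obtain ⟨f, hf, hfy⟩ := hrel y hyE y' hyE' hyy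
  have h4 := relClass_eq hy ⟨f, hf⟩ hfy
  rw [← hdc y hy y' hy' hyy, hd y hyE y' hyE' hyy] at h4
  have h5 : (⟨f, hf⟩ : Γ) ∈ reflIn hn Γ := (QuotientGroup.eq_one_iff _).1 h4.symm
  exact ⟨f, h5, huu (mk_mem_prod hyu hyu') f hf hfy⟩

end Monodromy

/-! ### The Chevalley map: invariance, separation of orbits, properness -/

section Chevalley
variable {n : ℕ} {hn : 0 < n} {Γ : Subgroup (Equiv.Perm (BallPt n))} {q : Fin n → ℕ}
  {Ω : Set (Cn n)} {F : Cn n → Cn n}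

lemma differentiable_evalAt (T : MvPolynomial (Fin n) ℂ) : Differentiable ℂ (evalAt n T) := by
  induction T using MvPolynomial.induction_on with
  | C a =>
    have : evalAt n (MvPolynomial.C a) = fun _ => a := by ext z; simp [evalAt]
    rw [this]; exact differentiable_const _
  | add p q hp hq =>
    have : evalAt n (p + q) = fun z => evalAt n p z + evalAt n q z := by ext z; simp [evalAt]
    rw [this]; exact hp.add hq
  | mul_X p i hp =>
    have : evalAt n (p * MvPolynomial.X i) = fun z => evalAt n p z * z i := by
      ext z; simp [evalAt]
    rw [this]
    exact hp.mul (EuclideanSpace.proj (𝕜 := ℂ) i).differentiable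

/-- The polynomial map `(P₁,…,Pₙ)`. -/
noncomputable def ChevalleyData.polyMap (C : ChevalleyData n hn Γ) (z : Cn n) : Cn n :=
  (EuclideanSpace.equiv (Fin n) ℂ).symm fun i => evalAt n (C.P i) z

lemma ChevalleyData.differentiable_polyMap (C : ChevalleyData n hn Γ) :
    Differentiable ℂ C.polyMap :=
  (EuclideanSpace.equiv (Fin n) ℂ).symm.differentiable.comp
    (differentiable_pi.2 fun i => differentiable_evalAt (C.P i))

lemma ChevalleyData.map_eq (C : ChevalleyData n hn Γ) {y : Cn n} (hy : y ∈ ball (0 : Cn n) 1) :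
    C.map y = C.polyMap (permExt C.hmap y) := by
  rw [permExt_of_mem _ hy]
  unfold ChevalleyData.map ChevalleyData.polyMap
  rw [dif_pos hy]

lemma ChevalleyData.differentiableOn_map (C : ChevalleyData n hn Γ) :
    DifferentiableOn ℂ C.map (ball 0 1) :=
  (C.differentiable_polyMap.comp_differentiableOn
    (differentiableOn_permExt C.hmap_aut.1)).congr fun _ hy => C.map_eq hy

lemma ChevalleyData.map_invariant (C : ChevalleyData n hn Γ) {f : Equiv.Perm (BallPt n)}
    (hf : f ∈ reflSubgroup n hn Γ) {y : Cn n} (hy : y ∈ ball (0 : Cn n) 1) :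
    C.map (permExt f y) = C.map y := by
  obtain ⟨U, hU⟩ := C.conj_unitary f (reflSubgroup_le hf)
  have h1 : permExt C.hmap (permExt f y) = U (permExt C.hmap y) := by
    rw [← permExt_mul _ _ hy, permExt_of_mem _ hy, permExt_of_mem _ hy, ← hU]
    simp [Equiv.Perm.inv_def]
  rw [C.map_eq hy, C.map_eq (permExt_mem f hy), h1]
  unfold ChevalleyData.polyMap
  congr 1
  ext i
  exact C.invariant i f hf U hU _

/-- A linear map is determined by its restriction to the unit ball. -/
lemma linear_eq_of_ball {L M : Cn n →ₗ[ℂ] Cn n} (h : ∀ z : BallPt n, L z = M z) : L = M := by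
  ext1 z
  have hr : (0 : ℝ) < ‖z‖ + 1 := by positivity
  have hc : ((‖z‖ + 1 : ℝ) : ℂ) ≠ 0 := by exact_mod_cast hr.ne'
  have h1 : (((‖z‖ + 1 : ℝ) : ℂ)⁻¹) • z ∈ ball (0 : Cn n) 1 := by
    rw [mem_ball_zero_iff, norm_smul, norm_inv, Complex.norm_real, Real.norm_of_nonneg hr.le,
      inv_mul_lt_iff₀ hr]
    linarith
  have h2 := h ⟨_, h1⟩
  simp only [map_smul] at h2
  exact smul_right_injective _ (inv_ne_zero hc) h2

/-- The invariants separate orbits of the finite unitary group `h Γ_ref h⁻¹`; in particular they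
determine the norm. If they did not, the product over the group of the translates of a suitable
affine function vanishing at `z₀` would be an invariant polynomial telling `z₀` from `z₁`. -/
lemma ChevalleyData.norm_eq_of_polyMap_eq (C : ChevalleyData n hn Γ)
    (hΓ : IsFiniteBallAutSubgroup n Γ) {z0 z1 : Cn n} (h : C.polyMap z0 = C.polyMap z1) :
    ‖z0‖ = ‖z1‖ := by
  classical
  by_contra hne
  have hfin : Finite (reflSubgroup n hn Γ) :=
    (hΓ.1.subset (SetLike.coe_subset_coe.2 reflSubgroup_le)).to_subtype
  have := Fintype.ofFinite (reflSubgroup n hn Γ)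
  have hU0 := fun f : reflSubgroup n hn Γ => C.conj_unitary f (reflSubgroup_le f.2)
  choose U hU using hU0
  have huniq : ∀ (f : reflSubgroup n hn Γ) (V : Cn n →ₗ[ℂ] Cn n),
      (∀ z : BallPt n, ((C.hmap * f * C.hmap⁻¹) z : Cn n) = V z) → ∀ z, V z = U f z := by
    intro f V hV z
    have : V = (U f).toLinearEquiv.toLinearMap :=
      linear_eq_of_ball fun z => (hV z).symm.trans (hU f z)
    rw [this]; rfl
  obtain ⟨ℓ, hℓ⟩ := Module.exists_dual_forall_apply_ne_zero (K := ℂ)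
    (fun f : reflSubgroup n hn Γ => U f z1 - z0) (fun f hf => hne (by
      rw [← sub_eq_zero.1 hf, LinearIsometryEquiv.norm_map]))
  let T : MvPolynomial (Fin n) ℂ := ∏ f : reflSubgroup n hn Γ,
    (∑ j, MvPolynomial.C (ℓ (U f (EuclideanSpace.single j 1))) * MvPolynomial.X j
      - MvPolynomial.C (ℓ z0))
  have hT : ∀ z, evalAt n T z = ∏ f : reflSubgroup n hn Γ, (ℓ (U f z) - ℓ z0) := by
    intro z
    simp only [T, evalAt, map_prod, map_sub, map_sum, map_mul, MvPolynomial.eval_C,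
      MvPolynomial.eval_X]
    refine Finset.prod_congr rfl fun f _ => ?_
    congr 1
    have hz : z = ∑ j, z j • EuclideanSpace.single j (1 : ℂ) := by
      simpa using ((EuclideanSpace.basisFun (Fin n) ℂ).sum_repr z).symm
    conv_rhs => rw [hz]
    simp [mul_comm]
  have hTinv : IsReflInvariant n hn Γ C.hmap T := by
    intro g hg V hV z
    rw [hT, hT]
    refine Fintype.prod_equiv (Equiv.mulRight ⟨g, hg⟩) _ _ fun f => ?_
    have := huniq (f * ⟨g, hg⟩) ((U f).toLinearEquiv.toLinearMap ∘ₗ V.toLinearEquiv.toLinearMap)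
      (fun y => ?_) z
    · rw [Equiv.coe_mulRight, ← this]; rfl
    · have h1 : C.hmap * ((f * ⟨g, hg⟩ : reflSubgroup n hn Γ) : Equiv.Perm (BallPt n)) * C.hmap⁻¹
          = (C.hmap * f * C.hmap⁻¹) * (C.hmap * g * C.hmap⁻¹) := by
        rw [Subgroup.coe_mul]; group
      rw [h1, Equiv.Perm.mul_apply, hU, hV]; rfl
  obtain ⟨R, hR⟩ := C.generates T hTinv
  have hTR : ∀ z, evalAt n T z = MvPolynomial.eval (C.polyMap z) R := by
    intro z
    rw [hR]
    simp only [evalAt, MvPolynomial.aeval_def, MvPolynomial.eval₂_eq', MvPolynomial.eval_eq',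
      map_sum, map_mul, map_prod, map_pow]
    refine Finset.sum_congr rfl fun d _ => ?_
    simp only [ChevalleyData.polyMap, evalAt, MvPolynomial.eval_eq', MvPolynomial.algebraMap_eq]
    simp +contextual
  have h01 : evalAt n T z0 = evalAt n T z1 := by rw [hTR, hTR, h]
  have h0 : evalAt n T z0 = 0 := by
    rw [hT]
    refine Finset.prod_eq_zero (Finset.mem_univ 1) ?_
    rw [← huniq 1 LinearMap.id (fun y => by simp [Equiv.Perm.inv_def]) z0]
    simp
  have h1 : evalAt n T z1 ≠ 0 := by
    rw [hT]
    exact Finset.prod_ne_zero_iff.2 fun f _ => by rw [← map_sub]; exact hℓ f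
  exact h1 (h01 ▸ h0)

/-- The composition `P_Γ ∘ φ` is proper onto `B_Γ`. -/
lemma ChevalleyData.isCompact_preimage (C : ChevalleyData n hn Γ)
    (hΓ : IsFiniteBallAutSubgroup n Γ) (hq : ∀ j, 1 ≤ q j) {K : Set (Cn n)} (hK : K ⊆ C.image)
    (hKc : IsCompact K) : IsCompact {z ∈ powDom q | C.map (powMap q z) ∈ K} := by
  set M := closedBall (0 : Cn n) 1 ∩ C.polyMap ⁻¹' K with hM
  have hMc : IsCompact M := (isCompact_closedBall 0 1).inter_right
    (hKc.isClosed.preimage C.differentiable_polyMap.continuous)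
  have hMb : M ⊆ ball 0 1 := by
    rintro z ⟨-, hz⟩
    obtain ⟨y, hy, hyz⟩ := hK hz
    rw [C.map_eq hy] at hyz
    rw [mem_ball_zero_iff, ← C.norm_eq_of_polyMap_eq hΓ hyz]
    exact mem_ball_zero_iff.1 (permExt_mem _ hy)
  have hNc : IsCompact (permExt C.hmap⁻¹ '' M) := hMc.image_of_continuousOn
    ((differentiableOn_permExt (f := C.hmap⁻¹) C.hmap_aut.2).continuousOn.mono hMb)
  have heq : {z ∈ powDom q | C.map (powMap q z) ∈ K} =
      {z | ‖powMap q z‖ ≤ 1} ∩ powMap q ⁻¹' (permExt C.hmap⁻¹ '' M) := by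
    ext z
    simp only [mem_ofPred_eq, mem_inter_iff, mem_preimage]
    constructor
    · rintro ⟨hz, hzK⟩
      have hb := powMap_mem_ball hz
      refine ⟨(mem_ball_zero_iff.1 hb).le, permExt C.hmap (powMap q z),
        ⟨ball_subset_closedBall (permExt_mem _ hb), ?_⟩, permExt_inv hb rfl⟩
      rwa [mem_preimage, ← C.map_eq hb]
    · rintro ⟨-, y, hy, hyz⟩
      have hb : powMap q z ∈ ball (0 : Cn n) 1 := hyz ▸ permExt_mem _ (hMb hy)
      refine ⟨mem_ball_zero_iff.1 hb, ?_⟩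
      rw [C.map_eq hb]
      have := permExt_inv (hMb hy) hyz
      rw [inv_inv] at this
      rw [this]
      exact hy.2
  rw [heq]
  exact (isCompact_powMap_le hq le_rfl).inter_right (hNc.isClosed.preimage (continuous_powMap q))

end Chevalley

/-! ### The correspondence -/

theorem correspondence_PGamma_phi_Finv_splits
    (n k m : ℕ) (hn : 0 < n) (hk0 : 0 < k) (hk : k ≤ n) (hm : 1 < m)
    (p : Fin k → ℕ) (hp : ∀ i, 2 ≤ p i)
    (F : Cn n → Cn n) (Ω : Set (Cn n)) (hΩ : IsOpen Ω) (hΩc : IsConnected Ω)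
    (hFholo : DifferentiableOn ℂ F (pseudoEllipsoid n k hk p))
    (hFmaps : MapsTo F (pseudoEllipsoid n k hk p) Ω)
    (hFsurj : SurjOn F (pseudoEllipsoid n k hk p) Ω)
    (hFproper : ProperOn n F (pseudoEllipsoid n k hk p) Ω)
    (hFmult : HasMultiplicity n F (pseudoEllipsoid n k hk p) Ω m)
    (hFC1 : HasC1Extension n F (pseudoEllipsoid n k hk p))
    (Γ : Subgroup (Equiv.Perm (BallPt n))) (hΓ : IsFiniteBallAutSubgroup n Γ)
    (hΓrel : ∀ (y y' : Cn n) (hy : y ∈ Metric.ball (0 : Cn n) 1),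
      y' ∈ Metric.ball (0 : Cn n) 1 →
      (FRelated n k hk p F (pseudoEllipsoid n k hk p) Ω y y' ↔
        ∃ g ∈ Γ, ((g ⟨y, hy⟩ : BallPt n) : Cn n) = y'))
    (C : ChevalleyData n hn Γ) :
    ∃ (N : ℕ) (Ψ : Fin N → Cn n → Cn n), 0 < N ∧
      (∀ i, DifferentiableOn ℂ (Ψ i) Ω ∧ MapsTo (Ψ i) Ω C.image ∧
        ProperOn n (Ψ i) Ω C.image ∧
        ∀ z ∈ pseudoEllipsoid n k hk p, Ψ i (F z) = C.map (phiMap n k hk p z)) ∧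
      ∀ w ∈ Ω, ∀ ζ : Cn n,
        ((∃ z ∈ pseudoEllipsoid n k hk p, F z = w ∧ C.map (phiMap n k hk p z) = ζ) ↔
          ∃ i, Ψ i w = ζ) := by

  obtain ⟨q, hq, hφ, hE⟩ := phiMap_eq_powMap n k hk p hp
  unfold FRelated at hΓrel
  rw [hE] at hFholo hFmaps hFsurj hFproper
  simp only [hE, hφ] at hΓrel ⊢
  have hrel : FibreRel Γ q F := by
    intro x hx x' hx' hxx
    obtain ⟨g, hg, hgx⟩ := (hΓrel _ _ (powMap_mem_ball hx) (powMap_mem_ball hx')).1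
      ⟨F x, hFmaps hx, ⟨x, ⟨hx, rfl⟩, rfl⟩, ⟨x', ⟨hx', hxx.symm⟩, rfl⟩⟩
    exact ⟨g, hg, by rw [permExt_of_mem g (powMap_mem_ball hx), hgx]⟩
  have hF : FiniteHolo (powDom q) Ω F :=
    { isOpen_dom := isOpen_powDom q
      preconn := isPreconnected_powDom hq
      holo := hFholo
      maps := hFmaps
      surj := hFsurj
      fin := by
        intro w
        rcases (powDom q ∩ F ⁻¹' {w}).eq_empty_or_nonempty with h0 | ⟨x, hx, hxw⟩
        · rw [h0]; exact finite_empty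
        · refine (hΓ.1.biUnion fun f _ =>
            finite_powMap_fiber hq (permExt f (powMap q x))).subset ?_
          rintro z ⟨hz, hzw⟩
          obtain ⟨f, hf, hfz⟩ := hrel x hx z hz (hxw.trans hzw.symm)
          exact mem_biUnion hf hfz.symm }
  set Ψ : Cn n → Cn n := fun w => C.map (powMap q (Function.invFunOn F (powDom q) w)) with hΨdef
  have hΨ : ∀ z ∈ powDom q, Ψ (F z) = C.map (powMap q z) := by
    intro z hz
    have hex : ∃ a ∈ powDom q, F a = F z := ⟨z, hz, rfl⟩
    obtain ⟨f, hf, hfz⟩ := exists_refl_rel hΓ C hq hΩ hF hFproper hrel hz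
      (Function.invFunOn_mem hex) (Function.invFunOn_eq hex).symm
    rw [hΨdef]
    simp only
    rw [← hfz, C.map_invariant hf (powMap_mem_ball hz)]
  have hQ : DifferentiableOn ℂ (fun z => C.map (powMap q z)) (powDom q) :=
    C.differentiableOn_map.comp (differentiable_powMap q).differentiableOn
      fun z hz => powMap_mem_ball hz
  refine ⟨1, fun _ => Ψ, one_pos, fun _ => ⟨hF.descent hΩ hFproper hQ hΨ, ?_, ?_, hΨ⟩, ?_⟩
  · intro w hw
    obtain ⟨z, hz, rfl⟩ := hFsurj hw
    change Ψ (F z) ∈ C.image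
    rw [hΨ z hz]
    exact mem_image_of_mem _ (powMap_mem_ball hz)
  · intro K hK hKc
    have heq : {w ∈ Ω | Ψ w ∈ K} = F '' {z ∈ powDom q | C.map (powMap q z) ∈ K} := by
      ext w
      constructor
      · rintro ⟨hw, hwK⟩
        obtain ⟨z, hz, rfl⟩ := hFsurj hw
        exact ⟨z, ⟨hz, hΨ z hz ▸ hwK⟩, rfl⟩
      · rintro ⟨z, ⟨hz, hzK⟩, rfl⟩
        exact ⟨hFmaps hz, (hΨ z hz).symm ▸ hzK⟩
    rw [heq]
    exact (C.isCompact_preimage hΓ hq hK hKc).image_of_continuousOn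
      (hFholo.continuousOn.mono fun z hz => hz.1)
  · intro w hw ζ
    constructor
    · rintro ⟨z, hz, rfl, rfl⟩
      exact ⟨0, hΨ z hz⟩
    · rintro ⟨_, hi⟩
      obtain ⟨z, hz, rfl⟩ := hFsurj hw
      exact ⟨z, hz, rfl, (hΨ z hz).symm.trans hi⟩
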